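/- arXiv:math/0703508 — 3 statements merged into one kernel-verified Lean document; each statement's English description precedes it below -/
import Mathlib

section
/- There is a constant C such that for all x ≥ 2, | Δ(x)/log x − Δ̃(x) − 2/(√x·(log x)²) | ≤ C/(√x·(log x)³). (That is, Δ(x)/log x − Δ̃(x) = 2/(√x (log x)²) + O(1/(√x (log x)³)).) -/
open Filter

/-- `Δ(x) = ∑_{p ≤ x} log p / (p-1) - ∑_{n ≤ x} Λ(n)/n`. -/
noncomputable def Delta (x : ℝ) : ℝ :=
  (∑ p ∈ (Finset.range (⌊x⌋₊ + 1)).filter Nat.Prime, Real.log p / ((p : ℝ) - 1)) -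
    ∑ n ∈ Finset.Icc 1 ⌊x⌋₊, ArithmeticFunction.vonMangoldt n / n

/-- `Δ̃(x) = ∑_{p ≤ x, a ≥ 1, p^a > x} 1/(a p^a)`. -/
noncomputable def hDelta (x : ℝ) : ℝ :=
  ∑ p ∈ (Finset.range (⌊x⌋₊ + 1)).filter Nat.Prime,
    ∑' a : ℕ, if 1 ≤ a ∧ x < (p : ℝ) ^ a then 1 / (a * (p : ℝ) ^ a) else 0

/-- Comparison of the tail of a series with a discrete antiderivative `H`. -/
theorem norm_tsum_add_antideriv_le {E : Type*} [NormedAddCommGroup E] [CompleteSpace E]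
    {h H : ℕ → E} {B : ℕ → ℝ} {N : ℕ} (hh : Summable h) (hH : Tendsto H atTop (nhds 0))
    (hB : Summable B) (hle : ∀ n, N ≤ n → ‖h n - (H (n + 1) - H n)‖ ≤ B n) :
    ‖∑' n, h (n + N) + H N‖ ≤ ∑' n, B (n + N) := by
  have hB' : Summable fun n ↦ B (n + N) := (summable_nat_add_iff N).2 hB
  have hh' : Summable fun n ↦ h (n + N) := (summable_nat_add_iff N).2 hh
  have hs : Summable fun n ↦ ‖h (n + N) - (H (n + N + 1) - H (n + N))‖ :=
    hB'.of_nonneg_of_le (fun _ ↦ norm_nonneg _) fun n ↦ hle _ (by lia)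
  have h1 : Tendsto (fun m ↦ ∑ n ∈ Finset.range m, (h (n + N) - (H (n + N + 1) - H (n + N))))
      atTop (nhds (∑' n, h (n + N) + H N)) := by
    have h2 : ∀ m, ∑ n ∈ Finset.range m, (h (n + N) - (H (n + N + 1) - H (n + N))) =
        ∑ n ∈ Finset.range m, h (n + N) - (H (m + N) - H N) := by
      intro m
      rw [Finset.sum_sub_distrib]
      have := Finset.sum_range_sub (fun n ↦ H (n + N)) m
      simp only [zero_add] at this
      rw [← this]
      simp only [add_right_comm]
    simp_rw [h2]
    have h3 : Tendsto (fun m ↦ H (m + N)) atTop (nhds 0) := hH.comp (tendsto_add_atTop_nat N)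
    simpa using hh'.hasSum.tendsto_sum_nat.sub (h3.sub_const (H N))
  rw [← tendsto_nhds_unique hs.of_norm.hasSum.tendsto_sum_nat h1]
  exact (norm_tsum_le_tsum_norm hs).trans (hs.tsum_le_tsum (fun n ↦ hle _ (by lia)) hB')

/-- Second order Taylor estimate on an interval of length one. -/
theorem norm_deriv_sub_image_sub_le {E : Type*} [NormedAddCommGroup E] [NormedSpace ℝ E]
    {H h k : ℝ → E} {a B : ℝ} (hH : ∀ x ∈ Set.Icc a (a + 1), HasDerivAt H (h x) x)
    (hh : ∀ x ∈ Set.Icc a (a + 1), HasDerivAt h (k x) x)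
    (hB : ∀ x ∈ Set.Icc a (a + 1), ‖k x‖ ≤ B) :
    ‖h a - (H (a + 1) - H a)‖ ≤ B := by
  have hB0 : 0 ≤ B := (norm_nonneg _).trans (hB a (by simp))
  have h1 : ∀ x ∈ Set.Icc a (a + 1), ‖h x - h a‖ ≤ B := by
    intro x hx
    have := (convex_Icc a (a + 1)).norm_image_sub_le_of_norm_hasDerivWithin_le
      (fun y hy ↦ (hh y hy).hasDerivWithinAt) hB (by simp : a ∈ Set.Icc a (a + 1)) hx
    refine this.trans (mul_le_of_le_one_right hB0 ?_)
    rw [Real.norm_eq_abs, abs_le]; constructor <;> linarith [hx.1, hx.2]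
  have h2 : ∀ x ∈ Set.Icc a (a + 1),
      HasDerivWithinAt (fun x ↦ H x - x • h a) (h x - h a) (Set.Icc a (a + 1)) x := by
    intro x hx
    have := (hH x hx).sub ((hasDerivAt_id x).smul_const (h a))
    simpa [Pi.sub_def] using this.hasDerivWithinAt
  have := (convex_Icc a (a + 1)).norm_image_sub_le_of_norm_hasDerivWithin_le h2 h1
    (by simp : a ∈ Set.Icc a (a + 1)) (by simp : a + 1 ∈ Set.Icc a (a + 1))
  rw [norm_sub_rev]
  convert this using 1
  · congr 1
    simp only [add_smul, one_smul]
    abel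
  · simp

theorem exists_log_pow_le_rpow (k : ℕ) {δ : ℝ} (hδ : 0 < δ) :
    ∃ C, 0 < C ∧ ∀ x : ℝ, 1 ≤ x → Real.log x ^ k ≤ C * x ^ δ := by
  have hk : (0 : ℝ) < k + 1 := by positivity
  refine ⟨((k + 1) / δ) ^ k, by positivity, fun x hx ↦ ?_⟩
  have h0 := Real.log_nonneg hx
  have h1 := Real.log_le_rpow_div (by linarith : 0 ≤ x) (div_pos hδ hk)
  calc Real.log x ^ k ≤ (x ^ (δ / (k + 1)) / (δ / (k + 1))) ^ k := by gcongr
    _ = ((k + 1) / δ) ^ k * x ^ (δ / (k + 1) * k) := by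
      rw [Real.rpow_mul (by linarith), Real.rpow_natCast, ← mul_pow]
      congr 1
      field_simp
    _ ≤ ((k + 1) / δ) ^ k * x ^ δ := by
      gcongr ?_ * ?_
      refine Real.rpow_le_rpow_of_exponent_le hx ?_
      rw [div_mul_eq_mul_div, div_le_iff₀ hk]
      nlinarith

/-- An antiderivative of `x ↦ (log x) ^ k * x ^ (-s)`. -/
noncomputable def logPowAntideriv (s : ℂ) : ℕ → ℝ → ℂ
  | 0, x => (x : ℂ) ^ (1 - s) / (1 - s)
  | k + 1, x => (Real.log x : ℂ) ^ (k + 1) * (x : ℂ) ^ (1 - s) / (1 - s) -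
      (k + 1) / (1 - s) * logPowAntideriv s k x

theorem hasDerivAt_ofReal_cpow_neg (s : ℂ) {x : ℝ} (hx : 0 < x) :
    HasDerivAt (fun x : ℝ ↦ (x : ℂ) ^ s) (s * (x : ℂ) ^ (s - 1)) x := by
  by_cases hs : s = 0
  · subst hs; simpa using hasDerivAt_const x (1 : ℂ)
  have := hasDerivAt_ofReal_cpow_const' (x := x) hx.ne' (r := s - 1) (by simpa using hs)
  simpa [hs, mul_div_cancel₀] using this.const_mul s

theorem hasDerivAt_ofReal_log {x : ℝ} (hx : 0 < x) :
    HasDerivAt (fun x : ℝ ↦ (Real.log x : ℂ)) ((x : ℂ)⁻¹) x := by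
  simpa using (Real.hasDerivAt_log hx.ne').ofReal_comp

theorem hasDerivAt_logPowAntideriv {s : ℂ} (hs : s ≠ 1) (k : ℕ) {x : ℝ} (hx : 0 < x) :
    HasDerivAt (logPowAntideriv s k) ((Real.log x : ℂ) ^ k * (x : ℂ) ^ (-s)) x := by
  have hs' : 1 - s ≠ 0 := sub_ne_zero.2 hs.symm
  have hx' : (x : ℂ) ≠ 0 := by exact_mod_cast hx.ne'
  have h1 := hasDerivAt_ofReal_cpow_neg (1 - s) hx
  rw [show 1 - s - 1 = -s by ring] at h1
  induction k with
  | zero =>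
    refine (h1.div_const (1 - s)).congr_deriv ?_
    field_simp
  | succ k ih =>
    refine (((((hasDerivAt_ofReal_log hx).pow (k + 1)).mul h1).div_const (1 - s)).sub
      (ih.const_mul ((k + 1) / (1 - s)))).congr_deriv ?_
    have : (x : ℂ) ^ (1 - s) = x * (x : ℂ) ^ (-s) := by
      rw [sub_eq_add_neg, Complex.cpow_add _ _ hx', Complex.cpow_one]
    simp only [Pi.pow_apply, this]
    field_simp
    push_cast
    ring

theorem norm_ofReal_cpow_neg {x : ℝ} (hx : 0 < x) (s : ℂ) :
    ‖(x : ℂ) ^ s‖ = x ^ s.re := Complex.norm_cpow_eq_rpow_re_of_pos hx s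

theorem exists_norm_logPowAntideriv_le (k : ℕ) {δ : ℝ} (hδ : 0 < δ) :
    ∃ C, 0 < C ∧ ∀ s : ℂ, 1 ≤ |s.im| → ∀ x : ℝ, 1 ≤ x →
      ‖logPowAntideriv s k x‖ ≤ C * x ^ (1 - s.re + δ) := by
  have hnorm : ∀ s : ℂ, 1 ≤ |s.im| → 1 ≤ ‖1 - s‖ := fun s hs ↦
    hs.trans (by simpa using Complex.abs_im_le_norm (1 - s))
  induction k with
  | zero =>
    refine ⟨1, one_pos, fun s hs x hx ↦ ?_⟩
    have hx0 : 0 < x := by linarith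
    rw [logPowAntideriv, norm_div, norm_ofReal_cpow_neg hx0, one_mul]
    refine (div_le_self (by positivity) (hnorm s hs)).trans ?_
    exact Real.rpow_le_rpow_of_exponent_le hx (by simp; linarith)
  | succ k ih =>
    obtain ⟨C, hC, ih⟩ := ih
    obtain ⟨D, hD, hlog⟩ := exists_log_pow_le_rpow (k + 1) hδ
    refine ⟨D + (k + 1) * C, by positivity, fun s hs x hx ↦ ?_⟩
    have hx0 : 0 < x := by linarith
    have h0 := Real.log_nonneg hx
    rw [logPowAntideriv, add_mul]
    refine (norm_sub_le _ _).trans (add_le_add ?_ ?_)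
    · rw [norm_div]
      refine (div_le_self (by positivity) (hnorm s hs)).trans ?_
      rw [norm_mul, norm_ofReal_cpow_neg hx0, norm_pow, Complex.norm_real,
        Real.norm_of_nonneg h0, add_comm (1 - s.re), Real.rpow_add hx0, ← mul_assoc]
      exact mul_le_mul_of_nonneg_right (hlog x hx) (by positivity)
    · rw [norm_mul, norm_div, mul_assoc]
      have h1 : ‖(k : ℂ) + 1‖ = k + 1 := by
        rw [← Nat.cast_succ, Complex.norm_natCast]; push_cast; rfl
      rw [h1]
      exact mul_le_mul (div_le_self (by positivity) (hnorm s hs)) (ih s hs x hx)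
        (norm_nonneg _) (by positivity)

theorem summable_log_pow_mul_cpow (k : ℕ) {s : ℂ} (hs : 1 < s.re) :
    Summable fun n : ℕ ↦ (Real.log n : ℂ) ^ k * (n : ℂ) ^ (-s) := by
  obtain ⟨C, hC, hlog⟩ := exists_log_pow_le_rpow k (δ := (s.re - 1) / 2) (by linarith)
  refine Summable.of_norm_bounded (g := fun n : ℕ ↦ C * (n : ℝ) ^ (-((s.re + 1) / 2)))
    ((Real.summable_nat_rpow.2 (by linarith)).mul_left C) fun n ↦ ?_
  rcases Nat.eq_zero_or_pos n with rfl | hn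
  · have : s ≠ 0 := by rintro rfl; simp at hs; linarith
    simp [this]
    positivity
  have hn1 : (1 : ℝ) ≤ n := by exact_mod_cast hn
  have hn0 : (0 : ℝ) < n := by linarith
  rw [norm_mul, norm_pow, Complex.norm_real, Real.norm_of_nonneg (Real.log_nonneg hn1),
    Complex.norm_natCast_cpow_of_pos hn, Complex.neg_re]
  calc _ ≤ C * (n : ℝ) ^ ((s.re - 1) / 2) * (n : ℝ) ^ (-s.re) := by gcongr; exact hlog _ hn1
    _ = _ := by rw [mul_assoc, ← Real.rpow_add hn0]; ring_nf

/-- Sub-polynomial growth of `∑ (log n) ^ k * n ^ (-s)` to the right of the line `re s = 1`. -/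
theorem exists_norm_tsum_log_pow_mul_cpow_le (k : ℕ) {δ : ℝ} (hδ : 0 < δ) (hδ1 : δ < 1) :
    ∃ C, 0 < C ∧ ∀ s : ℂ, 1 < s.re → s.re ≤ 2 → 1 ≤ |s.im| →
      ‖∑' n : ℕ, (Real.log n : ℂ) ^ k * (n : ℂ) ^ (-s)‖ ≤ C * |s.im| ^ δ := by
  have hδ2 : 0 < δ / 2 := by linarith
  obtain ⟨C₁, hC₁, hlog⟩ := exists_log_pow_le_rpow k hδ2
  obtain ⟨C₂, hC₂, hlog'⟩ := exists_log_pow_le_rpow (k - 1) hδ2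
  obtain ⟨C₃, hC₃, hH⟩ := exists_norm_logPowAntideriv_le k hδ2
  have hsum : Summable fun n : ℕ ↦ (n : ℝ) ^ (-1 - δ / 2) :=
    Real.summable_nat_rpow.2 (by linarith)
  set S := ∑' n : ℕ, (n : ℝ) ^ (-1 - δ / 2) with hS
  have hS0 : 0 ≤ S := tsum_nonneg fun n ↦ by positivity
  have h2δ : (0 : ℝ) < 2 ^ δ := by positivity
  refine ⟨C₁ * 2 ^ δ * S + (k * C₂ + 3 * C₁) * S * 2 ^ δ + C₃ * 2 ^ δ, by positivity,
    fun s hs hs2 ht ↦ ?_⟩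
  set t := |s.im| with ht'
  have hs1 : s ≠ 1 := by rintro rfl; simp at hs
  set N := ⌈t⌉₊ with hN
  have htN : t ≤ N := Nat.le_ceil t
  have hN1 : (1 : ℝ) ≤ N := ht.trans htN
  have hN0 : (0 : ℝ) < N := by linarith
  have hN2 : (N : ℝ) ≤ 2 * t := by
    have := Nat.ceil_lt_add_one (by linarith : 0 ≤ t)
    linarith
  have hNδ : (N : ℝ) ^ δ ≤ 2 ^ δ * t ^ δ := by
    rw [← Real.mul_rpow (by norm_num) (by linarith)]
    gcongr
  have hsnorm : ‖s‖ ≤ 3 * t := by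
    have := Complex.norm_le_abs_re_add_abs_im s
    rw [abs_of_pos (by linarith : 0 < s.re)] at this
    linarith
  set h : ℕ → ℂ := fun n ↦ (Real.log n : ℂ) ^ k * (n : ℂ) ^ (-s) with hh
  have hsh : Summable h := summable_log_pow_mul_cpow k hs
  rw [← hsh.sum_add_tsum_nat_add N]
  -- the initial segment
  have hinit : ‖∑ n ∈ Finset.range N, h n‖ ≤ C₁ * 2 ^ δ * S * t ^ δ := by
    calc _ ≤ ∑ n ∈ Finset.range N, C₁ * (N : ℝ) ^ δ * (n : ℝ) ^ (-1 - δ / 2) := by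
          refine norm_sum_le_of_le _ fun n hn ↦ ?_
          have hnN : (n : ℝ) ≤ N := by exact_mod_cast (Finset.mem_range.1 hn).le
          rcases Nat.eq_zero_or_pos n with rfl | hn
          · have : s ≠ 0 := by rintro rfl; simp at hs; linarith
            simp only [hh, CharP.cast_eq_zero, Complex.zero_cpow (neg_ne_zero.2 this), mul_zero,
              norm_zero]
            positivity
          have hn1 : (1 : ℝ) ≤ n := by exact_mod_cast hn
          have hn0 : (0 : ℝ) < n := by linarith
          rw [hh]
          simp only
          rw [norm_mul, norm_pow, Complex.norm_real, Real.norm_of_nonneg (Real.log_nonneg hn1),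
            Complex.norm_natCast_cpow_of_pos hn, Complex.neg_re]
          calc _ ≤ C₁ * (n : ℝ) ^ (δ / 2) * (n : ℝ) ^ (-1 : ℝ) := by
                gcongr
                exact hlog _ hn1
            _ = C₁ * (n : ℝ) ^ δ * (n : ℝ) ^ (-1 - δ / 2) := by
                rw [mul_assoc, mul_assoc, ← Real.rpow_add hn0, ← Real.rpow_add hn0]; ring_nf
            _ ≤ _ := by gcongr
      _ = C₁ * (N : ℝ) ^ δ * ∑ n ∈ Finset.range N, (n : ℝ) ^ (-1 - δ / 2) := by
          rw [Finset.mul_sum]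
      _ ≤ C₁ * (2 ^ δ * t ^ δ) * S := by
          gcongr
          exact hsum.sum_le_tsum _ fun n _ ↦ by positivity
      _ = _ := by ring
  -- the tail
  have htail : ‖∑' n, h (n + N) + logPowAntideriv s k N‖ ≤
      (k * C₂ + 3 * C₁) * S * 2 ^ δ * t ^ δ := by
    have hD : 0 ≤ (k * C₂ + 3 * C₁) * 2 ^ δ * t ^ δ := by positivity
    have hlim : Tendsto (fun n : ℕ ↦ logPowAntideriv s k n) atTop (nhds 0) := by
      obtain ⟨C, hC, hb⟩ := exists_norm_logPowAntideriv_le k (δ := (s.re - 1) / 2) (by linarith)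
      have h1 : Tendsto (fun n : ℕ ↦ C * (n : ℝ) ^ (-((s.re - 1) / 2))) atTop (nhds 0) := by
        simpa using ((tendsto_rpow_neg_atTop (by linarith : 0 < (s.re - 1) / 2)).comp
          tendsto_natCast_atTop_atTop).const_mul C
      refine squeeze_zero_norm' ?_ h1
      filter_upwards [eventually_ge_atTop 1] with n hn
      have := hb s ht n (by exact_mod_cast hn)
      rwa [show 1 - s.re + (s.re - 1) / 2 = -((s.re - 1) / 2) by ring] at this
    refine (norm_tsum_add_antideriv_le (H := fun n : ℕ ↦ logPowAntideriv s k n)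
      (B := fun n : ℕ ↦ (k * C₂ + 3 * C₁) * 2 ^ δ * t ^ δ * (n : ℝ) ^ (-1 - δ / 2)) hsh hlim
      (hsum.mul_left _) fun n hn ↦ ?_).trans ?_
    · have hnN : (N : ℝ) ≤ n := by exact_mod_cast hn
      have key := norm_deriv_sub_image_sub_le (H := logPowAntideriv s k)
        (h := fun x ↦ (Real.log x : ℂ) ^ k * (x : ℂ) ^ (-s))
        (k := fun x ↦ k * (Real.log x : ℂ) ^ (k - 1) * (x : ℂ)⁻¹ * (x : ℂ) ^ (-s) +
          (Real.log x : ℂ) ^ k * (-s * (x : ℂ) ^ (-s - 1))) (a := n)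
        (B := (k * C₂ + 3 * C₁) * 2 ^ δ * t ^ δ * (n : ℝ) ^ (-1 - δ / 2))
        (fun x hx ↦ hasDerivAt_logPowAntideriv hs1 k (by linarith [hx.1]))
        (fun x hx ↦ ?_) (fun x hx ↦ ?_)
      · simpa [hh] using key
      · have hx0 : 0 < x := by linarith [hx.1]
        exact ((hasDerivAt_ofReal_log hx0).pow k).mul (hasDerivAt_ofReal_cpow_neg (-s) hx0)
      · have hnx : (n : ℝ) ≤ x := hx.1
        have hx1 : 1 ≤ x := by linarith
        have hx0 : 0 < x := by linarith
        have hl0 := Real.log_nonneg hx1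
        have hpow : x ^ (δ / 2) * x ^ (-2 : ℝ) ≤
            (N : ℝ) ^ (-1 + δ) * (n : ℝ) ^ (-1 - δ / 2) := by
          rw [← Real.rpow_add hx0]
          calc x ^ (δ / 2 + -2) = x ^ (-1 + δ) * x ^ (-1 - δ / 2) := by
                rw [← Real.rpow_add hx0]; ring_nf
            _ ≤ _ := by
                have hn0 : (0 : ℝ) < n := by linarith
                apply mul_le_mul _ _ (by positivity) (by positivity)
                · exact Real.rpow_le_rpow_of_nonpos hN0 (by linarith) (by linarith)
                · exact Real.rpow_le_rpow_of_nonpos hn0 (by linarith) (by linarith)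
        have hNt : t * (N : ℝ) ^ (-1 + δ) ≤ 2 ^ δ * t ^ δ := by
          rw [Real.rpow_add hN0, Real.rpow_neg_one, ← mul_assoc]
          refine (mul_le_mul ?_ hNδ (by positivity) zero_le_one).trans_eq (one_mul _)
          rw [← div_eq_mul_inv]
          exact (div_le_one hN0).2 htN
        have hx2 : x ^ (-s.re) * x⁻¹ ≤ x ^ (-2 : ℝ) := by
          rw [← Real.rpow_neg_one, ← Real.rpow_add hx0]
          exact Real.rpow_le_rpow_of_exponent_le hx1 (by linarith)
        calc _ ≤ k * Real.log x ^ (k - 1) * x⁻¹ * x ^ (-s.re) +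
              Real.log x ^ k * (‖s‖ * (x ^ (-s.re) * x⁻¹)) := by
              refine (norm_add_le _ _).trans (le_of_eq ?_)
              simp only [norm_mul, norm_pow, Complex.norm_real, norm_inv, norm_neg,
                norm_ofReal_cpow_neg hx0, Real.norm_of_nonneg hl0, Real.norm_of_nonneg hx0.le,
                Complex.norm_natCast, Complex.neg_re, Complex.sub_re, Complex.one_re]
              rw [sub_eq_add_neg (-s.re), Real.rpow_add hx0, Real.rpow_neg_one]
          _ = k * Real.log x ^ (k - 1) * (x ^ (-s.re) * x⁻¹) +
              Real.log x ^ k * (‖s‖ * (x ^ (-s.re) * x⁻¹)) := by ring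
          _ ≤ k * (C₂ * x ^ (δ / 2)) * x ^ (-2 : ℝ) +
              C₁ * x ^ (δ / 2) * (3 * t * x ^ (-2 : ℝ)) := by
              gcongr
              · exact hlog' x hx1
              · exact hlog x hx1
          _ ≤ k * C₂ * (t * (x ^ (δ / 2) * x ^ (-2 : ℝ))) +
              3 * C₁ * (t * (x ^ (δ / 2) * x ^ (-2 : ℝ))) := by
              have : x ^ (δ / 2) * x ^ (-2 : ℝ) ≤ t * (x ^ (δ / 2) * x ^ (-2 : ℝ)) :=
                le_mul_of_one_le_left (by positivity) ht
              have h2 := mul_le_mul_of_nonneg_left this (by positivity : 0 ≤ k * C₂)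
              nlinarith
          _ = (k * C₂ + 3 * C₁) * (t * (x ^ (δ / 2) * x ^ (-2 : ℝ))) := by ring
          _ ≤ (k * C₂ + 3 * C₁) * (t * ((N : ℝ) ^ (-1 + δ) * (n : ℝ) ^ (-1 - δ / 2))) := by
              gcongr
          _ = (k * C₂ + 3 * C₁) * ((t * (N : ℝ) ^ (-1 + δ)) * (n : ℝ) ^ (-1 - δ / 2)) := by ring
          _ ≤ (k * C₂ + 3 * C₁) * ((2 ^ δ * t ^ δ) * (n : ℝ) ^ (-1 - δ / 2)) := by gcongr
          _ = _ := by ring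
    · rw [tsum_mul_left]
      have : ∑' n : ℕ, ((n + N : ℕ) : ℝ) ^ (-1 - δ / 2) ≤ S := by
        rw [hS, ← hsum.sum_add_tsum_nat_add N]
        have : 0 ≤ ∑ n ∈ Finset.range N, (n : ℝ) ^ (-1 - δ / 2) :=
          Finset.sum_nonneg fun n _ ↦ by positivity
        linarith
      calc _ ≤ (k * C₂ + 3 * C₁) * 2 ^ δ * t ^ δ * S := by gcongr
        _ = _ := by ring
  have hHN : ‖logPowAntideriv s k N‖ ≤ C₃ * 2 ^ δ * t ^ δ := by
    refine (hH s ht N hN1).trans ?_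
    rw [mul_assoc]
    gcongr
    refine le_trans ?_ hNδ
    exact Real.rpow_le_rpow_of_exponent_le hN1 (by linarith)
  calc _ = ‖∑ n ∈ Finset.range N, h n + (∑' n, h (n + N) + logPowAntideriv s k N) -
        logPowAntideriv s k N‖ := by congr 1; ring
    _ ≤ _ := (norm_sub_le _ _).trans (add_le_add_left (norm_add_le _ _) _)
    _ ≤ _ := by linarith

theorem logMul_iterate_one_apply (k : ℕ) {n : ℕ} :
    (LSeries.logMul^[k] 1) n = (Real.log n : ℂ) ^ k := by
  induction k with
  | zero => simp
  | succ k ih =>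
    rw [Function.iterate_succ', Function.comp_apply, LSeries.logMul, ih, pow_succ',
      Complex.natCast_log]

theorem LSeries_logMul_iterate_one (k : ℕ) {s : ℂ} (hs : s ≠ 0) :
    LSeries (LSeries.logMul^[k] 1) s = ∑' n : ℕ, (Real.log n : ℂ) ^ k * (n : ℂ) ^ (-s) := by
  refine tsum_congr fun n ↦ ?_
  rcases eq_or_ne n 0 with rfl | hn
  · simp [hs]
  · rw [LSeries.term_of_ne_zero hn, logMul_iterate_one_apply, Complex.cpow_neg, div_eq_mul_inv]

theorem iteratedDeriv_riemannZeta (k : ℕ) {s : ℂ} (hs : 1 < s.re) :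
    iteratedDeriv k riemannZeta s =
      (-1) ^ k * ∑' n : ℕ, (Real.log n : ℂ) ^ k * (n : ℂ) ^ (-s) := by
  have h0 : s ≠ 0 := by rintro rfl; simp at hs; linarith
  have hev : riemannZeta =ᶠ[nhds s] LSeries 1 := by
    filter_upwards [(isOpen_lt continuous_const Complex.continuous_re).mem_nhds hs] with z hz
    exact (LSeries_one_eq_riemannZeta hz).symm
  rw [hev.iteratedDeriv_eq, LSeries_iteratedDeriv, LSeries_logMul_iterate_one k h0]
  rw [LSeries.abscissaOfAbsConv_one]
  exact_mod_cast hs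

theorem exists_norm_iteratedDeriv_riemannZeta_le (k : ℕ) {δ : ℝ} (hδ : 0 < δ) (hδ1 : δ < 1) :
    ∃ C, 0 < C ∧ ∀ s : ℂ, 1 < s.re → s.re ≤ 2 → 1 ≤ |s.im| →
      ‖iteratedDeriv k riemannZeta s‖ ≤ C * |s.im| ^ δ := by
  obtain ⟨C, hC, h⟩ := exists_norm_tsum_log_pow_mul_cpow_le k hδ hδ1
  refine ⟨C, hC, fun s h1 h2 h3 ↦ ?_⟩
  rw [iteratedDeriv_riemannZeta k h1]
  simpa using h s h1 h2 h3

/-- The entire function `(s - 1) * ζ(s)`. -/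
noncomputable def subOneMulZeta : ℂ → ℂ :=
  Function.update (fun s ↦ (s - 1) * riemannZeta s) 1 1

theorem subOneMulZeta_of_ne {s : ℂ} (hs : s ≠ 1) : subOneMulZeta s = (s - 1) * riemannZeta s :=
  Function.update_of_ne hs _ _

theorem subOneMulZeta_one : subOneMulZeta 1 = 1 := Function.update_self _ _ _

theorem differentiable_subOneMulZeta : Differentiable ℂ subOneMulZeta := by
  rw [← differentiableOn_univ,
    ← Complex.differentiableOn_compl_singleton_and_continuousAt_iff (c := 1) Filter.univ_mem]
  refine ⟨DifferentiableOn.congr (f := fun s ↦ (s - 1) * riemannZeta s)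
    (fun s hs ↦ DifferentiableAt.differentiableWithinAt ?_)
    fun _ hs ↦ subOneMulZeta_of_ne (Set.mem_sdiff_singleton.mp hs).2,
    continuousWithinAt_compl_self.mp ?_⟩
  · exact (differentiableAt_id.sub_const 1).mul
      (differentiableAt_riemannZeta (Set.mem_sdiff_singleton.mp hs).2)
  · simpa [subOneMulZeta] using riemannZeta_residue_one

theorem subOneMulZeta_ne_zero {s : ℂ} (hs : 1 ≤ s.re) : subOneMulZeta s ≠ 0 := by
  rcases eq_or_ne s 1 with rfl | h
  · simp [subOneMulZeta_one]
  · rw [subOneMulZeta_of_ne h]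
    exact mul_ne_zero (sub_ne_zero.2 h) (riemannZeta_ne_zero_of_one_le_re hs)

theorem exists_norm_riemannZeta_ofReal_le :
    ∃ A, 1 ≤ A ∧ ∀ σ : ℝ, 1 < σ → σ ≤ 2 → ‖riemannZeta σ‖ ≤ A / (σ - 1) := by
  obtain ⟨A, hA⟩ := (isCompact_Icc (a := (1 : ℝ)) (b := 2)).exists_bound_of_continuousOn
    (f := fun σ : ℝ ↦ subOneMulZeta σ)
    (differentiable_subOneMulZeta.continuous.comp Complex.continuous_ofReal).continuousOn
  refine ⟨max A 1, le_max_right _ _, fun σ h1 h2 ↦ ?_⟩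
  have h := hA σ ⟨h1.le, h2⟩
  have hne : (σ : ℂ) ≠ 1 := by exact_mod_cast h1.ne'
  rw [subOneMulZeta_of_ne hne, norm_mul, show (σ : ℂ) - 1 = ((σ - 1 : ℝ) : ℂ) by push_cast; rfl,
    Complex.norm_real, Real.norm_of_nonneg (by linarith)] at h
  rw [le_div_iff₀ (by linarith), mul_comm]
  exact h.trans (le_max_left _ _)

theorem one_le_norm_riemannZeta_product {σ : ℝ} (hσ : 1 < σ) (t : ℝ) :
    1 ≤ ‖riemannZeta σ‖ ^ 3 * ‖riemannZeta (σ + t * Complex.I)‖ ^ 4 *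
      ‖riemannZeta (σ + (2 * t : ℝ) * Complex.I)‖ := by
  have := DirichletCharacter.norm_LFunction_product_ge_one (N := 1) 1 (sub_pos.2 hσ) t
  simp only [DirichletCharacter.LFunctionTrivChar, DirichletCharacter.LFunction_modOne_eq,
    norm_mul, norm_pow] at this
  have e1 : (1 : ℂ) + ((σ - 1 : ℝ) : ℂ) = σ := by push_cast; ring
  have e2 : (1 : ℂ) + ((σ - 1 : ℝ) : ℂ) + Complex.I * t = σ + t * Complex.I := by push_cast; ring
  have e3 : (1 : ℂ) + ((σ - 1 : ℝ) : ℂ) + 2 * Complex.I * t = σ + (2 * t : ℝ) * Complex.I := by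
    push_cast; ring
  rw [e2, e3, e1] at this
  exact this

/-- Lower bound for `ζ` to the right of the line `re s = 1`. -/
theorem le_norm_riemannZeta {A M t : ℝ} (hA : 1 ≤ A) (hM : 1 ≤ M)
    (hζ : ∀ σ : ℝ, 1 < σ → σ ≤ 2 → ‖riemannZeta σ‖ ≤ A / (σ - 1))
    (h' : ∀ σ : ℝ, 1 < σ → σ ≤ 2 → ‖deriv riemannZeta (σ + t * Complex.I)‖ ≤ M)
    (h2 : ∀ σ : ℝ, 1 < σ → σ ≤ 2 → ‖riemannZeta (σ + (2 * t : ℝ) * Complex.I)‖ ≤ M)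
    {σ : ℝ} (hσ : 1 < σ) (hσ2 : σ ≤ 2) :
    1 / (16 * A ^ 3 * M ^ 4) ≤ ‖riemannZeta (σ + t * Complex.I)‖ := by
  set η := 1 / (16 * A ^ 3 * M ^ 5) with hη
  have hA3 : 1 ≤ A ^ 3 := one_le_pow₀ hA
  have hM5 : 1 ≤ M ^ 5 := one_le_pow₀ hM
  have hη0 : 0 < η := by positivity
  have hη1 : η ≤ 1 := by
    rw [hη, div_le_one (by positivity)]
    nlinarith [one_le_mul_of_one_le_of_one_le hA3 hM5]
  have hηM : 1 / (16 * A ^ 3 * M ^ 4) = η * M := by rw [hη]; field_simp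
  have hηeq : η * (16 * A ^ 3 * M ^ 5) = 1 := by rw [hη]; field_simp
  clear_value η
  -- the range `1 + η ≤ σ`
  have key : ∀ σ : ℝ, 1 + η ≤ σ → σ ≤ 2 → 2 * (η * M) ≤ ‖riemannZeta (σ + t * Complex.I)‖ := by
    intro σ h1 h22
    have hσ1 : 1 < σ := by linarith
    have hprod := one_le_norm_riemannZeta_product hσ1 t
    set z := ‖riemannZeta (σ + t * Complex.I)‖ with hz
    have hle : 1 ≤ (A / η) ^ 3 * z ^ 4 * M := by
      refine hprod.trans ?_
      have hAσ : ‖riemannZeta σ‖ ≤ A / η := (hζ σ hσ1 h22).trans (by gcongr; linarith)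
      gcongr
      exact h2 σ hσ1 h22
    have hle2 : η ^ 3 ≤ A ^ 3 * z ^ 4 * M := by
      have := mul_le_mul_of_nonneg_left hle (by positivity : 0 ≤ η ^ 3)
      rwa [mul_one, show η ^ 3 * ((A / η) ^ 3 * z ^ 4 * M) = A ^ 3 * z ^ 4 * M by field_simp]
        at this
    have h4 : (2 * (η * M)) ^ 4 ≤ z ^ 4 := by
      have : A ^ 3 * M * (2 * (η * M)) ^ 4 = η ^ 3 * (η * (16 * A ^ 3 * M ^ 5)) := by ring
      rw [hηeq, mul_one] at this
      have h5 : A ^ 3 * M * (2 * (η * M)) ^ 4 ≤ A ^ 3 * M * z ^ 4 := by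
        rw [this]; linarith
      exact le_of_mul_le_mul_left h5 (by positivity)
    exact le_of_pow_le_pow_left₀ (by norm_num) (norm_nonneg _) h4
  rw [hηM]
  rcases le_total (1 + η) σ with h | h
  · have := key σ h hσ2
    have : 0 < η * M := by positivity
    linarith
  · have h1 := key (1 + η) le_rfl (by linarith)
    have hder : ∀ x ∈ Set.Icc σ (1 + η), HasDerivWithinAt
        (fun x : ℝ ↦ riemannZeta (x + t * Complex.I)) (deriv riemannZeta (x + t * Complex.I))
        (Set.Icc σ (1 + η)) x := by
      intro x hx
      have hne : (x : ℂ) + t * Complex.I ≠ 1 := by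
        intro h
        have := congrArg Complex.re h
        simp at this
        linarith [hx.1]
      have h3 : HasDerivAt (fun x : ℝ ↦ (x : ℂ) + t * Complex.I) 1 x := by
        simpa using (Complex.ofRealCLM.hasDerivAt (x := x)).add_const (t * Complex.I)
      have := (differentiableAt_riemannZeta hne).hasDerivAt.comp x h3
      simpa [Function.comp_def] using this.hasDerivWithinAt
    have := (convex_Icc σ (1 + η)).norm_image_sub_le_of_norm_hasDerivWithin_le hder
      (fun x hx ↦ h' x (by linarith [hx.1]) (by linarith [hx.2]))
      (Set.left_mem_Icc.2 h) (Set.right_mem_Icc.2 h)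
    rw [Real.norm_of_nonneg (by linarith)] at this
    have h5 : ‖riemannZeta ((1 + η : ℝ) + t * Complex.I)‖ ≤
        ‖riemannZeta ((1 + η : ℝ) + t * Complex.I) - riemannZeta (σ + t * Complex.I)‖ +
          ‖riemannZeta (σ + t * Complex.I)‖ := norm_le_norm_sub_add _ _
    have h6 : M * (1 + η - σ) ≤ M * η := by gcongr; linarith
    linarith

/-- The Dirichlet series of `(Λ(n) - 1) log n`. -/
noncomputable def logVonMangoldtSubOneSeries (s : ℂ) : ℂ :=
  ∑' n : ℕ, ((ArithmeticFunction.vonMangoldt n : ℂ) - 1) * Real.log n * (n : ℂ) ^ (-s)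

theorem summable_vonMangoldt_mul_log_mul_cpow {s : ℂ} (hs : 1 < s.re) :
    Summable fun n : ℕ ↦ (ArithmeticFunction.vonMangoldt n : ℂ) * Real.log n * (n : ℂ) ^ (-s) := by
  have hab : LSeries.abscissaOfAbsConv (fun n ↦ (ArithmeticFunction.vonMangoldt n : ℂ)) < s.re := by
    refine lt_of_le_of_lt (LSeries.abscissaOfAbsConv_le_of_forall_lt_LSeriesSummable (x := 1)
      fun y hy ↦ ?_) (by exact_mod_cast hs)
    exact ArithmeticFunction.LSeriesSummable_vonMangoldt (by simpa using hy)
  refine (LSeriesSummable_logMul_of_lt_re hab).congr fun n ↦ ?_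
  rcases eq_or_ne n 0 with rfl | hn
  · simp
  · rw [LSeries.term_of_ne_zero hn, LSeries.logMul, Complex.cpow_neg, div_eq_mul_inv,
      Complex.natCast_log]
    ring

theorem logVonMangoldtSubOneSeries_eq {s : ℂ} (hs : 1 < s.re) :
    logVonMangoldtSubOneSeries s =
      -deriv (fun z ↦ -deriv riemannZeta z / riemannZeta z - riemannZeta z) s := by
  have h0 : s ≠ 0 := by rintro rfl; simp at hs; linarith
  have hab : LSeries.abscissaOfAbsConv (fun n ↦ (ArithmeticFunction.vonMangoldt n : ℂ)) < s.re := by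
    refine lt_of_le_of_lt (LSeries.abscissaOfAbsConv_le_of_forall_lt_LSeriesSummable (x := 1)
      fun y hy ↦ ?_) (by exact_mod_cast hs)
    exact ArithmeticFunction.LSeriesSummable_vonMangoldt (by simpa using hy)
  have hab1 : LSeries.abscissaOfAbsConv 1 < s.re := by
    rw [LSeries.abscissaOfAbsConv_one]
    exact_mod_cast hs
  have hev : (fun z ↦ -deriv riemannZeta z / riemannZeta z - riemannZeta z) =ᶠ[nhds s]
      fun z ↦ LSeries (fun n ↦ (ArithmeticFunction.vonMangoldt n : ℂ)) z - LSeries 1 z := by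
    filter_upwards [(isOpen_lt continuous_const Complex.continuous_re).mem_nhds hs] with z hz
    rw [LSeries_one_eq_riemannZeta hz,
      ArithmeticFunction.LSeries_vonMangoldt_eq_deriv_riemannZeta_div hz]
  rw [hev.deriv_eq, ((LSeries_hasDerivAt hab).fun_sub (LSeries_hasDerivAt hab1)).deriv,
    logVonMangoldtSubOneSeries]
  have h1 := LSeries_logMul_iterate_one 1 h0
  rw [Function.iterate_one] at h1
  have h2 : LSeries (LSeries.logMul fun n ↦ (ArithmeticFunction.vonMangoldt n : ℂ)) s =
      ∑' n : ℕ, (ArithmeticFunction.vonMangoldt n : ℂ) * Real.log n * (n : ℂ) ^ (-s) := by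
    refine tsum_congr fun n ↦ ?_
    rcases eq_or_ne n 0 with rfl | hn
    · simp
    · rw [LSeries.term_of_ne_zero hn, LSeries.logMul, Complex.cpow_neg, div_eq_mul_inv,
        Complex.natCast_log]
      ring
  rw [h1, h2, sub_neg_eq_add, neg_add, neg_neg, ← sub_eq_add_neg,
    ← (summable_vonMangoldt_mul_log_mul_cpow hs).tsum_sub (summable_log_pow_mul_cpow 1 hs)]
  exact tsum_congr fun n ↦ by ring

theorem logVonMangoldtSubOneSeries_eq' {s : ℂ} (hs : 1 < s.re) :
    logVonMangoldtSubOneSeries s = (iteratedDeriv 2 riemannZeta s * riemannZeta s -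
      deriv riemannZeta s * deriv riemannZeta s) / riemannZeta s ^ 2 + deriv riemannZeta s := by
  have hne : s ≠ 1 := by rintro rfl; simp at hs
  have hz := riemannZeta_ne_zero_of_one_lt_re hs
  have h0 := differentiableAt_riemannZeta hne
  have h1 : DifferentiableAt ℂ (deriv riemannZeta) s := by
    have : DifferentiableOn ℂ riemannZeta {1}ᶜ := fun z hz ↦
      (differentiableAt_riemannZeta hz).differentiableWithinAt
    exact (this.deriv isOpen_compl_singleton).differentiableAt
      (isOpen_compl_singleton.mem_nhds hne)
  rw [logVonMangoldtSubOneSeries_eq hs,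
    ((h1.hasDerivAt.fun_neg.fun_div h0.hasDerivAt hz).fun_sub h0.hasDerivAt).deriv,
    iteratedDeriv_succ, iteratedDeriv_one]
  ring

theorem exists_norm_logVonMangoldtSubOneSeries_le_of_one_le_im :
    ∃ C, 0 < C ∧ ∀ s : ℂ, 1 < s.re → s.re ≤ 2 → 1 ≤ |s.im| →
      ‖logVonMangoldtSubOneSeries s‖ ≤ C * |s.im| ^ (1 / 2 : ℝ) := by
  obtain ⟨A, hA, hζ⟩ := exists_norm_riemannZeta_ofReal_le
  have hb := fun k ↦ exists_norm_iteratedDeriv_riemannZeta_le k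
    (δ := 1 / 20) (by norm_num) (by norm_num)
  obtain ⟨C₀, hC₀, h0⟩ := hb 0
  obtain ⟨C₁, hC₁, h1⟩ := hb 1
  obtain ⟨C₂, hC₂, h2⟩ := hb 2
  obtain ⟨D, hD⟩ : ∃ D, D = 1 + C₀ * 2 + C₁ + C₂ := ⟨_, rfl⟩
  have hD1 : 1 ≤ D := by linarith
  refine ⟨600 * A ^ 6 * D ^ 10, by positivity, fun s hs hs2 ht ↦ ?_⟩
  obtain ⟨t, htdef⟩ : ∃ t, t = s.im := ⟨_, rfl⟩
  rw [← htdef] at ht ⊢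
  have hseq : s = s.re + t * Complex.I := by rw [htdef, Complex.re_add_im]
  obtain ⟨X, hX⟩ : ∃ X, X = |t| ^ (1 / 20 : ℝ) := ⟨_, rfl⟩
  have hX1 : 1 ≤ X := hX ▸ Real.one_le_rpow ht (by norm_num)
  obtain ⟨M, hM⟩ : ∃ M, M = D * X := ⟨_, rfl⟩
  have hM1 : 1 ≤ M := hM ▸ one_le_mul_of_one_le_of_one_le hD1 hX1
  have hX10 : X ^ 10 = |t| ^ (1 / 2 : ℝ) := by
    rw [hX, ← Real.rpow_natCast, ← Real.rpow_mul (abs_nonneg _)]; norm_num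
  have hd : ∀ σ : ℝ, 1 < σ → σ ≤ 2 → ‖deriv riemannZeta (σ + t * Complex.I)‖ ≤ M := by
    intro σ h3 h4
    have := h1 (σ + t * Complex.I) (by simpa using h3) (by simpa using h4) (by simpa using ht)
    rw [iteratedDeriv_one] at this
    refine this.trans ?_
    simp only [Complex.add_im, Complex.ofReal_im, Complex.mul_im, Complex.ofReal_re, Complex.I_im,
      mul_one, Complex.I_re, mul_zero, add_zero, zero_add]
    rw [hM, hX]
    gcongr
    linarith
  have hdouble : ∀ σ : ℝ, 1 < σ → σ ≤ 2 →
      ‖riemannZeta (σ + (2 * t : ℝ) * Complex.I)‖ ≤ M := by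
    intro σ h3 h4
    have h5 : |2 * t| = 2 * |t| := by rw [abs_mul]; norm_num
    have := h0 (σ + (2 * t : ℝ) * Complex.I) (by simpa using h3) (by simpa using h4)
      (by simp; linarith)
    rw [iteratedDeriv_zero] at this
    refine this.trans ?_
    simp only [Complex.add_im, Complex.ofReal_im, Complex.mul_im, Complex.ofReal_re, Complex.I_im,
      mul_one, Complex.I_re, mul_zero, add_zero, zero_add]
    rw [h5, Real.mul_rpow (by norm_num) (abs_nonneg _), ← mul_assoc, hM, hX]
    have h6 : (2 : ℝ) ^ (1 / 20 : ℝ) ≤ 2 := by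
      simpa using Real.rpow_le_rpow_of_exponent_le (by norm_num : (1 : ℝ) ≤ 2)
        (by norm_num : (1 / 20 : ℝ) ≤ 1)
    gcongr
    nlinarith
  have hlow := le_norm_riemannZeta hA hM1 hζ hd hdouble hs hs2
  rw [← hseq] at hlow
  have hd' := hd s.re hs hs2
  rw [← hseq] at hd'
  have hz : ‖riemannZeta s‖ ≤ M := by
    have := h0 s hs hs2 (htdef ▸ ht)
    rw [iteratedDeriv_zero, ← htdef] at this
    refine this.trans ?_
    rw [hM, hX]
    gcongr
    linarith
  have hdd : ‖iteratedDeriv 2 riemannZeta s‖ ≤ M := by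
    refine (h2 s hs hs2 (htdef ▸ ht)).trans ?_
    rw [← htdef, hM, hX]
    gcongr
    linarith
  have hinv : ‖riemannZeta s‖⁻¹ ≤ 16 * A ^ 3 * M ^ 4 := by
    rw [one_div] at hlow
    exact inv_le_of_inv_le₀ (by positivity) hlow
  rw [logVonMangoldtSubOneSeries_eq' hs]
  have hM10 : M ^ 10 = D ^ 10 * |t| ^ (1 / 2 : ℝ) := by rw [hM, mul_pow, hX10]
  have hMM : M ≤ M ^ 10 := le_self_pow₀ hM1 (by norm_num)
  have hA6 : 1 ≤ A ^ 6 := one_le_pow₀ hA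
  calc _ ≤ (M * M + M * M) * (16 * A ^ 3 * M ^ 4) ^ 2 + M := by
        refine (norm_add_le _ _).trans (add_le_add ?_ hd')
        rw [div_eq_mul_inv, norm_mul, norm_inv, norm_pow, ← inv_pow]
        gcongr
        refine (norm_sub_le _ _).trans (add_le_add ?_ ?_) <;> rw [norm_mul] <;> gcongr
    _ = 512 * A ^ 6 * M ^ 10 + M := by ring
    _ ≤ 600 * A ^ 6 * M ^ 10 := by
        have : M ^ 10 ≤ A ^ 6 * M ^ 10 := le_mul_of_one_le_left (by positivity) hA6
        nlinarith
    _ = _ := by rw [hM10]; ring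

theorem exists_norm_logVonMangoldtSubOneSeries_le_of_im_le_one :
    ∃ C, 0 < C ∧ ∀ s : ℂ, 1 < s.re → s.re ≤ 2 → |s.im| ≤ 1 →
      ‖logVonMangoldtSubOneSeries s‖ ≤ C := by
  set g := subOneMulZeta
  have hg := differentiable_subOneMulZeta
  set U : Set ℂ := {s | g s ≠ 0} with hU
  have hUo : IsOpen U := isOpen_ne_fun hg.continuous continuous_const
  set F : ℂ → ℂ := fun s ↦ -deriv g s / g s - dslope g 1 s with hF
  have hds : Differentiable ℂ (dslope g 1) := by
    rw [← differentiableOn_univ, Complex.differentiableOn_dslope Filter.univ_mem]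
    exact hg.differentiableOn
  have hFd : DifferentiableOn ℂ F U := by
    refine DifferentiableOn.sub (DifferentiableOn.div ?_ hg.differentiableOn fun s hs ↦ hs)
      hds.differentiableOn
    exact (hg.differentiableOn.deriv hUo).neg
  have hcont : ContinuousOn (deriv F) U := (hFd.deriv hUo).continuousOn
  have hK : IsCompact (Set.Icc (1 : ℝ) 2 ×ℂ Set.Icc (-1 : ℝ) 1) :=
    isCompact_Icc.reProdIm isCompact_Icc
  have hKU : Set.Icc (1 : ℝ) 2 ×ℂ Set.Icc (-1 : ℝ) 1 ⊆ U := fun s hs ↦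
    subOneMulZeta_ne_zero (Complex.mem_reProdIm.1 hs).1.1
  obtain ⟨C, hC⟩ := hK.exists_bound_of_continuousOn (hcont.mono hKU)
  refine ⟨max C 1, by positivity, fun s hs hs2 ht ↦ ?_⟩
  rw [logVonMangoldtSubOneSeries_eq hs, norm_neg]
  have hev : (fun z ↦ -deriv riemannZeta z / riemannZeta z - riemannZeta z) =ᶠ[nhds s] F := by
    filter_upwards [(isOpen_lt continuous_const Complex.continuous_re).mem_nhds hs] with z hz
    have hne : z ≠ 1 := by rintro rfl; simp at hz
    have hne' : z - 1 ≠ 0 := sub_ne_zero.2 hne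
    have hzeta := riemannZeta_ne_zero_of_one_lt_re hz
    have hdg : deriv g z = riemannZeta z + (z - 1) * deriv riemannZeta z := by
      have : g =ᶠ[nhds z] fun s ↦ (s - 1) * riemannZeta s := by
        filter_upwards [isOpen_compl_singleton.mem_nhds hne] with w hw
        exact subOneMulZeta_of_ne hw
      rw [this.deriv_eq]
      have := ((hasDerivAt_id z).sub_const 1).fun_mul (differentiableAt_riemannZeta hne).hasDerivAt
      simpa using this.deriv
    have hgz : g z = (z - 1) * riemannZeta z := subOneMulZeta_of_ne hne
    rw [hF]
    simp only
    rw [dslope_of_ne _ hne, slope_def_field, hdg, hgz, show g 1 = 1 from subOneMulZeta_one]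
    field_simp
    ring
  rw [hev.deriv_eq]
  exact (hC s (Complex.mem_reProdIm.2 ⟨⟨hs.le, hs2⟩, abs_le.1 ht⟩)).trans (le_max_left _ _)

theorem exists_norm_logVonMangoldtSubOneSeries_le :
    ∃ C, 0 < C ∧ ∀ s : ℂ, 1 < s.re → s.re ≤ 2 →
      ‖logVonMangoldtSubOneSeries s‖ ≤ C * (1 + s.im ^ 2) ^ (1 / 4 : ℝ) := by
  obtain ⟨C₁, hC₁, h1⟩ := exists_norm_logVonMangoldtSubOneSeries_le_of_one_le_im
  obtain ⟨C₂, hC₂, h2⟩ := exists_norm_logVonMangoldtSubOneSeries_le_of_im_le_one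
  refine ⟨C₁ + C₂, by positivity, fun s hs hs2 ↦ ?_⟩
  have hone : 1 ≤ (1 + s.im ^ 2) ^ (1 / 4 : ℝ) :=
    Real.one_le_rpow (by nlinarith [sq_nonneg s.im]) (by norm_num)
  rcases le_total 1 |s.im| with h | h
  · refine (h1 s hs hs2 h).trans ?_
    have : |s.im| ^ (1 / 2 : ℝ) ≤ (1 + s.im ^ 2) ^ (1 / 4 : ℝ) := by
      rw [show (1 / 2 : ℝ) = (2 : ℕ) * (1 / 4) by norm_num, Real.rpow_mul (abs_nonneg _),
        Real.rpow_natCast, sq_abs]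
      gcongr
      linarith
    gcongr
    linarith
  · refine (h2 s hs hs2 h).trans ?_
    nlinarith

/-- The function `u ↦ u ^ (-2) * log u` truncated to `u ≥ 1`. -/
noncomputable def logKernel (u : ℝ) : ℝ := Real.log (max u 1) / u ^ 2

theorem logKernel_of_one_le {u : ℝ} (hu : 1 ≤ u) : logKernel u = Real.log u / u ^ 2 := by
  rw [logKernel, max_eq_left hu]

theorem logKernel_of_le_one {u : ℝ} (hu : u ≤ 1) : logKernel u = 0 := by
  rw [logKernel, max_eq_right hu, Real.log_one, zero_div]

theorem logKernel_nonneg (u : ℝ) : 0 ≤ logKernel u :=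
  div_nonneg (Real.log_nonneg (le_max_right _ _)) (sq_nonneg _)

theorem continuousAt_logKernel {u : ℝ} (hu : u ≠ 0) : ContinuousAt logKernel u := by
  unfold logKernel
  have : max u 1 ≠ 0 := (lt_of_lt_of_le one_pos (le_max_right u 1)).ne'
  exact ContinuousAt.div (ContinuousAt.log (by fun_prop) this) (by fun_prop) (pow_ne_zero 2 hu)

theorem cpow_smul_logKernel_of_one_lt {s : ℂ} {t : ℝ} (ht : 1 < t) :
    (t : ℂ) ^ (s - 1) • (logKernel t : ℂ) =
      (Real.log t : ℂ) ^ 1 * (t : ℂ) ^ (-(3 - s)) := by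
  have ht0 : (t : ℂ) ≠ 0 := by exact_mod_cast (one_pos.trans ht).ne'
  rw [logKernel_of_one_le ht.le, show -(3 - s) = (s - 1) - (2 : ℕ) by push_cast; ring,
    Complex.cpow_sub (s - 1) _ ht0, smul_eq_mul, Complex.cpow_natCast]
  push_cast
  field_simp

theorem integrableOn_log_mul_cpow {w : ℂ} (hw : 1 < w.re) :
    MeasureTheory.IntegrableOn (fun t : ℝ ↦ (Real.log t : ℂ) ^ 1 * (t : ℂ) ^ (-w))
      (Set.Ioi 1) := by
  obtain ⟨C, hC, hlog⟩ := exists_log_pow_le_rpow 1 (δ := (w.re - 1) / 2) (by linarith)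
  have hintegrable : MeasureTheory.IntegrableOn (fun t : ℝ ↦ C * t ^ (-((w.re + 1) / 2))) (Set.Ioi 1) :=
    (integrableOn_Ioi_rpow_of_lt (by linarith) one_pos).const_mul C
  refine hintegrable.mono' ?_ ?_
  · refine ContinuousOn.aestronglyMeasurable (fun t ht ↦ ?_) measurableSet_Ioi
    have ht0 : 0 < t := one_pos.trans ht
    exact (((hasDerivAt_ofReal_log ht0).pow 1).mul
      (hasDerivAt_ofReal_cpow_neg (-w) ht0)).continuousAt.continuousWithinAt
  · refine (MeasureTheory.ae_restrict_iff' measurableSet_Ioi).2 (MeasureTheory.ae_of_all _ fun t ht ↦ ?_)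
    have ht1 : 1 ≤ t := le_of_lt ht
    have ht0 : 0 < t := by linarith
    rw [norm_mul, norm_pow, Complex.norm_real, Real.norm_of_nonneg (Real.log_nonneg ht1),
      norm_ofReal_cpow_neg ht0, Complex.neg_re]
    calc _ ≤ C * t ^ ((w.re - 1) / 2) * t ^ (-w.re) := by gcongr; exact hlog _ ht1
      _ = _ := by rw [mul_assoc, ← Real.rpow_add ht0]; ring_nf

theorem tendsto_log_pow_mul_cpow {w : ℂ} (hw : w.re < 0) (k : ℕ) :
    Tendsto (fun t : ℝ ↦ (Real.log t : ℂ) ^ k * (t : ℂ) ^ w) atTop (nhds 0) := by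
  obtain ⟨C, hC, hlog⟩ := exists_log_pow_le_rpow k (δ := -w.re / 2) (by linarith)
  have h1 : Tendsto (fun t : ℝ ↦ C * t ^ (-(-w.re / 2))) atTop (nhds 0) := by
    simpa using (tendsto_rpow_neg_atTop (by linarith : 0 < -w.re / 2)).const_mul C
  refine squeeze_zero_norm' ?_ h1
  filter_upwards [eventually_ge_atTop 1] with t ht
  have ht0 : 0 < t := by linarith
  rw [norm_mul, norm_pow, Complex.norm_real, Real.norm_of_nonneg (Real.log_nonneg ht),
    norm_ofReal_cpow_neg ht0]
  calc _ ≤ C * t ^ (-w.re / 2) * t ^ w.re := by gcongr; exact hlog _ ht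
    _ = _ := by rw [mul_assoc, ← Real.rpow_add ht0]; ring_nf

theorem hasMellin_logKernel {s : ℂ} (hs : s.re < 2) :
    HasMellin (fun u ↦ (logKernel u : ℂ)) s (1 / (2 - s) ^ 2) := by
  have hw : 1 < (3 - s).re := by simp; linarith
  have hw1 : 3 - s ≠ 1 := by intro h; rw [h] at hw; simp at hw
  have hind : ∀ t ∈ Set.Ioi (0 : ℝ), (t : ℂ) ^ (s - 1) • (logKernel t : ℂ) =
      (Set.Ioi 1).indicator (fun t : ℝ ↦ (Real.log t : ℂ) ^ 1 * (t : ℂ) ^ (-(3 - s))) t := by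
    intro t ht
    by_cases h : t ∈ Set.Ioi (1 : ℝ)
    · rw [Set.indicator_of_mem h, cpow_smul_logKernel_of_one_lt h]
    · rw [Set.indicator_of_notMem h, logKernel_of_le_one (not_lt.1 h)]
      simp
  have hintegrable := integrableOn_log_mul_cpow hw
  constructor
  · refine MeasureTheory.IntegrableOn.congr_fun ?_ (fun t ht ↦ (hind t ht).symm) measurableSet_Ioi
    exact (hintegrable.integrable_indicator measurableSet_Ioi).integrableOn
  · rw [mellin, MeasureTheory.setIntegral_congr_fun measurableSet_Ioi hind,
      MeasureTheory.setIntegral_indicator measurableSet_Ioi,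
      Set.inter_eq_self_of_subset_right (Set.Ioi_subset_Ioi zero_le_one)]
    have hlim : Tendsto (logPowAntideriv (3 - s) 1) atTop (nhds 0) := by
      have hre : (1 - (3 - s)).re < 0 := by simp; linarith
      have h0 := tendsto_log_pow_mul_cpow hre 0
      have h1 := tendsto_log_pow_mul_cpow hre 1
      have := (h1.div_const (1 - (3 - s))).sub
        ((h0.div_const (1 - (3 - s))).const_mul (((0 : ℕ) + 1) / (1 - (3 - s))))
      simpa [logPowAntideriv, Function.comp_def, funext_iff] using this
    have := MeasureTheory.integral_Ioi_of_hasDerivAt_of_tendsto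
      (hasDerivAt_logPowAntideriv hw1 1 one_pos).continuousAt.continuousWithinAt
      (fun t ht ↦ hasDerivAt_logPowAntideriv hw1 1 (one_pos.trans ht)) hintegrable hlim
    rw [this]
    have h2 : (2 : ℂ) - s ≠ 0 := by
      intro h; apply hw1; linear_combination h
    have h3 : 1 - (3 - s) ≠ 0 := by
      intro h; apply h2; linear_combination -h
    simp only [logPowAntideriv, Real.log_one, Complex.ofReal_zero, Complex.ofReal_one,
      Complex.one_cpow]
    field_simp
    ring

theorem norm_two_sub_sq {c : ℝ} (t : ℝ) :
    ‖(2 : ℂ) - (c + t * Complex.I)‖ ^ 2 = (2 - c) ^ 2 + t ^ 2 := by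
  rw [← Complex.normSq_eq_norm_sq, Complex.normSq_apply]
  simp
  ring

theorem norm_one_div_two_sub_sq_le {c : ℝ} (hc : c ≤ 7 / 4) (t : ℝ) :
    ‖1 / ((2 : ℂ) - (c + t * Complex.I)) ^ 2‖ ≤ 16 * (1 + t ^ 2)⁻¹ := by
  rw [norm_div, norm_one, norm_pow, norm_two_sub_sq, ← div_eq_mul_inv,
    div_le_div_iff₀ (by nlinarith [sq_nonneg t]) (by positivity)]
  nlinarith [sq_nonneg t]

theorem integrable_one_div_two_sub_sq {c : ℝ} (hc : c ≤ 7 / 4) :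
    MeasureTheory.Integrable fun t : ℝ ↦ 1 / ((2 : ℂ) - (c + t * Complex.I)) ^ 2 := by
  refine (integrable_inv_one_add_sq.const_mul 16).mono' ?_
    (MeasureTheory.ae_of_all _ fun t ↦ norm_one_div_two_sub_sq_le hc t)
  refine Continuous.aestronglyMeasurable (Continuous.div (by fun_prop) (by fun_prop) fun t ↦ ?_)
  intro h
  have h1 := norm_two_sub_sq (c := c) t
  rw [← norm_pow, h, norm_zero] at h1
  nlinarith [sq_nonneg t]

theorem logKernel_eq_integral {c : ℝ} (hc : c ≤ 7 / 4) {u : ℝ} (hu : 0 < u) :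
    (logKernel u : ℂ) = (1 / (2 * Real.pi) : ℝ) *
      ∫ t : ℝ, (u : ℂ) ^ (-(c + t * Complex.I)) * (1 / ((2 : ℂ) - (c + t * Complex.I)) ^ 2) := by
  have hre : ∀ t : ℝ, ((c : ℂ) + t * Complex.I).re < 2 := fun t ↦ by simp; linarith
  have hm : ∀ t : ℝ, mellin (fun u ↦ (logKernel u : ℂ)) (c + t * Complex.I) =
      1 / ((2 : ℂ) - (c + t * Complex.I)) ^ 2 := fun t ↦ (hasMellin_logKernel (hre t)).2
  have := mellinInv_mellin_eq c (fun u ↦ (logKernel u : ℂ)) hu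
    (hasMellin_logKernel (by simp; linarith)).1
    (by
      unfold Complex.VerticalIntegrable
      simp_rw [hm]
      exact integrable_one_div_two_sub_sq hc)
    (Complex.continuous_ofReal.continuousAt.comp (continuousAt_logKernel hu.ne'))
  rw [← this, mellinInv]
  simp_rw [hm, smul_eq_mul]
  rw [Complex.real_smul]

theorem exists_norm_tsum_mul_logKernel_le :
    ∃ C, 0 < C ∧ ∀ y c : ℝ, 0 < y → 1 < c → c ≤ 7 / 4 →
      |∑' n : ℕ, (ArithmeticFunction.vonMangoldt n - 1) * Real.log n * logKernel (n / y)| ≤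
        C * y ^ c := by
  obtain ⟨C, hC, hG⟩ := exists_norm_logVonMangoldtSubOneSeries_le
  have hintegrable : MeasureTheory.Integrable fun t : ℝ ↦ (1 + t ^ 2) ^ (-3 / 4 : ℝ) := by
    have := integrable_rpow_neg_one_add_norm_sq (E := ℝ) (μ := MeasureTheory.volume)
      (r := 3 / 2) (by simp; norm_num)
    convert this using 2 with t
    rw [Real.norm_eq_abs, sq_abs]
    norm_num
  set J := ∫ t : ℝ, (1 + t ^ 2) ^ (-3 / 4 : ℝ) with hJ
  have hJ0 : 0 ≤ J := MeasureTheory.integral_nonneg fun t ↦ by positivity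
  refine ⟨(1 / (2 * Real.pi)) * (16 * C * J) + 1, by positivity, fun y c hy hc1 hc ↦ ?_⟩
  set a : ℕ → ℂ := fun n ↦ ((ArithmeticFunction.vonMangoldt n : ℂ) - 1) * Real.log n with ha
  set F : ℕ → ℝ → ℂ := fun n t ↦ a n * (n : ℂ) ^ (-((c : ℂ) + t * Complex.I)) *
    ((y : ℂ) ^ ((c : ℂ) + t * Complex.I) * (1 / ((2 : ℂ) - (c + t * Complex.I)) ^ 2)) with hF
  have hre : ∀ t : ℝ, ((c : ℂ) + t * Complex.I).re = c := fun t ↦ by simp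
  have hsum : ∀ t : ℝ, Summable fun n ↦ a n * (n : ℂ) ^ (-((c : ℂ) + t * Complex.I)) := by
    intro t
    have h1 : 1 < ((c : ℂ) + t * Complex.I).re := by rwa [hre]
    refine ((summable_vonMangoldt_mul_log_mul_cpow h1).sub
      (summable_log_pow_mul_cpow 1 h1)).congr fun n ↦ ?_
    rw [ha]; ring
  have hy0 : (y : ℂ) ≠ 0 := by exact_mod_cast hy.ne'
  have hg : MeasureTheory.Integrable fun t : ℝ ↦ (y : ℂ) ^ ((c : ℂ) + t * Complex.I) *
      (1 / ((2 : ℂ) - (c + t * Complex.I)) ^ 2) := by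
    refine (integrable_one_div_two_sub_sq hc).bdd_mul (c := y ^ c) ?_ (MeasureTheory.ae_of_all _ fun t ↦ ?_)
    · exact (Continuous.const_cpow (by fun_prop) (Or.inl hy0)).aestronglyMeasurable
    · rw [norm_ofReal_cpow_neg hy, hre]
  have hnorm : ∀ n : ℕ, ∀ t : ℝ, ‖a n * (n : ℂ) ^ (-((c : ℂ) + t * Complex.I))‖ =
      ‖a n * (n : ℂ) ^ (-(c : ℂ))‖ := by
    intro n t
    rcases Nat.eq_zero_or_pos n with rfl | hn
    · simp [ha]
    · rw [norm_mul, norm_mul (a n), Complex.norm_natCast_cpow_of_pos hn,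
        Complex.norm_natCast_cpow_of_pos hn]
      simp
  have hFint : ∀ n, MeasureTheory.Integrable (F n) := by
    intro n
    rcases Nat.eq_zero_or_pos n with rfl | hn
    · simp [hF, ha]
    · refine hg.bdd_mul (c := ‖a n * (n : ℂ) ^ (-(c : ℂ))‖) ?_
        (MeasureTheory.ae_of_all _ fun t ↦ (hnorm n t).le)
      have hn0 : (n : ℂ) ≠ 0 := by exact_mod_cast hn.ne'
      exact (continuous_const.mul
        (Continuous.const_cpow (by fun_prop) (Or.inl hn0))).aestronglyMeasurable
  have hFsum : Summable fun n ↦ ∫ t, ‖F n t‖ := by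
    have : ∀ n, ∫ t, ‖F n t‖ = ‖a n * (n : ℂ) ^ (-(c : ℂ))‖ *
        ∫ t : ℝ, ‖(y : ℂ) ^ ((c : ℂ) + t * Complex.I) *
          (1 / ((2 : ℂ) - (c + t * Complex.I)) ^ 2)‖ := by
      intro n
      rw [← MeasureTheory.integral_const_mul]
      refine MeasureTheory.integral_congr_ae (MeasureTheory.ae_of_all _ fun t ↦ ?_)
      simp only [hF]
      rw [norm_mul, hnorm]
    simp_rw [this]
    have h0 := (hsum 0).norm
    simp only [Complex.ofReal_zero, zero_mul, add_zero] at h0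
    exact h0.mul_right _
  have hswap := MeasureTheory.hasSum_integral_of_summable_integral_norm hFint hFsum
  have hterm : ∀ n : ℕ, (((ArithmeticFunction.vonMangoldt n - 1) * Real.log n *
      logKernel (n / y) : ℝ) : ℂ) = (1 / (2 * Real.pi) : ℝ) * ∫ t, F n t := by
    intro n
    rcases Nat.eq_zero_or_pos n with rfl | hn
    · simp [hF, ha]
    · have hn0 : (0 : ℝ) < n := by exact_mod_cast hn
      push_cast
      rw [logKernel_eq_integral hc (div_pos hn0 hy), mul_left_comm,
        ← MeasureTheory.integral_const_mul]
      push_cast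
      congr 1
      refine MeasureTheory.integral_congr_ae (MeasureTheory.ae_of_all _ fun t ↦ ?_)
      simp only [hF, ha]
      have : ((n : ℂ) / y) ^ (-((c : ℂ) + t * Complex.I)) =
          (n : ℂ) ^ (-((c : ℂ) + t * Complex.I)) * (y : ℂ) ^ ((c : ℂ) + t * Complex.I) := by
        rw [← Complex.ofReal_natCast, div_eq_mul_inv, ← Complex.ofReal_inv,
          Complex.mul_cpow_ofReal_nonneg hn0.le (by positivity), Complex.ofReal_inv,
          Complex.inv_cpow _ _ (by rw [Complex.arg_ofReal_of_nonneg hy.le]; exact Real.pi_ne_zero.symm),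
          Complex.cpow_neg (y : ℂ), inv_inv]
      rw [this, Complex.natCast_log]
      ring
  rw [← Real.norm_eq_abs, ← Complex.norm_real, Complex.ofReal_tsum]
  simp_rw [hterm]
  rw [(hswap.mul_left _).tsum_eq, norm_mul, Complex.norm_real, Real.norm_of_nonneg (by positivity)]
  have hle : ‖∫ t, ∑' n, F n t‖ ≤ ∫ t : ℝ, 16 * C * y ^ c * (1 + t ^ 2) ^ (-3 / 4 : ℝ) := by
    refine MeasureTheory.norm_integral_le_of_norm_le (hintegrable.const_mul _) (MeasureTheory.ae_of_all _ fun t ↦ ?_)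
    simp only [hF]
    rw [tsum_mul_right, norm_mul, norm_mul, norm_ofReal_cpow_neg hy, hre]
    have h1 := hG ((c : ℂ) + t * Complex.I) (by rwa [hre]) (by rw [hre]; linarith)
    rw [logVonMangoldtSubOneSeries, show ((c : ℂ) + t * Complex.I).im = t by simp] at h1
    calc _ ≤ C * (1 + t ^ 2) ^ (1 / 4 : ℝ) * (y ^ c * (16 * (1 + t ^ 2)⁻¹)) := by
          gcongr
          exact norm_one_div_two_sub_sq_le hc t
      _ = 16 * C * y ^ c * ((1 + t ^ 2) ^ (1 / 4 : ℝ) * (1 + t ^ 2) ^ (-1 : ℝ)) := by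
          rw [Real.rpow_neg_one]; ring
      _ = _ := by
          rw [← Real.rpow_add (by positivity)]; norm_num
  rw [MeasureTheory.integral_const_mul, ← hJ] at hle
  have hyc : 0 < y ^ c := by positivity
  calc _ ≤ 1 / (2 * Real.pi) * (16 * C * y ^ c * J) := by gcongr
    _ ≤ _ := by nlinarith

/-- Smoothed bound for the sum of `(Λ(n) - 1) log n` over `n ≥ y`. -/
theorem exists_abs_tsum_vonMangoldt_sub_one_mul_log_le :
    ∃ C, 0 < C ∧ ∀ y : ℝ, 2 ≤ y ^ 2 → 0 < y →
      |∑' n : ℕ, (ArithmeticFunction.vonMangoldt n - 1) * Real.log n * logKernel (n / y)| ≤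
        C * y := by
  obtain ⟨C, hC, h⟩ := exists_norm_tsum_mul_logKernel_le
  refine ⟨C * Real.exp (1 / 4), by positivity, fun y hy hy0 ↦ ?_⟩
  have hl : 0.69 / 2 ≤ Real.log y := by
    have h1 := Real.log_le_log (by norm_num) hy
    rw [Real.log_pow] at h1
    have := Real.log_two_gt_d9
    push_cast at h1
    linarith
  have hl0 : 0 < Real.log y := by linarith
  refine (h y (1 + 1 / (4 * Real.log y)) hy0 ?_ ?_).trans_eq ?_
  · have : 0 < 1 / (4 * Real.log y) := by positivity
    linarith
  · have : 1 / (4 * Real.log y) ≤ 3 / 4 := by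
      rw [div_le_div_iff₀ (by positivity) (by norm_num)]
      linarith
    linarith
  · rw [Real.rpow_add hy0, Real.rpow_one, Real.rpow_def_of_pos hy0]
    rw [show Real.log y * (1 / (4 * Real.log y)) = 1 / 4 by field_simp]
    ring

open ArithmeticFunction in
theorem vonMangoldt_mul_log_nonneg (n : ℕ) : 0 ≤ vonMangoldt n * Real.log n :=
  mul_nonneg vonMangoldt_nonneg (Real.log_natCast_nonneg n)

open ArithmeticFunction in
theorem exists_vonMangoldt_mul_log_le :
    ∃ C, 0 < C ∧ ∀ n : ℕ, vonMangoldt n * Real.log n ≤ C * (n : ℝ) ^ (1 / 4 : ℝ) := by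
  obtain ⟨C, hC, h⟩ := exists_log_pow_le_rpow 2 (δ := 1 / 4) (by norm_num)
  refine ⟨C, hC, fun n ↦ ?_⟩
  rcases Nat.eq_zero_or_pos n with rfl | hn
  · simp
  refine le_trans ?_ (h n (by exact_mod_cast hn))
  rw [sq]
  exact mul_le_mul_of_nonneg_right vonMangoldt_le_log (Real.log_natCast_nonneg n)

theorem exists_log_pow_mul_logKernel_le (k : ℕ) {δ : ℝ} (hδ : 0 < δ) :
    ∃ C, 0 < C ∧ ∀ u : ℝ, 0 < u → Real.log u ^ k * logKernel u ≤ C * u ^ (δ - 2) := by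
  obtain ⟨C, hC, h⟩ := exists_log_pow_le_rpow (k + 1) hδ
  refine ⟨C, hC, fun u hu ↦ ?_⟩
  rcases le_total u 1 with h1 | h1
  · rw [logKernel_of_le_one h1, mul_zero]
    positivity
  · rw [logKernel_of_one_le h1, ← mul_div_assoc, ← pow_succ, div_le_iff₀ (by positivity),
      mul_assoc, ← Real.rpow_natCast u 2, ← Real.rpow_add hu]
    simpa using h u h1

theorem summable_mul_logKernel {a : ℕ → ℝ} {C y : ℝ} (hy : 0 < y)
    (ha : ∀ n : ℕ, 0 < n → |a n| ≤ C * (n : ℝ) ^ (1 / 4 : ℝ)) :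
    Summable fun n : ℕ ↦ a n * logKernel (n / y) := by
  obtain ⟨A, hA, h⟩ := exists_log_pow_mul_logKernel_le 0 (δ := 1 / 4) (by norm_num)
  refine Summable.of_norm_bounded
    (g := fun n : ℕ ↦ C * A * (y⁻¹) ^ (1 / 4 - 2 : ℝ) * (n : ℝ) ^ (-3 / 2 : ℝ))
    ((Real.summable_nat_rpow.2 (by norm_num)).mul_left _) fun n ↦ ?_
  rcases Nat.eq_zero_or_pos n with rfl | hn
  · rw [Nat.cast_zero, zero_div, logKernel_of_le_one zero_le_one, mul_zero, norm_zero,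
      Real.zero_rpow (by norm_num), mul_zero]
  have hn0 : (0 : ℝ) < n := by exact_mod_cast hn
  have h1 := h (n / y) (div_pos hn0 hy)
  rw [pow_zero, one_mul, div_eq_mul_inv, Real.mul_rpow hn0.le (by positivity)] at h1
  rw [Real.norm_eq_abs, abs_mul, abs_of_nonneg (logKernel_nonneg _)]
  have hC : 0 ≤ C * (n : ℝ) ^ (1 / 4 : ℝ) := (abs_nonneg _).trans (ha n hn)
  calc _ ≤ C * (n : ℝ) ^ (1 / 4 : ℝ) * (A * ((n : ℝ) ^ (1 / 4 - 2 : ℝ) *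
        (y⁻¹) ^ (1 / 4 - 2 : ℝ))) :=
        mul_le_mul (ha n hn) h1 (logKernel_nonneg _) hC
    _ = C * A * (y⁻¹) ^ (1 / 4 - 2 : ℝ) *
        ((n : ℝ) ^ (1 / 4 : ℝ) * (n : ℝ) ^ (1 / 4 - 2 : ℝ)) := by ring
    _ = _ := by rw [← Real.rpow_add hn0]; norm_num

/-- An antiderivative of `x ↦ log x * log (x / y) / x ^ 2`, with `ℓ = log y`. -/
noncomputable def logMulLogAntideriv (ℓ x : ℝ) : ℝ :=
  -(ℓ * (Real.log x - ℓ + 1) + (Real.log x - ℓ) ^ 2 + 2 * (Real.log x - ℓ) + 2) / x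

theorem hasDerivAt_logMulLogAntideriv (ℓ : ℝ) {x : ℝ} (hx : 0 < x) :
    HasDerivAt (logMulLogAntideriv ℓ) (Real.log x * (Real.log x - ℓ) / x ^ 2) x := by
  have hl := (Real.hasDerivAt_log hx.ne').sub_const ℓ
  have := ((((hl.add_const 1).const_mul ℓ).fun_add (hl.fun_pow 2)).fun_add
    (hl.const_mul 2)).add_const 2
  refine (this.fun_neg.fun_div (hasDerivAt_id x) hx.ne').congr_deriv ?_
  simp only [id]
  field_simp
  ring

theorem hasDerivAt_log_mul_log_div_sq (ℓ : ℝ) {x : ℝ} (hx : 0 < x) :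
    HasDerivAt (fun x ↦ Real.log x * (Real.log x - ℓ) / x ^ 2)
      ((Real.log x + (Real.log x - ℓ) - 2 * Real.log x * (Real.log x - ℓ)) / x ^ 3) x := by
  have h := Real.hasDerivAt_log hx.ne'
  refine ((h.fun_mul (h.sub_const ℓ)).fun_div (hasDerivAt_pow 2 x) (by positivity)).congr_deriv ?_
  push_cast
  field_simp
  ring

theorem tendsto_logMulLogAntideriv (ℓ : ℝ) :
    Tendsto (logMulLogAntideriv ℓ) atTop (nhds 0) := by
  have h : ∀ k : ℕ, Tendsto (fun x : ℝ ↦ Real.log x ^ k / x) atTop (nhds 0) := fun k ↦ by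
    simpa using Real.tendsto_pow_log_div_mul_add_atTop 1 0 k one_ne_zero
  have := ((h 2).const_mul (-1)).add (((h 1).const_mul (ℓ - 2)).add
    ((h 0).const_mul (ℓ - 2)))
  simp only [mul_zero, add_zero] at this
  refine this.congr fun x ↦ ?_
  rw [logMulLogAntideriv]
  ring

theorem exists_abs_tsum_log_mul_logKernel_sub_le :
    ∃ C, 0 < C ∧ ∀ y : ℝ, 1 < y →
      |∑' n : ℕ, Real.log n * logKernel (n / y) - y * Real.log y| ≤ C * y := by
  obtain ⟨A, hA, hlog⟩ := exists_log_pow_le_rpow 1 (δ := 1 / 2) (by norm_num)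
  obtain ⟨A₂, hA₂, hlog2⟩ := exists_log_pow_le_rpow 2 (δ := 1 / 2) (by norm_num)
  have hS : Summable fun n : ℕ ↦ (n : ℝ) ^ (-3 / 2 : ℝ) :=
    Real.summable_nat_rpow.2 (by norm_num)
  set S := ∑' n : ℕ, (n : ℝ) ^ (-3 / 2 : ℝ) with hSdef
  have hS0 : 0 ≤ S := tsum_nonneg fun n ↦ by positivity
  refine ⟨(2 * A + 2 * A₂) * S + 7, by positivity, fun y hy ↦ ?_⟩
  have hy0 : 0 < y := by linarith
  obtain ⟨l, hl⟩ : ∃ l, l = Real.log y := ⟨_, rfl⟩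
  have hl0 : 0 < l := hl ▸ Real.log_pos hy
  have hly : l ≤ y := by
    have := Real.log_le_sub_one_of_pos hy0
    linarith
  rw [← hl]
  set N := ⌈y⌉₊ with hN
  have hyN : y ≤ N := Nat.le_ceil y
  have hNy : (N : ℝ) < y + 1 := Nat.ceil_lt_add_one hy0.le
  have hN0 : (0 : ℝ) < N := by linarith
  have hk : ∀ n : ℕ, N ≤ n → Real.log n * logKernel (n / y) =
      y ^ 2 * (Real.log n * (Real.log n - l) / (n : ℝ) ^ 2) := by
    intro n hn
    have hyn : y ≤ n := hyN.trans (by exact_mod_cast hn)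
    have hn0 : (0 : ℝ) < n := by linarith
    rw [logKernel_of_one_le ((one_le_div hy0).2 hyn), Real.log_div hn0.ne' hy0.ne', hl]
    field_simp
  have hk0 : ∀ n ∈ Finset.range N, Real.log n * logKernel (n / y) = 0 := by
    intro n hn
    have : (n : ℝ) < y := Nat.lt_ceil.1 (Finset.mem_range.1 hn)
    rw [logKernel_of_le_one ((div_le_one hy0).2 this.le), mul_zero]
  have hsum : Summable fun n : ℕ ↦ Real.log n * logKernel (n / y) := by
    obtain ⟨A', -, hlog'⟩ := exists_log_pow_le_rpow 1 (δ := 1 / 4) (by norm_num)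
    refine summable_mul_logKernel hy0 (C := A') fun n hn ↦ ?_
    rw [abs_of_nonneg (Real.log_natCast_nonneg n)]
    simpa using hlog' n (by exact_mod_cast hn)
  rw [← hsum.sum_add_tsum_nat_add N, Finset.sum_eq_zero hk0, zero_add]
  have htail : ‖∑' n : ℕ, Real.log (n + N : ℕ) * logKernel ((n + N : ℕ) / y) +
      y ^ 2 * logMulLogAntideriv l N‖ ≤ (2 * A + 2 * A₂) * S * y := by
    refine (norm_tsum_add_antideriv_le (h := fun n : ℕ ↦ Real.log n * logKernel (n / y))
      (H := fun n : ℕ ↦ y ^ 2 * logMulLogAntideriv l n)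
      (B := fun n : ℕ ↦ (2 * A + 2 * A₂) * y * (n : ℝ) ^ (-3 / 2 : ℝ)) hsum ?_
      (hS.mul_left _) fun n hn ↦ ?_).trans ?_
    · simpa using ((tendsto_logMulLogAntideriv l).comp tendsto_natCast_atTop_atTop).const_mul
        (y ^ 2)
    · have hyn : y ≤ n := hyN.trans (by exact_mod_cast hn)
      have hn0 : (0 : ℝ) < n := by linarith
      have key := norm_deriv_sub_image_sub_le (H := logMulLogAntideriv l)
        (h := fun x ↦ Real.log x * (Real.log x - l) / x ^ 2)
        (k := fun x ↦ (Real.log x + (Real.log x - l) - 2 * Real.log x * (Real.log x - l)) / x ^ 3)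
        (a := n) (B := (2 * A + 2 * A₂) * (y⁻¹ * (n : ℝ) ^ (-3 / 2 : ℝ)))
        (fun x hx ↦ hasDerivAt_logMulLogAntideriv l (by linarith [hx.1]))
        (fun x hx ↦ hasDerivAt_log_mul_log_div_sq l (by linarith [hx.1])) (fun x hx ↦ ?_)
      · rw [hk n hn, Nat.cast_succ, ← mul_sub, ← mul_sub, norm_mul,
          Real.norm_of_nonneg (sq_nonneg y)]
        calc _ ≤ y ^ 2 * ((2 * A + 2 * A₂) * (y⁻¹ * (n : ℝ) ^ (-3 / 2 : ℝ))) := by gcongr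
          _ = _ := by field_simp
      · have hnx : (n : ℝ) ≤ x := hx.1
        have hx1 : 1 ≤ x := by linarith
        have hx0 : 0 < x := by linarith
        have hlx : 0 ≤ Real.log x := Real.log_nonneg hx1
        have hlx' : 0 ≤ Real.log x - l := by
          rw [hl, sub_nonneg]; exact Real.log_le_log hy0 (by linarith)
        have h1 := hlog x hx1
        have h2 := hlog2 x hx1
        rw [pow_one] at h1
        rw [norm_div, Real.norm_of_nonneg (by positivity : 0 ≤ x ^ 3), Real.norm_eq_abs,
          div_le_iff₀ (by positivity)]
        have hpow : x ^ (1 / 2 : ℝ) ≤ y⁻¹ * (n : ℝ) ^ (-3 / 2 : ℝ) * x ^ 3 := by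
          have e : x ^ (1 / 2 : ℝ) = x⁻¹ * x ^ (-3 / 2 : ℝ) * x ^ 3 := by
            rw [← Real.rpow_neg_one, ← Real.rpow_natCast, ← Real.rpow_add hx0,
              ← Real.rpow_add hx0]
            norm_num
          rw [e]
          have : x ^ (-3 / 2 : ℝ) ≤ (n : ℝ) ^ (-3 / 2 : ℝ) :=
            Real.rpow_le_rpow_of_nonpos hn0 hnx (by norm_num)
          have : x⁻¹ ≤ y⁻¹ := inv_anti₀ hy0 (by linarith)
          gcongr
        have hb : |Real.log x + (Real.log x - l) - 2 * Real.log x * (Real.log x - l)| ≤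
            2 * Real.log x + 2 * Real.log x ^ 2 := by
          rw [abs_le]; constructor <;> nlinarith [mul_nonneg hlx hlx', mul_nonneg hlx hl0.le]
        calc _ ≤ (2 * A + 2 * A₂) * x ^ (1 / 2 : ℝ) := by linarith
          _ ≤ (2 * A + 2 * A₂) * (y⁻¹ * (n : ℝ) ^ (-3 / 2 : ℝ) * x ^ 3) := by gcongr
          _ = _ := by ring
    · rw [tsum_mul_left]
      have : ∑' n : ℕ, ((n + N : ℕ) : ℝ) ^ (-3 / 2 : ℝ) ≤ S := by
        rw [hSdef, ← hS.sum_add_tsum_nat_add N]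
        have : 0 ≤ ∑ n ∈ Finset.range N, (n : ℝ) ^ (-3 / 2 : ℝ) :=
          Finset.sum_nonneg fun n _ ↦ by positivity
        linarith
      calc _ ≤ (2 * A + 2 * A₂) * y * S := by gcongr
        _ = _ := by ring
  have hmain : |y ^ 2 * logMulLogAntideriv l N + y * l| ≤ 7 * y := by
    obtain ⟨v, hv⟩ : ∃ v, v = Real.log N - l := ⟨_, rfl⟩
    have hv0 : 0 ≤ v := by
      rw [hv, hl, sub_nonneg]; exact Real.log_le_log hy0 hyN
    have hvy : v * y ≤ 1 := by
      have h1 := Real.log_le_sub_one_of_pos (div_pos hN0 hy0)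
      rw [Real.log_div hN0.ne' hy0.ne', ← hl, ← hv, le_sub_iff_add_le, le_div_iff₀ hy0] at h1
      linarith
    have hv1 : v ≤ 1 := by nlinarith
    have e : y ^ 2 * logMulLogAntideriv l N + y * l =
        (y * l * (N - y) - y * l * (v * y) - y ^ 2 * (v ^ 2 + 2 * v + 2)) / N := by
      rw [logMulLogAntideriv, ← hv]
      field_simp
      ring
    rw [e, abs_div, abs_of_pos hN0, div_le_iff₀ hN0, abs_le]
    have hyl : y * l ≤ y * y := by gcongr
    have hyl0 : 0 ≤ y * l := by positivity
    have hyy : y * y ≤ y * N := by gcongr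
    have b1 : y * l * (N - y) ≤ y * l := mul_le_of_le_one_right hyl0 (by linarith)
    have b1' : 0 ≤ y * l * (N - y) := mul_nonneg hyl0 (by linarith)
    have b2 : y * l * (v * y) ≤ y * l := mul_le_of_le_one_right hyl0 hvy
    have b2' : 0 ≤ y * l * (v * y) := by positivity
    have b3 : y ^ 2 * (v ^ 2 + 2 * v + 2) ≤ y ^ 2 * 5 := by gcongr; nlinarith
    have b3' : 0 ≤ y ^ 2 * (v ^ 2 + 2 * v + 2) := by positivity
    constructor <;> nlinarith
  rw [Real.norm_eq_abs] at htail
  rw [abs_le] at htail hmain ⊢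
  constructor <;> linarith [htail.1, htail.2, hmain.1, hmain.2]

open ArithmeticFunction in
/-- Summation by parts from Chebyshev's bound `ψ x ≤ c x`. -/
theorem sum_Ioc_vonMangoldt_mul_rpow_le {M N : ℕ} (hM : 0 < M) (hMN : M ≤ N) :
    ∑ n ∈ Finset.Ioc M N, vonMangoldt n * (n : ℝ) ^ (-3 / 2 : ℝ) ≤
      Chebyshev.psi N * (N : ℝ) ^ (-3 / 2 : ℝ) +
        3 * (Real.log 4 + 4) * ((M : ℝ) ^ (-1 / 2 : ℝ) - (N : ℝ) ^ (-1 / 2 : ℝ)) := by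
  induction N, hMN using Nat.le_induction with
  | base =>
    simp only [Finset.Ioc_self, Finset.sum_empty, sub_self, mul_zero, add_zero]
    exact mul_nonneg (Chebyshev.psi_nonneg _) (by positivity)
  | succ N hN ih =>
    have hN0 : (0 : ℝ) < N := by exact_mod_cast hM.trans_le hN
    have hpsi : Chebyshev.psi (N + 1 : ℕ) = Chebyshev.psi N + vonMangoldt (N + 1) := by
      rw [Chebyshev.psi, Chebyshev.psi, Nat.floor_natCast, Nat.floor_natCast,
        Finset.sum_Ioc_succ_top (Nat.zero_le N)]
    rw [Finset.sum_Ioc_succ_top (by lia), hpsi]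
    obtain ⟨a, ha⟩ : ∃ a, a = (N : ℝ) ^ (-1 / 2 : ℝ) := ⟨_, rfl⟩
    obtain ⟨b, hb⟩ : ∃ b, b = ((N + 1 : ℕ) : ℝ) ^ (-1 / 2 : ℝ) := ⟨_, rfl⟩
    have cube : ∀ x : ℝ, 0 < x → x ^ (-3 / 2 : ℝ) = (x ^ (-1 / 2 : ℝ)) ^ 3 := fun x hx ↦ by
      rw [← Real.rpow_natCast, ← Real.rpow_mul hx.le]; norm_num
    rw [cube N hN0, ← ha] at ih
    rw [cube (N + 1 : ℕ) (by positivity), ← hb]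
    have ha0 : 0 < a := by rw [ha]; positivity
    have hb0 : 0 < b := by rw [hb]; positivity
    have hba : b ≤ a := by
      rw [ha, hb]
      exact Real.rpow_le_rpow_of_nonpos hN0 (by push_cast; linarith) (by norm_num)
    have hNa : N * a ^ 2 = 1 := by
      rw [ha, ← Real.rpow_natCast, ← Real.rpow_mul hN0.le]
      norm_num
      rw [Real.rpow_neg_one, mul_inv_cancel₀ hN0.ne']
    have h1 : Chebyshev.psi N * (a ^ 3 - b ^ 3) ≤ 3 * (Real.log 4 + 4) * (a - b) := by
      have h3 : a ^ 3 - b ^ 3 ≤ 3 * a ^ 2 * (a - b) := by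
        nlinarith [mul_nonneg (sub_nonneg.2 hba) (by nlinarith : 0 ≤ 2 * a ^ 2 - a * b - b ^ 2)]
      have h4 : 0 ≤ Real.log 4 := Real.log_nonneg (by norm_num)
      calc _ ≤ (Real.log 4 + 4) * N * (3 * a ^ 2 * (a - b)) := by
            apply mul_le_mul (Chebyshev.psi_le_const_mul_self hN0.le) h3
            · exact sub_nonneg.2 (by gcongr)
            · positivity
        _ = 3 * (Real.log 4 + 4) * (a - b) * (N * a ^ 2) := by ring
        _ = _ := by rw [hNa, mul_one]
    linarith

open ArithmeticFunction in
theorem exists_sum_Ioc_vonMangoldt_mul_rpow_le :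
    ∃ C, 0 < C ∧ ∀ M N : ℕ, 0 < M →
      ∑ n ∈ Finset.Ioc M N, vonMangoldt n * (n : ℝ) ^ (-3 / 2 : ℝ) ≤
        C * (M : ℝ) ^ (-1 / 2 : ℝ) := by
  have h4 : 0 ≤ Real.log 4 := Real.log_nonneg (by norm_num)
  refine ⟨3 * (Real.log 4 + 4), by positivity, fun M N hM ↦ ?_⟩
  rcases le_total M N with h | h
  · refine (sum_Ioc_vonMangoldt_mul_rpow_le hM h).trans ?_
    have hN0 : (0 : ℝ) < N := by exact_mod_cast hM.trans_le h
    have h1 : Chebyshev.psi N * (N : ℝ) ^ (-3 / 2 : ℝ) ≤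
        (Real.log 4 + 4) * (N : ℝ) ^ (-1 / 2 : ℝ) := by
      calc _ ≤ (Real.log 4 + 4) * N * (N : ℝ) ^ (-3 / 2 : ℝ) := by
            gcongr
            exact Chebyshev.psi_le_const_mul_self hN0.le
        _ = (Real.log 4 + 4) * ((N : ℝ) ^ (1 : ℝ) * (N : ℝ) ^ (-3 / 2 : ℝ)) := by
            rw [Real.rpow_one]; ring
        _ = _ := by rw [← Real.rpow_add hN0]; norm_num
    have : 0 ≤ (Real.log 4 + 4) * (N : ℝ) ^ (-1 / 2 : ℝ) := by positivity
    linarith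
  · rw [Finset.Ioc_eq_empty (by lia), Finset.sum_empty]
    positivity

open ArithmeticFunction in
theorem summable_nonprime_vonMangoldt_mul_log_div :
    Summable fun n : ℕ ↦ if n.Prime then 0 else vonMangoldt n * Real.log n / n := by
  obtain ⟨C, hC, h⟩ := exists_vonMangoldt_mul_log_le
  set f : ℕ → ℝ := fun n ↦ if n.Prime then 0 else vonMangoldt n * Real.log n / n with hf
  have hf0 : ∀ n, 0 ≤ f n := fun n ↦ by
    simp only [hf]
    split_ifs
    · exact le_rfl
    · exact div_nonneg (vonMangoldt_mul_log_nonneg n) n.cast_nonneg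
  refine (Function.Injective.summable_iff (Subtype.val_injective (p := IsPrimePow))
    fun n hn ↦ ?_).1 (Nat.Primes.prodNatEquiv.summable_iff.1 ?_)
  · have : ¬ IsPrimePow n := by simpa using hn
    rw [hf]
    simp [vonMangoldt_eq_zero_iff.2 this]
  · have hg : Summable fun p : Nat.Primes ↦ C * (p : ℝ) ^ (-3 / 2 : ℝ) :=
      (Nat.Primes.summable_rpow.2 (by norm_num)).mul_left C
    have hr : Summable fun k : ℕ ↦ ((2 : ℝ) ^ (-3 / 4 : ℝ)) ^ k * (2 : ℝ) ^ (3 / 4 : ℝ) :=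
      (summable_geometric_of_lt_one (by positivity)
        (Real.rpow_lt_one_of_one_lt_of_neg (by norm_num) (by norm_num))).mul_right _
    refine Summable.of_nonneg_of_le (fun _ ↦ hf0 _) (fun q ↦ ?_) (hg.mul_of_nonneg hr
      (fun p ↦ by positivity) fun k ↦ by positivity)
    obtain ⟨p, k⟩ := q
    simp only [Function.comp_apply, Nat.Primes.prodNatEquiv_apply]
    have hp0 : (0 : ℝ) < p := by exact_mod_cast p.2.pos
    rcases Nat.eq_zero_or_pos k with rfl | hk
    · have : f ((p : ℕ) ^ (0 + 1)) = 0 := by simp [hf, p.2]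
      rw [this]
      positivity
    have hn0 : (0 : ℝ) < ((p ^ (k + 1) : ℕ) : ℝ) := by push_cast; positivity
    calc f ((p : ℕ) ^ (k + 1)) ≤
          vonMangoldt (p ^ (k + 1)) * Real.log (p ^ (k + 1) : ℕ) / (p ^ (k + 1) : ℕ) := by
          simp only [hf]
          split_ifs
          · exact div_nonneg (vonMangoldt_mul_log_nonneg _) hn0.le
          · exact le_rfl
      _ ≤ C * ((p ^ (k + 1) : ℕ) : ℝ) ^ (1 / 4 : ℝ) / (p ^ (k + 1) : ℕ) := by
          exact div_le_div_of_nonneg_right (h _) hn0.le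
      _ = C * ((p ^ (k + 1) : ℕ) : ℝ) ^ (-3 / 4 : ℝ) := by
          rw [mul_div_assoc, ← Real.rpow_sub_one hn0.ne']; norm_num
      _ = C * ((p : ℝ) ^ (-3 / 2 : ℝ) * ((p : ℝ) ^ (-3 / 4 : ℝ)) ^ (k - 1)) := by
          push_cast
          rw [← Real.rpow_natCast, ← Real.rpow_natCast, ← Real.rpow_mul hp0.le,
            ← Real.rpow_mul hp0.le, ← Real.rpow_add hp0, Nat.cast_sub hk]
          congr 2
          push_cast
          ring
      _ ≤ C * ((p : ℝ) ^ (-3 / 2 : ℝ) * ((2 : ℝ) ^ (-3 / 4 : ℝ)) ^ (k - 1)) := by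
          gcongr C * (_ * ?_ ^ _)
          exact Real.rpow_le_rpow_of_nonpos (by norm_num) (by exact_mod_cast p.2.two_le)
            (by norm_num)
      _ = _ := by
          have : ((2 : ℝ) ^ (-3 / 4 : ℝ)) ^ k * (2 : ℝ) ^ (3 / 4 : ℝ) =
              ((2 : ℝ) ^ (-3 / 4 : ℝ)) ^ (k - 1) := by
            obtain ⟨j, rfl⟩ := Nat.exists_eq_succ_of_ne_zero hk.ne'
            rw [pow_succ, mul_assoc, ← Real.rpow_add (by norm_num)]
            norm_num
          rw [this]
          ring

open ArithmeticFunction in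
theorem exists_tsum_vonMangoldt_mul_log_div_mul_logKernel_le :
    ∃ C, 0 < C ∧ ∀ y : ℝ, 1 < y →
      (Summable fun n : ℕ ↦ vonMangoldt n * Real.log (n / y) * logKernel (n / y)) ∧
      ∑' n : ℕ, vonMangoldt n * Real.log (n / y) * logKernel (n / y) ≤ C * y := by
  obtain ⟨A, hA, h⟩ := exists_log_pow_mul_logKernel_le 1 (δ := 1 / 2) (by norm_num)
  obtain ⟨D, hD, hsum⟩ := exists_sum_Ioc_vonMangoldt_mul_rpow_le
  refine ⟨2 * A * D, by positivity, fun y hy ↦ ?_⟩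
  have hy0 : 0 < y := by linarith
  have h0 : ∀ n : ℕ, 0 ≤ vonMangoldt n * Real.log (n / y) * logKernel (n / y) := by
    intro n
    rcases le_total ((n : ℝ) / y) 1 with h1 | h1
    · rw [logKernel_of_le_one h1, mul_zero]
    · exact mul_nonneg (mul_nonneg vonMangoldt_nonneg (Real.log_nonneg h1)) (logKernel_nonneg _)
  have hM : 0 < ⌊y⌋₊ := Nat.floor_pos.2 hy.le
  have hbd : ∀ N, ∑ n ∈ Finset.range N, vonMangoldt n * Real.log (n / y) * logKernel (n / y) ≤
      2 * A * D * y := by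
    intro N
    calc _ ≤ ∑ n ∈ Finset.range N, if n ∈ Finset.Ioc ⌊y⌋₊ N then
          A * y ^ (3 / 2 : ℝ) * (vonMangoldt n * (n : ℝ) ^ (-3 / 2 : ℝ)) else 0 := by
          refine Finset.sum_le_sum fun n hn ↦ ?_
          split_ifs with hn'
          · have hn0 : (0 : ℝ) < n := by exact_mod_cast hM.trans (Finset.mem_Ioc.1 hn').1
            have h1 := h (n / y) (div_pos hn0 hy0)
            rw [pow_one] at h1
            have e : ((n : ℝ) / y) ^ (1 / 2 - 2 : ℝ) = y ^ (3 / 2 : ℝ) * (n : ℝ) ^ (-3 / 2 : ℝ) := by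
              rw [Real.div_rpow hn0.le hy0.le, div_eq_mul_inv, ← Real.rpow_neg hy0.le, mul_comm]
              norm_num
            rw [e] at h1
            calc _ = vonMangoldt n * (Real.log (n / y) * logKernel (n / y)) := by ring
              _ ≤ vonMangoldt n * (A * (y ^ (3 / 2 : ℝ) * (n : ℝ) ^ (-3 / 2 : ℝ))) :=
                  mul_le_mul_of_nonneg_left h1 vonMangoldt_nonneg
              _ = _ := by ring
          · have : n ≤ ⌊y⌋₊ := by
              by_contra! h2
              exact hn' (Finset.mem_Ioc.2 ⟨h2, (Finset.mem_range.1 hn).le⟩)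
            rw [logKernel_of_le_one, mul_zero]
            exact (div_le_one hy0).2 ((Nat.le_floor_iff hy0.le).1 this)
      _ ≤ ∑ n ∈ Finset.Ioc ⌊y⌋₊ N,
          A * y ^ (3 / 2 : ℝ) * (vonMangoldt n * (n : ℝ) ^ (-3 / 2 : ℝ)) := by
          rw [← Finset.sum_filter]
          refine Finset.sum_le_sum_of_subset_of_nonneg
            (fun n hn ↦ (Finset.mem_filter.1 hn).2) fun n _ _ ↦ ?_
          have := vonMangoldt_nonneg (n := n)
          positivity
      _ ≤ A * y ^ (3 / 2 : ℝ) * (D * (⌊y⌋₊ : ℝ) ^ (-1 / 2 : ℝ)) := by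
          rw [← Finset.mul_sum]
          gcongr
          exact hsum _ _ hM
      _ ≤ A * y ^ (3 / 2 : ℝ) * (D * (2 * y ^ (-1 / 2 : ℝ))) := by
          gcongr
          have h1 : y / 2 ≤ ⌊y⌋₊ := by
            have h2 := Nat.lt_floor_add_one y
            have h3 : (1 : ℝ) ≤ ⌊y⌋₊ := by exact_mod_cast hM
            linarith
          refine (Real.rpow_le_rpow_of_nonpos (by positivity) h1 (by norm_num)).trans ?_
          rw [Real.div_rpow hy0.le (by norm_num), div_eq_inv_mul, ← Real.rpow_neg (by norm_num)]
          gcongr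
          refine (Real.rpow_le_rpow_of_exponent_le (by norm_num)
            (by norm_num : -(-1 / 2 : ℝ) ≤ 1)).trans_eq (Real.rpow_one _)
      _ = 2 * A * D * (y ^ (3 / 2 : ℝ) * y ^ (-1 / 2 : ℝ)) := by ring
      _ = _ := by rw [← Real.rpow_add hy0]; norm_num
  exact ⟨summable_of_sum_range_le h0 hbd, Real.tsum_le_of_sum_range_le h0 hbd⟩

theorem summable_prime_logKernel {y : ℝ} (hy : 0 < y) :
    Summable fun n : ℕ ↦ if n.Prime then logKernel (n / y) else 0 := by
  have : Summable fun n : ℕ ↦ (if n.Prime then (1 : ℝ) else 0) * logKernel (n / y) :=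
    summable_mul_logKernel hy (C := 1) fun n hn ↦ by
      have : 1 ≤ (n : ℝ) ^ (1 / 4 : ℝ) := Real.one_le_rpow (by exact_mod_cast hn) (by norm_num)
      split_ifs <;> simp <;> linarith
  simpa using this

open ArithmeticFunction in
/-- The sum of `log (p / y) / p ^ 2` over primes `p > y`, in terms of `logKernel`. -/
theorem exists_abs_log_sq_mul_tsum_prime_sub_le :
    ∃ C, 0 < C ∧ ∀ y : ℝ, 2 ≤ y ^ 2 → 0 < y →
      |Real.log y ^ 2 * ∑' n : ℕ, (if n.Prime then logKernel (n / y) else 0) -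
        y * Real.log y| ≤ C * y := by
  obtain ⟨C₁, hC₁, h1⟩ := exists_abs_tsum_vonMangoldt_sub_one_mul_log_le
  obtain ⟨C₂, hC₂, h2⟩ := exists_abs_tsum_log_mul_logKernel_sub_le
  obtain ⟨C₃, hC₃, h3⟩ := exists_tsum_vonMangoldt_mul_log_div_mul_logKernel_le
  obtain ⟨A, hA, hΛ⟩ := exists_vonMangoldt_mul_log_le
  obtain ⟨A', hA', hlog⟩ := exists_log_pow_le_rpow 1 (δ := 1 / 4) (by norm_num)
  have hR := summable_nonprime_vonMangoldt_mul_log_div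
  set R := ∑' n : ℕ, if n.Prime then 0 else vonMangoldt n * Real.log n / n with hRdef
  have hR0 : 0 ≤ R := tsum_nonneg fun n ↦ by
    split_ifs
    · exact le_rfl
    · exact div_nonneg (vonMangoldt_mul_log_nonneg n) n.cast_nonneg
  refine ⟨C₁ + C₂ + 2 * C₃ + R, by positivity, fun y hy hy0 ↦ ?_⟩
  have hy1 : 1 < y := by nlinarith
  obtain ⟨l, hl⟩ : ∃ l, l = Real.log y := ⟨_, rfl⟩
  have hl0 : 0 < l := hl ▸ Real.log_pos hy1
  have h1 := h1 y hy hy0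
  have h2 := h2 y hy1
  obtain ⟨hs3, h3⟩ := h3 y hy1
  rw [← hl] at h2 ⊢
  have hsΛ : Summable fun n : ℕ ↦ vonMangoldt n * Real.log n * logKernel (n / y) :=
    summable_mul_logKernel hy0 (C := A) fun n hn ↦ by
      rw [abs_of_nonneg (vonMangoldt_mul_log_nonneg n)]; exact hΛ n
  have hsl : Summable fun n : ℕ ↦ Real.log n * logKernel (n / y) :=
    summable_mul_logKernel hy0 (C := A') fun n hn ↦ by
      rw [abs_of_nonneg (Real.log_natCast_nonneg n)]
      simpa using hlog n (by exact_mod_cast hn)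
  have hsp := summable_prime_logKernel hy0
  have e1 : ∑' n : ℕ, (vonMangoldt n - 1) * Real.log n * logKernel (n / y) =
      ∑' n : ℕ, vonMangoldt n * Real.log n * logKernel (n / y) -
        ∑' n : ℕ, Real.log n * logKernel (n / y) := by
    rw [← hsΛ.tsum_sub hsl]
    exact tsum_congr fun n ↦ by ring
  rw [e1] at h1
  have hterm : ∀ n : ℕ,
      0 ≤ vonMangoldt n * Real.log n * logKernel (n / y) -
        l ^ 2 * (if n.Prime then logKernel (n / y) else 0) ∧
      vonMangoldt n * Real.log n * logKernel (n / y) -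
        l ^ 2 * (if n.Prime then logKernel (n / y) else 0) ≤
      2 * (vonMangoldt n * Real.log (n / y) * logKernel (n / y)) +
        y * (if n.Prime then 0 else vonMangoldt n * Real.log n / n) := by
    intro n
    have hk := logKernel_nonneg (n / y)
    have hΛ0 := vonMangoldt_mul_log_nonneg n
    rcases le_total ((n : ℝ) / y) 1 with hn | hn
    · rw [logKernel_of_le_one hn]
      simp only [ite_self, mul_zero, sub_self, le_refl, zero_add, true_and]
      split_ifs
      · simp
      · positivity
    have hyn : y ≤ n := (one_le_div hy0).1 hn
    have hn0 : (0 : ℝ) < n := by linarith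
    have hln : 0 ≤ Real.log n - l := by
      rw [hl, sub_nonneg]; exact Real.log_le_log hy0 hyn
    rw [Real.log_div hn0.ne' hy0.ne', ← hl]
    split_ifs with hp
    · rw [vonMangoldt_apply_prime hp]
      constructor
      · have : 0 ≤ (Real.log n ^ 2 - l ^ 2) * logKernel (n / y) :=
          mul_nonneg (by nlinarith) hk
        linarith
      · have : 0 ≤ (Real.log n - l) ^ 2 * logKernel (n / y) := by positivity
        linarith
    · rw [mul_zero, sub_zero]
      refine ⟨by positivity, ?_⟩
      have h4 : logKernel (n / y) ≤ y / n := by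
        rw [logKernel_of_one_le hn, div_le_iff₀ (by positivity)]
        have := Real.log_le_sub_one_of_pos (div_pos hn0 hy0)
        calc _ ≤ (n : ℝ) / y := by linarith
          _ = _ := by field_simp
      have h5 : 0 ≤ 2 * (vonMangoldt n * (Real.log n - l) * logKernel (n / y)) := by
        have := vonMangoldt_nonneg (n := n)
        positivity
      calc _ ≤ vonMangoldt n * Real.log n * (y / n) := by gcongr
        _ = y * (vonMangoldt n * Real.log n / n) := by ring
        _ ≤ _ := by linarith
  have hsd := hsΛ.sub (hsp.mul_left (l ^ 2))
  have hlo : 0 ≤ ∑' n : ℕ, (vonMangoldt n * Real.log n * logKernel (n / y) -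
      l ^ 2 * (if n.Prime then logKernel (n / y) else 0)) := tsum_nonneg fun n ↦ (hterm n).1
  have hhi := hsd.tsum_le_tsum (fun n ↦ (hterm n).2) ((hs3.mul_left 2).add (hR.mul_left y))
  rw [hsΛ.tsum_sub (hsp.mul_left (l ^ 2)), tsum_mul_left] at hlo hhi
  rw [(hs3.mul_left 2).tsum_add (hR.mul_left y), tsum_mul_left, tsum_mul_left, ← hRdef] at hhi
  rw [abs_le] at h1 h2 ⊢
  have : 0 ≤ C₃ * y := by positivity
  have : 0 ≤ R * y := by positivity
  constructor <;> linarith [h1.1, h1.2, h2.1, h2.2]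

open ArithmeticFunction in
theorem sum_vonMangoldt_div_eq_sum_prime (M : ℕ) :
    ∑ n ∈ Finset.Icc 1 M, vonMangoldt n / n =
      ∑ p ∈ (Finset.range (M + 1)).filter Nat.Prime, ∑ a ∈ Finset.Icc 1 M,
        if p ^ a ≤ M then Real.log p / (p : ℝ) ^ a else 0 := by
  rw [← Finset.sum_product', ← Finset.sum_filter]
  symm
  refine Finset.sum_of_injOn (fun q ↦ q.1 ^ q.2) ?_ ?_ ?_ ?_
  · rintro ⟨p, a⟩ hpa ⟨q, b⟩ hqb (h : p ^ a = q ^ b)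
    simp only [Finset.coe_filter, Finset.mem_product, Finset.mem_filter, Finset.mem_Icc,
      Set.mem_ofPred_eq] at hpa hqb
    obtain rfl := eq_of_prime_pow_eq hpa.1.1.2.prime hqb.1.1.2.prime hpa.1.2.1 h
    rw [Nat.pow_right_injective hpa.1.1.2.two_le h]
  · rintro ⟨p, a⟩ hpa
    simp only [Finset.coe_filter, Finset.mem_product, Finset.mem_filter, Finset.mem_Icc,
      Set.mem_ofPred_eq] at hpa
    exact Finset.mem_coe.2 (Finset.mem_Icc.2 ⟨Nat.one_le_pow _ _ hpa.1.1.2.pos, hpa.2⟩)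
  · intro n hn hn'
    rw [vonMangoldt_eq_zero_iff.2, zero_div]
    rintro ⟨p, a, hp, ha, rfl⟩
    have hp := hp.nat_prime
    have hM := (Finset.mem_Icc.1 hn).2
    refine hn' ⟨(p, a), ?_, rfl⟩
    have h1 := Nat.le_self_pow ha.ne' p
    have h2 := Nat.lt_pow_self hp.one_lt (n := a)
    simp only [Finset.coe_filter, Finset.mem_product, Finset.mem_filter, Finset.mem_Icc,
      Set.mem_ofPred_eq, Finset.mem_range]
    exact ⟨⟨⟨by lia, hp⟩, ha, by lia⟩, hM⟩
  · rintro ⟨p, a⟩ hpa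
    simp only [Finset.mem_product, Finset.mem_filter, Finset.mem_Icc] at hpa
    rw [vonMangoldt_apply_pow (by lia), vonMangoldt_apply_prime hpa.1.1.2, Nat.cast_pow]

theorem summable_ite_div_pow {p : ℝ} (hp : 1 < p) (c : ℝ) (P : ℕ → Prop) [DecidablePred P] :
    Summable fun a : ℕ ↦ if P a then c / p ^ a else 0 := by
  have h : Summable fun a : ℕ ↦ c / p ^ a := by
    simpa [div_eq_mul_inv] using
      (summable_geometric_of_lt_one (inv_nonneg.2 (by linarith)) (inv_lt_one_of_one_lt₀ hp)).mul_left c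
  exact (h.indicator {a | P a}).congr fun a ↦ by simp [Set.indicator_apply]

theorem div_sub_one_eq_tsum {p : ℝ} (hp : 1 < p) (c : ℝ) :
    c / (p - 1) = ∑' a : ℕ, if 1 ≤ a then c / p ^ a else 0 := by
  have hp0 : 0 < p := by linarith
  rw [(summable_ite_div_pow hp c fun a ↦ 1 ≤ a).tsum_eq_zero_add]
  have h : ∀ a : ℕ, (if 1 ≤ a + 1 then c / p ^ (a + 1) else 0) = c / p * p⁻¹ ^ a := fun a ↦ by
    rw [if_pos (by lia), pow_succ, inv_pow]
    field_simp
  simp_rw [h]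
  rw [tsum_mul_left, tsum_geometric_of_lt_one (by positivity) (inv_lt_one_of_one_lt₀ hp)]
  have : p - 1 ≠ 0 := by linarith
  simp
  field_simp

theorem Delta_eq_sum_tsum {x : ℝ} (hx : 0 ≤ x) :
    Delta x = ∑ p ∈ (Finset.range (⌊x⌋₊ + 1)).filter Nat.Prime,
      ∑' a : ℕ, if 1 ≤ a ∧ x < (p : ℝ) ^ a then Real.log p / (p : ℝ) ^ a else 0 := by
  rw [Delta, sum_vonMangoldt_div_eq_sum_prime, ← Finset.sum_sub_distrib]
  refine Finset.sum_congr rfl fun p hp ↦ ?_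
  have hp := (Finset.mem_filter.1 hp).2
  have hp1 : (1 : ℝ) < p := by exact_mod_cast hp.one_lt
  have hle : ∀ a : ℕ, p ^ a ≤ ⌊x⌋₊ ↔ (p : ℝ) ^ a ≤ x := fun a ↦ by
    rw [Nat.le_floor_iff hx, Nat.cast_pow]
  have h : ∑ a ∈ Finset.Icc 1 ⌊x⌋₊, (if p ^ a ≤ ⌊x⌋₊ then Real.log p / (p : ℝ) ^ a else 0) =
      ∑' a : ℕ, if 1 ≤ a ∧ (p : ℝ) ^ a ≤ x then Real.log p / (p : ℝ) ^ a else 0 := by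
    rw [tsum_eq_sum (s := Finset.Icc 1 ⌊x⌋₊)]
    · refine Finset.sum_congr rfl fun a ha ↦ ?_
      simp only [hle, (Finset.mem_Icc.1 ha).1, true_and]
    · intro a ha
      refine if_neg fun h ↦ ha (Finset.mem_Icc.2 ⟨h.1, ?_⟩)
      exact (Nat.lt_pow_self hp.one_lt).le.trans ((hle a).2 h.2)
  rw [h, div_sub_one_eq_tsum hp1, ← (summable_ite_div_pow hp1 _ _).tsum_sub
    (summable_ite_div_pow hp1 _ _)]
  refine tsum_congr fun a ↦ ?_
  by_cases h1 : 1 ≤ a <;> by_cases h2 : (p : ℝ) ^ a ≤ x <;> simp [h1, h2, not_lt.2, not_le.1]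

theorem Delta_div_log_sub_hDelta_eq {x : ℝ} (hx : 0 ≤ x) :
    Delta x / Real.log x - hDelta x = ∑ p ∈ (Finset.range (⌊x⌋₊ + 1)).filter Nat.Prime,
      ∑' a : ℕ, if 1 ≤ a ∧ x < (p : ℝ) ^ a then
        (Real.log p / Real.log x - 1 / a) / (p : ℝ) ^ a else 0 := by
  rw [Delta_eq_sum_tsum hx, hDelta, Finset.sum_div, ← Finset.sum_sub_distrib]
  refine Finset.sum_congr rfl fun p hp ↦ ?_
  have hp1 : (1 : ℝ) < p := by exact_mod_cast (Finset.mem_filter.1 hp).2.one_lt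
  have hs : Summable fun a : ℕ ↦
      if 1 ≤ a ∧ x < (p : ℝ) ^ a then 1 / (a * (p : ℝ) ^ a) else 0 := by
    refine (summable_ite_div_pow hp1 1 fun a ↦ 1 ≤ a ∧ x < (p : ℝ) ^ a).of_nonneg_of_le
      (fun a ↦ by positivity) fun a ↦ ?_
    split_ifs with h
    · have : (1 : ℝ) ≤ a := by exact_mod_cast h.1
      gcongr
      exact le_mul_of_one_le_left (by positivity) this
    · exact le_rfl
  rw [← tsum_div_const, ← ((summable_ite_div_pow hp1 _ _).div_const _).tsum_sub hs]
  refine tsum_congr fun a ↦ ?_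
  split_ifs with h
  · have : (a : ℝ) ≠ 0 := by exact_mod_cast (by lia : a ≠ 0)
    field_simp
  · simp

theorem div_log_sub_one_div_nonneg {x p : ℝ} {a : ℕ} (hx : 1 < x) (ha : 1 ≤ a)
    (h : x < p ^ a) : 0 ≤ Real.log p / Real.log x - 1 / a := by
  have hL := Real.log_pos hx
  have ha : (0 : ℝ) < a := by exact_mod_cast ha
  have := Real.log_le_log (by linarith) h.le
  rw [Real.log_pow] at this
  rw [sub_nonneg, div_le_div_iff₀ ha hL]
  linarith

theorem summable_ite_div_log_sub {p : ℝ} (hp : 1 < p) (x : ℝ) :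
    Summable fun a : ℕ ↦ if 1 ≤ a ∧ x < p ^ a then
      (Real.log p / Real.log x - 1 / a) / p ^ a else 0 := by
  refine (summable_ite_div_pow hp (|Real.log p / Real.log x| + 1) fun a ↦
    1 ≤ a ∧ x < p ^ a).of_norm_bounded fun a ↦ ?_
  split_ifs with h
  · have hp0 : 0 < p := by linarith
    have ha : (1 : ℝ) ≤ a := by exact_mod_cast h.1
    rw [norm_div, Real.norm_eq_abs, Real.norm_eq_abs, abs_of_pos (pow_pos hp0 a)]
    gcongr
    refine (abs_sub _ _).trans ?_
    gcongr
    rw [abs_of_nonneg (by positivity)]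
    exact div_le_one_of_le₀ ha (by linarith)
  · simp

theorem exists_sum_prime_tsum_add_three_le : ∃ C, 0 < C ∧ ∀ x : ℝ, 2 ≤ x →
    ∑ p ∈ (Finset.range (⌊x⌋₊ + 1)).filter Nat.Prime,
      ∑' a : ℕ, (if 1 ≤ a + 3 ∧ x < (p : ℝ) ^ (a + 3) then
        (Real.log p / Real.log x - 1 / (a + 3 : ℕ)) / (p : ℝ) ^ (a + 3) else 0) ≤
      C * x ^ (-3 / 5 : ℝ) := by
  set r : ℝ := (2 : ℝ) ^ (-2 / 5 : ℝ) with hr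
  have hr0 : 0 < r := by positivity
  have hr1 : r < 1 := Real.rpow_lt_one_of_one_lt_of_neg (by norm_num) (by norm_num)
  have hs : Summable fun n : ℕ ↦ (n : ℝ) ^ (-6 / 5 : ℝ) :=
    Real.summable_nat_rpow.2 (by norm_num)
  set Z : ℝ := ∑' n : ℕ, (n : ℝ) ^ (-6 / 5 : ℝ) with hZ
  have hZ0 : 0 < Z := hs.tsum_pos (fun n ↦ by positivity) 1 (by simp)
  have hr1' : 0 < 1 - r := by linarith
  refine ⟨Z * (1 - r)⁻¹, by positivity, fun x hx ↦ ?_⟩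
  have hx0 : 0 < x := by linarith
  have hL : 0 < Real.log x := Real.log_pos (by linarith)
  calc _ ≤ ∑ p ∈ (Finset.range (⌊x⌋₊ + 1)).filter Nat.Prime,
        x ^ (-3 / 5 : ℝ) * (p : ℝ) ^ (-6 / 5 : ℝ) * (1 - r)⁻¹ := ?_
    _ = x ^ (-3 / 5 : ℝ) * (1 - r)⁻¹ *
        ∑ p ∈ (Finset.range (⌊x⌋₊ + 1)).filter Nat.Prime, (p : ℝ) ^ (-6 / 5 : ℝ) := by
      rw [Finset.mul_sum]
      exact Finset.sum_congr rfl fun p _ ↦ by ring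
    _ ≤ x ^ (-3 / 5 : ℝ) * (1 - r)⁻¹ * Z := by
      gcongr
      exact hs.sum_le_tsum _ fun n _ ↦ by positivity
    _ = _ := by ring
  refine Finset.sum_le_sum fun p hp ↦ ?_
  obtain ⟨hpx, hp⟩ := Finset.mem_filter.1 hp
  have hp2 : (2 : ℝ) ≤ p := by exact_mod_cast hp.two_le
  have hp0 : (0 : ℝ) < p := by linarith
  have hpx : (p : ℝ) ≤ x := (Nat.le_floor_iff hx0.le).1 (by simpa [Nat.lt_succ_iff] using hpx)
  have hterm : ∀ a : ℕ, (if 1 ≤ a + 3 ∧ x < (p : ℝ) ^ (a + 3) then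
        (Real.log p / Real.log x - 1 / (a + 3 : ℕ)) / (p : ℝ) ^ (a + 3) else 0) ≤
      x ^ (-3 / 5 : ℝ) * (p : ℝ) ^ (-6 / 5 : ℝ) * r ^ a := fun a ↦ by
    split_ifs with h
    · have h1 : Real.log p / Real.log x - 1 / (a + 3 : ℕ) ≤ 1 := by
        have : Real.log p / Real.log x ≤ 1 :=
          div_le_one_of_le₀ (Real.log_le_log hp0 hpx) hL.le
        have : (0 : ℝ) ≤ 1 / (a + 3 : ℕ) := by positivity
        linarith
      have hP : (0 : ℝ) < (p : ℝ) ^ (a + 3) := by positivity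
      calc _ ≤ 1 / (p : ℝ) ^ (a + 3) := div_le_div_of_nonneg_right h1 hP.le
        _ = ((p : ℝ) ^ (a + 3)) ^ (-3 / 5 : ℝ) * ((p : ℝ) ^ (a + 3)) ^ (-2 / 5 : ℝ) := by
          rw [← Real.rpow_add hP]; norm_num [Real.rpow_neg_one]
        _ ≤ x ^ (-3 / 5 : ℝ) * ((p : ℝ) ^ (a + 3)) ^ (-2 / 5 : ℝ) := by
          gcongr ?_ * _
          exact Real.rpow_le_rpow_of_nonpos hx0 h.2.le (by norm_num)
        _ = x ^ (-3 / 5 : ℝ) * ((p : ℝ) ^ (-6 / 5 : ℝ) * ((p : ℝ) ^ (-2 / 5 : ℝ)) ^ a) := by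
          rw [← Real.rpow_natCast, ← Real.rpow_natCast, ← Real.rpow_mul hp0.le,
            ← Real.rpow_mul hp0.le, ← Real.rpow_add hp0]
          congr 2
          push_cast
          ring
        _ ≤ x ^ (-3 / 5 : ℝ) * ((p : ℝ) ^ (-6 / 5 : ℝ) * r ^ a) := by
          gcongr _ * (_ * ?_ ^ _)
          exact Real.rpow_le_rpow_of_nonpos (by norm_num) hp2 (by norm_num)
        _ = _ := by ring
    · positivity
  rw [← tsum_geometric_of_lt_one hr0.le hr1, ← tsum_mul_left]
  exact ((summable_nat_add_iff 3).2 (summable_ite_div_log_sub (by linarith : (1 : ℝ) < p) x)).tsum_le_tsum hterm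
    ((summable_geometric_of_lt_one hr0.le hr1).mul_left _)

theorem sum_prime_ite_sq_eq {x : ℝ} (hx : 1 < x) :
    ∑ p ∈ (Finset.range (⌊x⌋₊ + 1)).filter Nat.Prime,
      (if 1 ≤ 2 ∧ x < (p : ℝ) ^ 2 then
        (Real.log p / Real.log x - 1 / (2 : ℕ)) / (p : ℝ) ^ 2 else 0) =
      (∑ n ∈ Finset.range (⌊x⌋₊ + 1), if n.Prime then logKernel (n / √x) else 0) /
        (Real.log x * x) := by
  have hx0 : 0 < x := by linarith
  have hL := Real.log_pos hx
  have hy : 0 < √x := Real.sqrt_pos.2 hx0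
  rw [Finset.sum_filter, Finset.sum_div]
  refine Finset.sum_congr rfl fun p _ ↦ ?_
  by_cases hp : p.Prime
  swap
  · simp [hp]
  have hp0 : (0 : ℝ) < p := by exact_mod_cast hp.pos
  rw [if_pos hp, if_pos hp]
  split_ifs with h
  · have hu : 1 ≤ (p : ℝ) / √x :=
      (one_le_div hy).2 (Real.sqrt_le_iff.2 ⟨hp0.le, h.2.le⟩)
    rw [logKernel_of_one_le hu, Real.log_div hp0.ne' hy.ne', Real.log_sqrt hx0.le, div_pow,
      Real.sq_sqrt hx0.le]
    push_cast
    field_simp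
  · have hu : (p : ℝ) / √x ≤ 1 :=
      (div_le_one hy).2 (Real.le_sqrt' hp0 |>.2 (not_lt.1 fun h' ↦ h ⟨by norm_num, h'⟩))
    rw [logKernel_of_le_one hu, zero_div]

theorem exists_tsum_sub_sum_prime_logKernel_le : ∃ C, 0 < C ∧ ∀ x : ℝ, 2 ≤ x →
    0 ≤ (∑' n : ℕ, if n.Prime then logKernel (n / √x) else 0) -
      (∑ n ∈ Finset.range (⌊x⌋₊ + 1), if n.Prime then logKernel (n / √x) else 0) ∧
    (∑' n : ℕ, if n.Prime then logKernel (n / √x) else 0) -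
      (∑ n ∈ Finset.range (⌊x⌋₊ + 1), if n.Prime then logKernel (n / √x) else 0) ≤
      C * x ^ (1 / 4 : ℝ) := by
  obtain ⟨A, hA, hk⟩ := exists_log_pow_mul_logKernel_le 0 (δ := 1 / 4) (by norm_num)
  have hs : Summable fun n : ℕ ↦ (n : ℝ) ^ (-9 / 8 : ℝ) :=
    Real.summable_nat_rpow.2 (by norm_num)
  set Z : ℝ := ∑' n : ℕ, (n : ℝ) ^ (-9 / 8 : ℝ) with hZ
  have hZ0 : 0 < Z := hs.tsum_pos (fun n ↦ by positivity) 1 (by simp)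
  refine ⟨A * Z, by positivity, fun x hx ↦ ?_⟩
  have hx0 : 0 < x := by linarith
  have hy : 0 < √x := Real.sqrt_pos.2 hx0
  have hsp := summable_prime_logKernel hy
  rw [← hsp.sum_add_tsum_nat_add (⌊x⌋₊ + 1), add_sub_cancel_left]
  have hs' := (summable_nat_add_iff (⌊x⌋₊ + 1)).2 hs
  refine ⟨tsum_nonneg fun n ↦ ?_, ?_⟩
  · split_ifs
    · exact logKernel_nonneg _
    · exact le_rfl
  calc _ ≤ ∑' n : ℕ, A * x ^ (1 / 4 : ℝ) * ((n + (⌊x⌋₊ + 1) : ℕ) : ℝ) ^ (-9 / 8 : ℝ) := by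
        refine ((summable_nat_add_iff (⌊x⌋₊ + 1)).2 hsp).tsum_le_tsum (fun n ↦ ?_)
          (hs'.mul_left _)
        have hm : x ≤ (n + (⌊x⌋₊ + 1) : ℕ) := by
          have := Nat.lt_floor_add_one x
          push_cast
          linarith [(n.cast_nonneg : (0 : ℝ) ≤ n)]
        generalize n + (⌊x⌋₊ + 1) = m at hm
        have hm0 : (0 : ℝ) < m := by linarith
        split_ifs
        · calc logKernel (m / √x) ≤ A * (m / √x) ^ (1 / 4 - 2 : ℝ) := by
                simpa using hk (m / √x) (by positivity)
            _ = A * (x ^ (7 / 8 : ℝ) * (m : ℝ) ^ (-5 / 8 : ℝ) * (m : ℝ) ^ (-9 / 8 : ℝ)) := by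
              rw [mul_assoc (x ^ _), ← Real.rpow_add hm0, Real.div_rpow hm0.le hy.le,
                Real.sqrt_eq_rpow, ← Real.rpow_mul hx0.le, div_eq_mul_inv, ← Real.rpow_neg hx0.le,
                mul_comm (x ^ _)]
              norm_num
            _ ≤ A * (x ^ (7 / 8 : ℝ) * x ^ (-5 / 8 : ℝ) * (m : ℝ) ^ (-9 / 8 : ℝ)) := by
              gcongr A * (_ * ?_ * _)
              exact Real.rpow_le_rpow_of_nonpos hx0 hm (by norm_num)
            _ = _ := by
              rw [← Real.rpow_add hx0]
              norm_num
              ring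
        · positivity
    _ = A * x ^ (1 / 4 : ℝ) * ∑' n : ℕ, ((n + (⌊x⌋₊ + 1) : ℕ) : ℝ) ^ (-9 / 8 : ℝ) :=
        tsum_mul_left
    _ ≤ A * x ^ (1 / 4 : ℝ) * Z := by
        gcongr
        rw [hZ, ← hs.sum_add_tsum_nat_add (⌊x⌋₊ + 1)]
        have : 0 ≤ ∑ n ∈ Finset.range (⌊x⌋₊ + 1), (n : ℝ) ^ (-9 / 8 : ℝ) :=
          Finset.sum_nonneg fun n _ ↦ by positivity
        linarith
    _ = _ := by ring

/-- `Δ(x)/log x - Δ̃(x) = 2/(√x (log x)^2) + O(1/(√x (log x)^3))` for `x ≥ 2`. -/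
theorem Delta_div_log_sub_hDelta_asymp :
    ∃ C : ℝ, ∀ x : ℝ, 2 ≤ x →
      |Delta x / Real.log x - hDelta x - 2 / (Real.sqrt x * (Real.log x) ^ 2)| ≤
        C / (Real.sqrt x * (Real.log x) ^ 3) := by
  obtain ⟨A, hA, hA'⟩ := exists_sum_prime_tsum_add_three_le
  obtain ⟨B, hB, hB'⟩ := exists_tsum_sub_sum_prime_logKernel_le
  obtain ⟨D, hD, hD'⟩ := exists_abs_log_sq_mul_tsum_prime_sub_le
  obtain ⟨E, hE, hE'⟩ := exists_log_pow_le_rpow 3 (δ := 1 / 10) (by norm_num)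
  obtain ⟨F, hF, hF'⟩ := exists_log_pow_le_rpow 2 (δ := 1 / 4) (by norm_num)
  refine ⟨A * E + B * F + 4 * D, fun x hx ↦ ?_⟩
  have hx0 : 0 < x := by linarith
  have hy : 0 < √x := Real.sqrt_pos.2 hx0
  have hL : 0 < Real.log x := Real.log_pos (by linarith)
  have hA' := hA' x hx
  obtain ⟨hB0, hB'⟩ := hB' x hx
  have hD' := hD' √x (by rw [Real.sq_sqrt hx0.le]; exact hx) hy
  have hE' := hE' x (by linarith)
  have hF' := hF' x (by linarith)
  rw [Delta_div_log_sub_hDelta_eq hx0.le]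
  have hsplit : ∀ p ∈ (Finset.range (⌊x⌋₊ + 1)).filter Nat.Prime,
      (∑' a : ℕ, if 1 ≤ a ∧ x < (p : ℝ) ^ a then
        (Real.log p / Real.log x - 1 / a) / (p : ℝ) ^ a else 0) =
      (if 1 ≤ 2 ∧ x < (p : ℝ) ^ 2 then
        (Real.log p / Real.log x - 1 / (2 : ℕ)) / (p : ℝ) ^ 2 else 0) +
      ∑' a : ℕ, (if 1 ≤ a + 3 ∧ x < (p : ℝ) ^ (a + 3) then
        (Real.log p / Real.log x - 1 / (a + 3 : ℕ)) / (p : ℝ) ^ (a + 3) else 0) := fun p hp ↦ by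
    obtain ⟨hpx, hp⟩ := Finset.mem_filter.1 hp
    have hpx : (p : ℝ) ≤ x :=
      (Nat.le_floor_iff hx0.le).1 (by simpa [Nat.lt_succ_iff] using hpx)
    have hp1 : (1 : ℝ) < p := by exact_mod_cast hp.one_lt
    rw [← (summable_ite_div_log_sub hp1 x).sum_add_tsum_nat_add 3]
    simp [Finset.sum_range_succ, hpx.not_gt]
  have h3 : 0 ≤ ∑ p ∈ (Finset.range (⌊x⌋₊ + 1)).filter Nat.Prime,
      ∑' a : ℕ, (if 1 ≤ a + 3 ∧ x < (p : ℝ) ^ (a + 3) then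
        (Real.log p / Real.log x - 1 / (a + 3 : ℕ)) / (p : ℝ) ^ (a + 3) else 0) := by
    refine Finset.sum_nonneg fun p hp ↦ tsum_nonneg fun a ↦ ?_
    split_ifs with h
    · exact div_nonneg (div_log_sub_one_div_nonneg (by linarith) h.1 h.2) (by positivity)
    · exact le_rfl
  rw [Finset.sum_congr rfl hsplit, Finset.sum_add_distrib, sum_prime_ite_sq_eq (by linarith)]
  rw [Real.log_sqrt hx0.le] at hD'
  have hpow1 : x ^ (-3 / 5 : ℝ) = x ^ (-1 / 10 : ℝ) / √x := by
    rw [Real.sqrt_eq_rpow, ← Real.rpow_sub hx0]; norm_num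
  have hpow2 : x ^ (-1 / 10 : ℝ) * x ^ (1 / 10 : ℝ) = 1 := by
    rw [← Real.rpow_add hx0]; norm_num
  have hpow3 : x ^ (1 / 4 : ℝ) * x ^ (1 / 4 : ℝ) = √x := by
    rw [Real.sqrt_eq_rpow, ← Real.rpow_add hx0]; norm_num
  have hyx : √x * √x = x := Real.mul_self_sqrt hx0.le
  generalize √x = y at *
  generalize Real.log x = L at *
  generalize (∑ p ∈ (Finset.range (⌊x⌋₊ + 1)).filter Nat.Prime,
      ∑' a : ℕ, (if 1 ≤ a + 3 ∧ x < (p : ℝ) ^ (a + 3) then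
        (Real.log p / L - 1 / (a + 3 : ℕ)) / (p : ℝ) ^ (a + 3) else 0)) = R at *
  generalize (∑' n : ℕ, if n.Prime then logKernel (n / y) else 0) = S at *
  generalize (∑ n ∈ Finset.range (⌊x⌋₊ + 1), if n.Prime then logKernel (n / y) else 0) = S' at *
  have hR : R ≤ A * E / (y * L ^ 3) := by
    rw [hpow1] at hA'
    refine hA'.trans ?_
    rw [mul_div_assoc', div_le_div_iff₀ hy (by positivity)]
    calc A * x ^ (-1 / 10 : ℝ) * (y * L ^ 3) ≤
          A * x ^ (-1 / 10 : ℝ) * (y * (E * x ^ (1 / 10 : ℝ))) := by gcongr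
      _ = A * E * y * (x ^ (-1 / 10 : ℝ) * x ^ (1 / 10 : ℝ)) := by ring
      _ = _ := by rw [hpow2, mul_one]
  have hS' : (S - S') / (L * x) ≤ B * F / (y * L ^ 3) := by
    rw [div_le_div_iff₀ (by positivity) (by positivity)]
    calc (S - S') * (y * L ^ 3) ≤ B * x ^ (1 / 4 : ℝ) * (y * (L * (F * x ^ (1 / 4 : ℝ)))) := by
          rw [pow_succ' L 2]; gcongr
      _ = B * F * L * y * (x ^ (1 / 4 : ℝ) * x ^ (1 / 4 : ℝ)) := by ring
      _ = B * F * (L * (y * y)) := by rw [hpow3]; ring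
      _ = _ := by rw [hyx]
  have hS0 : 0 ≤ (S - S') / (L * x) := by positivity
  have hS : |S / (L * x) - 2 / (y * L ^ 2)| ≤ 4 * D / (y * L ^ 3) := by
    have : S / (L * x) - 2 / (y * L ^ 2) =
        4 / (L ^ 3 * x) * ((L / 2) ^ 2 * S - y * (L / 2)) := by
      rw [← hyx]
      field_simp
      ring
    rw [this, abs_mul, abs_of_pos (by positivity)]
    calc _ ≤ 4 / (L ^ 3 * x) * (D * y) := by gcongr
      _ = _ := by rw [← hyx]; field_simp
  rw [sub_div] at hS' hS0
  rw [abs_le] at hS ⊢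
  rw [add_div, add_div]
  constructor <;> linarith [hS.1, hS.2]
end

section
/- For all x ≥ 10^6, Δ(x)/log x − Δ̃(x) ≥ 1.23/(√x·(log x)²). -/
open Filter

theorem log_factorial_eq_sum_vonMangoldt_mul_div {N M : ℕ} (h : N ≤ M) :
    Real.log (N.factorial : ℝ) =
      ∑ d ∈ Finset.Ioc 0 M, ArithmeticFunction.vonMangoldt d * ((N / d : ℕ) : ℝ) := by
  induction N with
  | zero => simp
  | succ N ih =>
    have hdiv : (Finset.Ioc 0 M).filter (· ∣ N + 1) = (N + 1).divisors := by
      ext d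
      simp only [Finset.mem_filter, Finset.mem_Ioc, Nat.mem_divisors]
      constructor
      · rintro ⟨-, hd⟩
        exact ⟨hd, by omega⟩
      · rintro ⟨hd, -⟩
        exact ⟨⟨Nat.pos_of_dvd_of_pos hd (by omega), (Nat.le_of_dvd (by omega) hd).trans h⟩, hd⟩
    rw [Nat.factorial_succ, Nat.cast_mul, Real.log_mul (by positivity) (by positivity),
      ih (by omega), ← ArithmeticFunction.vonMangoldt_sum, ← hdiv, Finset.sum_filter,
      ← Finset.sum_add_distrib]
    refine Finset.sum_congr rfl fun d _ => ?_
    rw [Nat.succ_div]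
    split_ifs <;> push_cast <;> ring

theorem log_factorial_lower {n : ℕ} (hn : 1 ≤ n) :
    n * Real.log n - n + 1 ≤ Real.log (n.factorial : ℝ) := by
  induction n, hn using Nat.le_induction with
  | base => simp
  | succ n hn ih =>
    have hn0 : (0 : ℝ) < n := by exact_mod_cast hn
    rw [Nat.factorial_succ, Nat.cast_mul, Real.log_mul (by positivity) (by positivity)]
    have h1 : Real.log ((n + 1 : ℕ) : ℝ) - Real.log n ≤ 1 / n := by
      rw [← Real.log_div (by positivity) (by positivity)]
      refine (Real.log_le_sub_one_of_pos (by positivity)).trans (le_of_eq ?_)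
      push_cast
      field_simp
      ring
    have h2 := mul_le_mul_of_nonneg_left h1 hn0.le
    rw [mul_one_div_cancel hn0.ne'] at h2
    push_cast at h2 ⊢
    linarith

theorem log_factorial_upper {n : ℕ} (hn : 1 ≤ n) :
    Real.log (n.factorial : ℝ) ≤ n * Real.log n - n + 1 + Real.log n := by
  induction n, hn using Nat.le_induction with
  | base => simp
  | succ n hn ih =>
    have hn0 : (0 : ℝ) < n := by exact_mod_cast hn
    rw [Nat.factorial_succ, Nat.cast_mul, Real.log_mul (by positivity) (by positivity)]
    have h1 : Real.log n - Real.log ((n + 1 : ℕ) : ℝ) ≤ - (1 / ((n : ℝ) + 1)) := by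
      rw [← Real.log_div (by positivity) (by positivity)]
      refine (Real.log_le_sub_one_of_pos (by positivity)).trans (le_of_eq ?_)
      push_cast
      field_simp
      ring
    have h2 := mul_le_mul_of_nonneg_left h1 (by positivity : (0 : ℝ) ≤ n + 1)
    rw [mul_neg, mul_one_div_cancel (by positivity)] at h2
    push_cast at h2 ⊢
    linarith

theorem log_factorial_floor_bounds {z : ℝ} (hz : 1 ≤ z) :
    z * Real.log z - z + 1 - Real.log z ≤ Real.log (⌊z⌋₊.factorial : ℝ) ∧
      Real.log (⌊z⌋₊.factorial : ℝ) ≤ z * Real.log z - z + 1 + Real.log z := by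
  have hn : 1 ≤ ⌊z⌋₊ := (Nat.one_le_floor_iff z).2 hz
  have hl := log_factorial_lower hn
  have hu := log_factorial_upper hn
  have hnz : (⌊z⌋₊ : ℝ) ≤ z := Nat.floor_le (by linarith)
  have hzn : z < ⌊z⌋₊ + 1 := Nat.lt_floor_add_one z
  have hn1 : (1 : ℝ) ≤ ⌊z⌋₊ := by exact_mod_cast hn
  set n : ℝ := (⌊z⌋₊ : ℝ)
  have hlogn : 0 ≤ Real.log n := Real.log_nonneg hn1
  have hlogz : 0 ≤ Real.log z := Real.log_nonneg hz
  have hlog : Real.log n ≤ Real.log z := Real.log_le_log (by linarith) hnz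
  have h1 : n * (Real.log z - Real.log n) ≤ z - n := by
    rw [← Real.log_div (by positivity) (by positivity)]
    have := mul_le_mul_of_nonneg_left
      (Real.log_le_sub_one_of_pos (show 0 < z / n by positivity)) (by positivity : 0 ≤ n)
    rwa [mul_sub, mul_one, mul_div_cancel₀ _ (by positivity)] at this
  have h2 : z * (Real.log n - Real.log z) ≤ n - z := by
    rw [← Real.log_div (by positivity) (by positivity)]
    have := mul_le_mul_of_nonneg_left
      (Real.log_le_sub_one_of_pos (show 0 < n / z by positivity)) (by positivity : 0 ≤ z)
    rwa [mul_sub, mul_one, mul_div_cancel₀ _ (by positivity)] at this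
  constructor
  · nlinarith [mul_nonneg hlogz (by linarith : 0 ≤ 1 - (z - n))]
  · nlinarith [mul_nonneg hlogn (by linarith : 0 ≤ z - n)]

/-- Chebyshev's combination `log (x! (x/30)! / ((x/2)! (x/3)! (x/5)!))`. -/
noncomputable def chebyshevComb (x : ℝ) : ℝ :=
  Real.log (⌊x⌋₊.factorial : ℝ) + Real.log (⌊x / 30⌋₊.factorial : ℝ) -
    Real.log (⌊x / 2⌋₊.factorial : ℝ) - Real.log (⌊x / 3⌋₊.factorial : ℝ) -
    Real.log (⌊x / 5⌋₊.factorial : ℝ)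

theorem chebyshevComb_eq_sum (x : ℝ) :
    chebyshevComb x = ∑ d ∈ Finset.Ioc 0 ⌊x⌋₊, ArithmeticFunction.vonMangoldt d *
      (((⌊x⌋₊ / d : ℕ) : ℝ) + ((⌊x⌋₊ / d / 30 : ℕ) : ℝ) - ((⌊x⌋₊ / d / 2 : ℕ) : ℝ) -
        ((⌊x⌋₊ / d / 3 : ℕ) : ℝ) - ((⌊x⌋₊ / d / 5 : ℕ) : ℝ)) := by
  have hfl : ∀ k : ℕ, Real.log (⌊x / k⌋₊.factorial : ℝ) = ∑ d ∈ Finset.Ioc 0 ⌊x⌋₊,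
      ArithmeticFunction.vonMangoldt d * ((⌊x⌋₊ / d / k : ℕ) : ℝ) := fun k => by
    rw [Nat.floor_div_natCast, log_factorial_eq_sum_vonMangoldt_mul_div (Nat.div_le_self _ k)]
    refine Finset.sum_congr rfl fun d _ => ?_
    rw [Nat.div_div_eq_div_mul, Nat.div_div_eq_div_mul, mul_comm k d]
  have h30 := hfl 30
  have h2 := hfl 2
  have h3 := hfl 3
  have h5 := hfl 5
  push_cast at h30 h2 h3 h5
  rw [chebyshevComb, h30, h2, h3, h5, log_factorial_eq_sum_vonMangoldt_mul_div le_rfl]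
  simp only [← Finset.sum_add_distrib, ← Finset.sum_sub_distrib]
  exact Finset.sum_congr rfl fun d _ => by ring

theorem chebyshevComb_le_psi (x : ℝ) : chebyshevComb x ≤ Chebyshev.psi x := by
  rw [chebyshevComb_eq_sum, Chebyshev.psi]
  refine Finset.sum_le_sum fun d _ => mul_le_of_le_one_right
    ArithmeticFunction.vonMangoldt_nonneg ?_
  generalize ⌊x⌋₊ / d = m
  have h : m + m / 30 ≤ m / 2 + m / 3 + m / 5 + 1 := by omega
  have : (m : ℝ) + (m / 30 : ℕ) ≤ (m / 2 : ℕ) + (m / 3 : ℕ) + (m / 5 : ℕ) + 1 := by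
    exact_mod_cast h
  linarith

theorem psi_sub_psi_div_six_le_chebyshevComb {x : ℝ} (hx : 0 ≤ x) :
    Chebyshev.psi x - Chebyshev.psi (x / 6) ≤ chebyshevComb x := by
  have hfl : ⌊x / 6⌋₊ = ⌊x⌋₊ / 6 := by exact_mod_cast Nat.floor_div_natCast x 6
  have hsub : Finset.Ioc 0 ⌊x / 6⌋₊ ⊆ Finset.Ioc 0 ⌊x⌋₊ :=
    Finset.Ioc_subset_Ioc_right (Nat.floor_mono (by linarith))
  rw [chebyshevComb_eq_sum, Chebyshev.psi, Chebyshev.psi, sub_le_iff_le_add,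
    ← Finset.sum_sdiff hsub, ← Finset.sum_sdiff hsub, add_assoc, ← Finset.sum_add_distrib]
  refine add_le_add (Finset.sum_le_sum fun d hd => ?_) (Finset.sum_le_sum fun d _ => ?_)
  · refine le_mul_of_one_le_right ArithmeticFunction.vonMangoldt_nonneg ?_
    simp only [Finset.mem_sdiff, Finset.mem_Ioc, hfl, not_and, not_le] at hd
    obtain ⟨⟨hd0, hd1⟩, hd2⟩ := hd
    have hm1 : 1 ≤ ⌊x⌋₊ / d := Nat.div_pos hd1 hd0
    have hm6 : ⌊x⌋₊ / d < 6 := by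
      rw [Nat.div_lt_iff_lt_mul hd0]
      have := hd2 hd0
      omega
    generalize ⌊x⌋₊ / d = m at hm1 hm6
    have h : m / 2 + m / 3 + m / 5 + 1 ≤ m + m / 30 := by omega
    have : ((m / 2 : ℕ) : ℝ) + (m / 3 : ℕ) + (m / 5 : ℕ) + 1 ≤ m + (m / 30 : ℕ) := by
      exact_mod_cast h
    linarith
  · refine le_add_of_nonneg_left (mul_nonneg ArithmeticFunction.vonMangoldt_nonneg ?_)
    generalize ⌊x⌋₊ / d = m
    have h : m / 2 + m / 3 + m / 5 ≤ m + m / 30 := by omega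
    have : ((m / 2 : ℕ) : ℝ) + (m / 3 : ℕ) + (m / 5 : ℕ) ≤ m + (m / 30 : ℕ) := by
      exact_mod_cast h
    linarith

theorem chebyshevComb_bounds {x : ℝ} (hx : 30 ≤ x) :
    0.92129 * x - 5 * Real.log x + 5.8 ≤ chebyshevComb x ∧
      chebyshevComb x ≤ 0.9213 * x + 5 * Real.log x - 7.8 := by
  have l30 : Real.log 30 = Real.log 2 + Real.log 3 + Real.log 5 := by
    rw [← Real.log_mul, ← Real.log_mul] <;> norm_num
  have hlog : ∀ k : ℝ, 0 < k → Real.log (x / k) = Real.log x - Real.log k := fun k hk =>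
    Real.log_div (by linarith) hk.ne'
  obtain ⟨a1, b1⟩ := log_factorial_floor_bounds (show 1 ≤ x by linarith)
  obtain ⟨a30, b30⟩ := log_factorial_floor_bounds (show 1 ≤ x / 30 by linarith)
  obtain ⟨a2, b2⟩ := log_factorial_floor_bounds (show 1 ≤ x / 2 by linarith)
  obtain ⟨a3, b3⟩ := log_factorial_floor_bounds (show 1 ≤ x / 3 by linarith)
  obtain ⟨a5, b5⟩ := log_factorial_floor_bounds (show 1 ≤ x / 5 by linarith)
  rw [hlog _ (by norm_num)] at a30 b30 a2 b2 a3 b3 a5 b5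
  rw [l30] at a30 b30
  have := Real.log_two_gt_d9
  have := Real.log_two_lt_d9
  have := Real.log_three_gt_d9
  have := Real.log_three_lt_d9
  have := Real.log_five_gt_d9
  have := Real.log_five_lt_d9
  have hA1 : 0.92129 ≤ Real.log 2 / 2 + Real.log 3 / 3 + Real.log 5 / 5 -
      (Real.log 2 + Real.log 3 + Real.log 5) / 30 := by linarith
  have hA2 : Real.log 2 / 2 + Real.log 3 / 3 + Real.log 5 / 5 -
      (Real.log 2 + Real.log 3 + Real.log 5) / 30 ≤ 0.9213 := by linarith
  have hA1' := mul_le_mul_of_nonneg_right hA1 (by linarith : 0 ≤ x)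
  have hA2' := mul_le_mul_of_nonneg_right hA2 (by linarith : 0 ≤ x)
  rw [chebyshevComb]
  constructor <;> linarith

/-- Checks `lcm(1, …, m) * 100 ^ m ≤ 331 ^ m` for `n ≤ m < n + k`, given `l = lcm(1, …, n)`. -/
def lcmUptoCheck : (k n l : ℕ) → Bool
  | 0, _, _ => true
  | k + 1, n, l => Nat.ble (l * 100 ^ n) (331 ^ n) && lcmUptoCheck k (n + 1) (l.lcm (n + 1))

theorem lcmUpto_succ (n : ℕ) : Nat.lcmUpto (n + 1) = (Nat.lcmUpto n).lcm (n + 1) := by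
  rw [Nat.lcmUpto, Nat.lcmUpto, ← Finset.insert_Icc_right_eq_Icc_add_one (by omega),
    Finset.lcm_insert, lcm_comm]
  rfl

theorem lcmUpto_mul_pow_le_of_check {k n : ℕ} (h : lcmUptoCheck k n (Nat.lcmUpto n) = true)
    {m : ℕ} (hnm : n ≤ m) (hm : m < n + k) : Nat.lcmUpto m * 100 ^ m ≤ 331 ^ m := by
  induction k generalizing n with
  | zero => omega
  | succ k ih =>
    rw [lcmUptoCheck, Bool.and_eq_true, ← lcmUpto_succ] at h
    rcases hnm.eq_or_lt with rfl | hlt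
    · exact Nat.le_of_ble_eq_true h.1
    · exact ih h.2 hlt (by omega)

theorem lcmUpto_mul_pow_le {n : ℕ} (hn : n ≤ 300) :
    Nat.lcmUpto n * 100 ^ n ≤ 331 ^ n := by
  have h : lcmUptoCheck 301 0 1 = true := by decide +kernel
  exact lcmUpto_mul_pow_le_of_check (n := 0) (k := 301) h n.zero_le (by omega)

theorem psi_le_mul_of_le {x : ℝ} (hx0 : 0 ≤ x) (hx : x ≤ 300) : Chebyshev.psi x ≤ 1.2 * x := by
  have hfl : (⌊x⌋₊ : ℝ) ≤ x := Nat.floor_le hx0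
  have hn : ⌊x⌋₊ ≤ 300 := by exact_mod_cast hfl.trans hx
  rw [Chebyshev.psi_eq_psi_coe_floor, Chebyshev.psi_eq_log_lcmUpto]
  have hexp : (3.31 : ℝ) ≤ Real.exp 1.2 := by
    rw [show (1.2 : ℝ) = 1 / 5 + 1 by norm_num, Real.exp_add]
    have h1 := Real.exp_one_gt_d9
    have h2 := Real.quadratic_le_exp_of_nonneg (show (0 : ℝ) ≤ 1 / 5 by norm_num)
    norm_num at h2
    nlinarith
  have hpow : (Nat.lcmUpto ⌊x⌋₊ : ℝ) ≤ 3.31 ^ ⌊x⌋₊ := by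
    have : (Nat.lcmUpto ⌊x⌋₊ : ℝ) * 100 ^ ⌊x⌋₊ ≤ 331 ^ ⌊x⌋₊ := by
      exact_mod_cast lcmUpto_mul_pow_le hn
    rw [show (3.31 : ℝ) = 331 / 100 by norm_num, div_pow]
    exact (le_div_iff₀ (by positivity)).2 this
  calc Real.log (Nat.lcmUpto ⌊x⌋₊) ≤ Real.log (Real.exp 1.2 ^ ⌊x⌋₊) :=
        Real.log_le_log (by exact_mod_cast Nat.lcmUpto_pos _) (hpow.trans (by gcongr))
    _ = 1.2 * ⌊x⌋₊ := by rw [Real.log_pow, Real.log_exp, mul_comm]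
    _ ≤ 1.2 * x := by gcongr

theorem log_le_div_add_log_sub_one {x a : ℝ} (hx : 0 < x) (ha : 0 < a) :
    Real.log x ≤ x / a + Real.log a - 1 := by
  have := Real.log_le_sub_one_of_pos (div_pos hx ha)
  rw [Real.log_div hx.ne' ha.ne'] at this
  linarith

theorem psi_le_mul {x : ℝ} (hx : 0 ≤ x) : Chebyshev.psi x ≤ 1.2 * x := by
  obtain ⟨n, hn⟩ := exists_nat_ge x
  induction n using Nat.strong_induction_on generalizing x with
  | _ n ih =>
    by_cases h : x ≤ 300
    · exact psi_le_mul_of_le hx h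
    · push Not at h
      have hn0 : 300 < n := by exact_mod_cast h.trans_le hn
      have h1 := ih (n - 1) (by omega) (x := x / 6) (by positivity) (by
        rw [Nat.cast_sub (by omega), Nat.cast_one]
        linarith)
      have h2 := psi_sub_psi_div_six_le_chebyshevComb hx
      have h3 := (chebyshevComb_bounds (x := x) (by linarith)).2
      have h4 := log_le_div_add_log_sub_one (x := x) (a := 256) (by linarith) (by norm_num)
      have h5 : Real.log 256 = 8 * Real.log 2 := by
        rw [show (256 : ℝ) = 2 ^ 8 by norm_num, Real.log_pow]
        norm_num
      have := Real.log_two_lt_d9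
      linarith

theorem log_thousand : Real.log 1000 = 3 * (Real.log 2 + Real.log 5) := by
  rw [← Real.log_ten_eq, show (1000 : ℝ) = 10 ^ 3 by norm_num, Real.log_pow]
  norm_num

theorem theta_le_mul {x : ℝ} (hx : 1000 ≤ x) : Chebyshev.theta x ≤ 1.15 * x := by
  have h0 := Chebyshev.theta_le_psi x
  have h1 := psi_le_mul (x := x / 6) (by linarith)
  have h2 := psi_sub_psi_div_six_le_chebyshevComb (x := x) (by linarith)
  have h3 := (chebyshevComb_bounds (x := x) (by linarith)).2
  have h4 := log_le_div_add_log_sub_one (x := x) (a := 1000) (by linarith) (by norm_num)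
  rw [log_thousand] at h4
  have := Real.log_two_lt_d9
  have := Real.log_five_lt_d9
  linarith

theorem rpow_inv_le_mul_sqrt {x c : ℝ} (hx : 1000 ≤ x) (hc : 0 ≤ c) {k : ℕ} (hk : 2 ≤ k)
    (h : 1 ≤ 1000 ^ (k - 2) * c ^ (2 * k)) : x ^ ((k : ℝ)⁻¹) ≤ c * √x := by
  have hx0 : 0 ≤ x := by linarith
  have hk0 : 2 * k ≠ 0 := by omega
  refine le_of_pow_le_pow_left₀ hk0 (by positivity) ?_
  rw [mul_comm 2 k, pow_mul, Real.rpow_inv_natCast_pow hx0 (by omega), mul_pow, mul_comm k 2,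
    pow_mul √x, Real.sq_sqrt hx0]
  calc x ^ 2 ≤ x ^ 2 * (1000 ^ (k - 2) * c ^ (2 * k)) := le_mul_of_one_le_right (by positivity) h
    _ ≤ x ^ 2 * (x ^ (k - 2) * c ^ (2 * k)) := by gcongr
    _ = c ^ (2 * k) * x ^ k := by
      rw [← mul_assoc, ← pow_add, Nat.add_sub_cancel' hk, mul_comm]

theorem psi_sub_theta_le_mul_sqrt {x : ℝ} (hx : 1000 ≤ x) :
    Chebyshev.psi x - Chebyshev.theta x ≤ 1.75 * √x := by
  have hx0 : 0 ≤ x := by linarith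
  have h := Chebyshev.psi_sub_theta_le_psi_add_psi_add_psi x
  have h2 := psi_le_mul (x := x ^ (2 : ℝ)⁻¹) (by positivity)
  have h3 := psi_le_mul (x := x ^ (3 : ℝ)⁻¹) (by positivity)
  have h5 := psi_le_mul (x := x ^ (5 : ℝ)⁻¹) (by positivity)
  have e2 : x ^ (2 : ℝ)⁻¹ = √x := by rw [Real.sqrt_eq_rpow, one_div]
  have e3 : x ^ (3 : ℝ)⁻¹ ≤ 0.32 * √x := by
    exact_mod_cast rpow_inv_le_mul_sqrt (k := 3) (c := 0.32) hx (by norm_num) (by norm_num)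
      (by norm_num)
  have e5 : x ^ (5 : ℝ)⁻¹ ≤ 0.13 * √x := by
    exact_mod_cast rpow_inv_le_mul_sqrt (k := 5) (c := 0.13) hx (by norm_num) (by norm_num)
      (by norm_num)
  have := Real.sqrt_nonneg x
  linarith

theorem theta_ge_mul_sub {x : ℝ} (hx : 1000 ≤ x) : 0.905 * x - 110 ≤ Chebyshev.theta x := by
  have h1 := psi_sub_theta_le_mul_sqrt hx
  have h2 := (chebyshevComb_bounds (x := x) (by linarith)).1
  have h3 := chebyshevComb_le_psi x
  have hs : 0 < √x := Real.sqrt_pos.2 (by linarith)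
  have hsx : √x ^ 2 = x := Real.sq_sqrt (by linarith)
  have h4 := log_le_div_add_log_sub_one hs (show (0 : ℝ) < 60 by norm_num)
  have h5 : Real.log 60 = 2 * Real.log 2 + Real.log 3 + Real.log 5 := by
    rw [show (60 : ℝ) = 2 ^ 2 * 3 * 5 by norm_num, Real.log_mul, Real.log_mul, Real.log_pow] <;>
      norm_num
  rw [Real.log_sqrt (by linarith), h5] at h4
  have := Real.log_two_lt_d9
  have := Real.log_three_lt_d9
  have := Real.log_five_lt_d9
  nlinarith [sq_nonneg (√x - 58.8)]

/-- Partial summation over primes, with the integral evaluated after comparing `θ` with a linear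
function. -/
theorem le_sum_prime_mul_log {a b c d : ℝ} {f f' F : ℝ → ℝ} (ha : 0 ≤ a) (hab : a ≤ b)
    (hf : ∀ t ∈ Set.Icc a b, HasDerivAt f (f' t) t)
    (hF : ∀ t ∈ Set.Icc a b, HasDerivAt F (f t) t)
    (hf' : ContinuousOn f' (Set.Icc a b))
    (h : ∀ t ∈ Set.Icc a b, f' t * Chebyshev.theta t ≤ f' t * (c * t + d)) :
    (f b * (Chebyshev.theta b - (c * b + d)) + c * F b) -
        (f a * (Chebyshev.theta a - (c * a + d)) + c * F a) ≤
      ∑ p ∈ (Finset.Ioc ⌊a⌋₊ ⌊b⌋₊).filter Nat.Prime, f p * Real.log p := by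
  have hderiv : Set.EqOn (deriv f) f' (Set.Icc a b) := fun t ht => (hf t ht).deriv
  have hu : Set.uIcc a b = Set.Icc a b := Set.uIcc_of_le hab
  have habel := sum_mul_eq_sub_sub_integral_mul
    (fun k : ℕ => if k.Prime then Real.log k else 0) ha hab
    (fun t ht => (hf t ht).differentiableAt)
    ((hf'.integrableOn_Icc).congr_fun hderiv.symm measurableSet_Icc)
  simp only [← Finset.sum_filter, mul_ite, mul_zero, ← Chebyshev.theta_eq_sum_Icc] at habel
  rw [habel, ← intervalIntegral.integral_of_le hab]
  have hint : ∫ t in a..b, deriv f t * Chebyshev.theta t ≤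
      ∫ t in a..b, f' t * (c * t + d) := by
    refine intervalIntegral.integral_mono_on hab ?_ ?_ fun t ht => ?_
    · exact (Chebyshev.theta_mono.intervalIntegrable).continuousOn_mul
        (hu ▸ hf'.congr hderiv)
    · exact ContinuousOn.intervalIntegrable (hu ▸ hf'.mul (by fun_prop))
    · rw [hderiv ht]
      exact h t ht
  have hftc : ∫ t in a..b, f' t * (c * t + d) =
      (f b * (c * b + d) - c * F b) - (f a * (c * a + d) - c * F a) := by
    refine intervalIntegral.integral_eq_sub_of_hasDerivAt
      (f := fun t => f t * (c * t + d) - c * F t) (fun t ht => ?_)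
      (ContinuousOn.intervalIntegrable (hu ▸ hf'.mul (by fun_prop)))
    rw [hu] at ht
    refine (((hf t ht).mul (((hasDerivAt_id t).const_mul c).add_const d)).sub
      ((hF t ht).const_mul c)).congr_deriv ?_
    simp only [id]
    ring
  linarith

theorem sum_vonMangoldt_div_eq {x : ℝ} (hx : 0 ≤ x) {M : ℕ}
    (hM : ⌊Real.log x / Real.log 2⌋₊ ≤ M) :
    ∑ n ∈ Finset.Icc 1 ⌊x⌋₊, ArithmeticFunction.vonMangoldt n / n =
      ∑ p ∈ (Finset.range (⌊x⌋₊ + 1)).filter Nat.Prime, ∑ a ∈ Finset.Icc 1 M,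
        if (p : ℝ) ^ a ≤ x then Real.log p / (p : ℝ) ^ a else 0 := by
  have h1 : ∑ n ∈ Finset.Icc 1 ⌊x⌋₊, ArithmeticFunction.vonMangoldt n / n =
      ∑ n ∈ (Finset.Ioc 0 ⌊x⌋₊).filter IsPrimePow,
        (ArithmeticFunction.vonMangoldt n / n : ℝ) := by
    rw [Finset.sum_filter]
    refine Finset.sum_congr rfl fun n _ => ?_
    split_ifs with hn
    · rfl
    · rw [ArithmeticFunction.vonMangoldt_eq_zero_iff.2 hn, zero_div]
  rw [h1, Chebyshev.sum_PrimePow_eq_sum_sum' _ hx hM, Finset.sum_comm]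
  refine Finset.sum_congr rfl fun a ha => ?_
  have ha1 : 1 ≤ a := (Finset.mem_Icc.1 ha).1
  rw [← Finset.sum_filter, Finset.filter_filter]
  have hset : (Finset.Ioc 0 ⌊x ^ ((1 : ℝ) / a)⌋₊).filter Nat.Prime =
      (Finset.range (⌊x⌋₊ + 1)).filter fun p : ℕ => p.Prime ∧ (p : ℝ) ^ a ≤ x := by
    ext p
    have hiff : (p : ℝ) ≤ x ^ ((1 : ℝ) / a) ↔ (p : ℝ) ^ a ≤ x := by
      rw [one_div, Real.le_rpow_inv_iff_of_pos (by positivity) hx (by positivity),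
        Real.rpow_natCast]
    simp only [Finset.mem_filter, Finset.mem_Ioc, Finset.mem_range, Nat.lt_succ_iff,
      Nat.le_floor_iff hx, Nat.le_floor_iff (Real.rpow_nonneg hx _), hiff]
    constructor
    · rintro ⟨⟨-, h⟩, hp⟩
      refine ⟨(le_self_pow₀ ?_ (by omega)).trans h, hp, h⟩
      exact_mod_cast hp.one_le
    · rintro ⟨-, hp, h⟩
      exact ⟨⟨hp.pos, h⟩, hp⟩
  rw [hset]
  refine Finset.sum_congr rfl fun p hp => ?_
  rw [ArithmeticFunction.vonMangoldt_apply_pow (by omega),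
    ArithmeticFunction.vonMangoldt_apply_prime (Finset.mem_filter.1 hp).2.1, Nat.cast_pow]

theorem hasSum_log_div_pow {p : ℕ} (hp : p.Prime) {x : ℝ} {M : ℕ}
    (hM : ⌊x⌋₊ ≤ M) :
    HasSum (fun a : ℕ => if 1 ≤ a ∧ x < (p : ℝ) ^ a then Real.log p / (p : ℝ) ^ a else 0)
      (Real.log p / ((p : ℝ) - 1) -
        ∑ a ∈ Finset.Icc 1 M, if (p : ℝ) ^ a ≤ x then Real.log p / (p : ℝ) ^ a else 0) := by
  have hp1 : (1 : ℝ) < p := by exact_mod_cast hp.one_lt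
  have hgeom : HasSum (fun a : ℕ => if 1 ≤ a then Real.log p / (p : ℝ) ^ a else 0)
      (Real.log p / ((p : ℝ) - 1)) := by
    have h0 := ((hasSum_geometric_of_lt_one (r := (p : ℝ)⁻¹) (by positivity)
      (inv_lt_one_of_one_lt₀ hp1)).mul_left (Real.log p)).sub
      (hasSum_ite_eq 0 (Real.log p))
    convert! h0 using 1
    · ext a
      rcases Nat.eq_zero_or_pos a with rfl | ha
      · simp
      · rw [if_pos (by omega), if_neg (by omega), sub_zero, inv_pow, div_eq_mul_inv]
    · have : (p : ℝ) - 1 ≠ 0 := by linarith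
      have : (p : ℝ) ≠ 0 := by linarith
      have : 1 - (p : ℝ)⁻¹ ≠ 0 := by
        rw [sub_ne_zero]
        exact (inv_lt_one_of_one_lt₀ hp1).ne'
      field_simp
      ring
  have hfin : HasSum (fun a : ℕ => if 1 ≤ a ∧ (p : ℝ) ^ a ≤ x then
      Real.log p / (p : ℝ) ^ a else 0)
      (∑ a ∈ Finset.Icc 1 M, if (p : ℝ) ^ a ≤ x then Real.log p / (p : ℝ) ^ a else 0) := by
    have : ∑ a ∈ Finset.Icc 1 M, (if (p : ℝ) ^ a ≤ x then Real.log p / (p : ℝ) ^ a else 0) =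
        ∑ a ∈ Finset.Icc 1 M, if 1 ≤ a ∧ (p : ℝ) ^ a ≤ x then
          Real.log p / (p : ℝ) ^ a else 0 :=
      Finset.sum_congr rfl fun a ha => by simp [(Finset.mem_Icc.1 ha).1]
    rw [this]
    refine hasSum_sum_of_ne_finset_zero fun a ha => if_neg ?_
    rintro ⟨ha1, hax⟩
    have hMa : M < a := by
      by_contra hcon
      exact ha (Finset.mem_Icc.2 ⟨ha1, by omega⟩)
    have : (p ^ a : ℕ) ≤ ⌊x⌋₊ := Nat.le_floor (by exact_mod_cast hax)
    have := Nat.lt_pow_self (n := a) hp.one_lt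
    omega
  convert! hgeom.sub hfin using 1
  ext a
  by_cases h1 : 1 ≤ a <;> by_cases h2 : x < (p : ℝ) ^ a
  · simp [h1, h2, not_le.2 h2]
  · simp [h1, h2, not_lt.1 h2]
  · simp [h1]
  · simp [h1]

theorem ite_le_log_div_sub_tsum {p : ℕ} (hp : p.Prime) {x : ℝ} (hx : 1 < x) {M : ℕ}
    (hM : ⌊x⌋₊ ≤ M) :
    (if x < (p : ℝ) ^ 2 then (Real.log p / Real.log x - 1 / 2) / (p : ℝ) ^ 2 else 0) ≤
      (Real.log p / ((p : ℝ) - 1) -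
        ∑ a ∈ Finset.Icc 1 M, if (p : ℝ) ^ a ≤ x then Real.log p / (p : ℝ) ^ a else 0) /
          Real.log x -
        ∑' a : ℕ, if 1 ≤ a ∧ x < (p : ℝ) ^ a then 1 / (a * (p : ℝ) ^ a) else 0 := by
  have hL : 0 < Real.log x := Real.log_pos hx
  have hp0 : (0 : ℝ) < p := by exact_mod_cast hp.pos
  have hS := (hasSum_log_div_pow hp hM).div_const (Real.log x)
  have hle : ∀ a : ℕ, (if 1 ≤ a ∧ x < (p : ℝ) ^ a then 1 / (a * (p : ℝ) ^ a) else 0) ≤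
      (if 1 ≤ a ∧ x < (p : ℝ) ^ a then Real.log p / (p : ℝ) ^ a else 0) / Real.log x := by
    intro a
    split_ifs with h
    · have ha : (0 : ℝ) < a := by exact_mod_cast h.1
      have hlog : Real.log x ≤ a * Real.log p := by
        rw [← Real.log_pow]
        exact Real.log_le_log (by linarith) h.2.le
      rw [div_div, div_le_div_iff₀ (by positivity) (by positivity)]
      nlinarith [pow_pos hp0 a]
    · simp
  have hsum : Summable fun a : ℕ =>
      if 1 ≤ a ∧ x < (p : ℝ) ^ a then 1 / (a * (p : ℝ) ^ a) else 0 :=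
    hS.summable.of_nonneg_of_le (fun a => by split_ifs <;> positivity) hle
  have hD := hS.sub hsum.hasSum
  refine le_trans ?_ (le_hasSum hD 2 fun a _ => sub_nonneg.2 (hle a))
  split_ifs with h1 h2 h2
  · refine le_of_eq ?_
    push_cast
    field_simp
  · exact absurd ⟨by norm_num, h1⟩ h2
  · exact absurd h2.2 h1
  · simp

theorem sum_prime_le_Delta_div_log_sub_hDelta {x : ℝ} (hx : 1 < x) :
    ∑ p ∈ (Finset.Ioc ⌊√x⌋₊ ⌊x⌋₊).filter Nat.Prime,
      (Real.log p / Real.log x - 1 / 2) / (p : ℝ) ^ 2 ≤ Delta x / Real.log x - hDelta x := by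
  set M := max ⌊Real.log x / Real.log 2⌋₊ ⌊x⌋₊ with hM
  rw [Delta, hDelta, sum_vonMangoldt_div_eq (by linarith) (le_max_left _ _ : _ ≤ M),
    ← Finset.sum_sub_distrib, Finset.sum_div, ← Finset.sum_sub_distrib]
  refine le_trans ?_ (Finset.sum_le_sum fun p hp =>
    ite_le_log_div_sub_tsum (Finset.mem_filter.1 hp).2 hx (le_max_right _ _ : _ ≤ M))
  rw [← Finset.sum_filter]
  refine Finset.sum_le_sum_of_subset_of_nonneg (fun p hp => ?_) fun p hp _ => ?_
  · simp only [Finset.mem_filter, Finset.mem_Ioc, Finset.mem_range] at hp ⊢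
    refine ⟨⟨by omega, hp.2⟩, ?_⟩
    have := (Nat.floor_lt (Real.sqrt_nonneg x)).1 hp.1.1
    exact (Real.sqrt_lt' ((Real.sqrt_nonneg x).trans_lt this)).1 this
  · have hL : 0 < Real.log x := Real.log_pos hx
    have h := Real.log_le_log (by linarith) (Finset.mem_filter.1 hp).2.le
    rw [Real.log_pow] at h
    push_cast at h
    refine div_nonneg (sub_nonneg.2 ?_) (by positivity)
    rw [div_le_div_iff₀ two_pos hL]
    linarith

theorem hasDerivAt_log_sub_div {m k l t : ℝ} (ht : 0 < t) :
    HasDerivAt (fun t => (Real.log t - l) * (m - k * (Real.log t - l)) / t ^ 2)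
      ((m - 2 * k * (Real.log t - l) - 2 * (Real.log t - l) * (m - k * (Real.log t - l)))
        / t ^ 3) t := by
  have hlog := (Real.hasDerivAt_log ht.ne').sub_const l
  refine ((hlog.mul ((hlog.const_mul k).const_sub m)).div (hasDerivAt_pow 2 t)
    (by positivity)).congr_deriv ?_
  simp only [Pi.mul_apply]
  field_simp
  push_cast
  ring

theorem hasDerivAt_neg_log_sub_div {m k l t : ℝ} (ht : 0 < t) :
    HasDerivAt (fun t => -((Real.log t - l) * (m - k * (Real.log t - l)) +
        m - 2 * k * (Real.log t - l) - 2 * k) / t)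
      ((Real.log t - l) * (m - k * (Real.log t - l)) / t ^ 2) t := by
  have hlog := (Real.hasDerivAt_log ht.ne').sub_const l
  refine ((((((hlog.mul ((hlog.const_mul k).const_sub m))).add_const m).sub
    (hlog.const_mul (2 * k))).sub_const (2 * k)).neg.div (hasDerivAt_id t) ht.ne').congr_deriv ?_
  simp only [Pi.mul_apply, Pi.sub_apply, Pi.neg_apply, id]
  field_simp
  ring

theorem continuousOn_deriv_log_sub_div {m k l a b : ℝ} (ha : 0 < a) :
    ContinuousOn (fun t => (m - 2 * k * (Real.log t - l) -
      2 * (Real.log t - l) * (m - k * (Real.log t - l))) / t ^ 3) (Set.Icc a b) := by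
  have h0 : ∀ t ∈ Set.Icc a b, t ≠ 0 := fun t ht => (ha.trans_le ht.1).ne'
  have hlog : ContinuousOn Real.log (Set.Icc a b) := Real.continuousOn_log.mono h0
  refine ContinuousOn.div (by fun_prop) (by fun_prop) fun t ht => pow_ne_zero 3 (h0 t ht)


theorem sum_prime_near_ge {y : ℝ} (hy : 1000 ≤ y) :
    (Real.log y + 3.5) / 2 / (y * Real.exp (1 / 2)) ^ 2 *
          (Chebyshev.theta (y * Real.exp (1 / 2)) - 1.15 * (y * Real.exp (1 / 2))) -
        1.725 * (Real.log y + 3.5) / (y * Real.exp (1 / 2)) + 1.15 * (Real.log y + 3.5) / y ≤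
      ∑ p ∈ (Finset.Ioc ⌊y⌋₊ ⌊y * Real.exp (1 / 2)⌋₊).filter Nat.Prime,
        (Real.log p - Real.log y) * (Real.log y + 3.5) / (p : ℝ) ^ 2 * Real.log p := by
  have hy0 : 0 < y := by linarith
  have hl : 0 < Real.log y := Real.log_pos (by linarith)
  have hlU : Real.log (y * Real.exp (1 / 2)) = Real.log y + 1 / 2 := by
    rw [Real.log_mul hy0.ne' (Real.exp_pos _).ne', Real.log_exp]
  have hyU : y ≤ y * Real.exp (1 / 2) :=
    le_mul_of_one_le_right hy0.le (Real.one_le_exp (by norm_num))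
  have key := le_sum_prime_mul_log (c := 1.15) (d := 0) hy0.le hyU
    (fun t ht => hasDerivAt_log_sub_div (m := Real.log y + 3.5) (k := 0) (l := Real.log y)
      (hy0.trans_le ht.1))
    (fun t ht => hasDerivAt_neg_log_sub_div (hy0.trans_le ht.1))
    (continuousOn_deriv_log_sub_div hy0) (fun t ht => by
      have ht0 := hy0.trans_le ht.1
      have hv : Real.log t ≤ Real.log y + 1 / 2 := hlU ▸ Real.log_le_log ht0 ht.2
      refine mul_le_mul_of_nonneg_left ?_ (div_nonneg ?_ (by positivity))
      · linarith [theta_le_mul (hy.trans ht.1)]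
      · nlinarith)
  simp only [hlU, zero_mul, mul_zero, sub_zero, add_zero, sub_self, zero_div, zero_add] at key
  refine le_trans (le_of_eq ?_) key
  have := Real.exp_pos (1 / 2)
  field_simp
  ring

theorem sum_prime_far_ge {y : ℝ} (hy : 1000 ≤ y) :
    -(0.905 * (3 * Real.log y + 2) / y ^ 2) -
        (Real.log y + 3.5) / 2 / (y * Real.exp (1 / 2)) ^ 2 *
          (Chebyshev.theta (y * Real.exp (1 / 2)) - 0.905 * (y * Real.exp (1 / 2)) + 110) +
        0.905 * (1.5 * Real.log y + 2.75) / (y * Real.exp (1 / 2)) ≤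
      ∑ p ∈ (Finset.Ioc ⌊y * Real.exp (1 / 2)⌋₊ ⌊y ^ 2⌋₊).filter Nat.Prime,
        (Real.log p - Real.log y) * (Real.log y + 4 - (Real.log p - Real.log y)) / (p : ℝ) ^ 2 *
          Real.log p := by
  have hy0 : 0 < y := by linarith
  have hl : 0 < Real.log y := Real.log_pos (by linarith)
  have hlU : Real.log (y * Real.exp (1 / 2)) = Real.log y + 1 / 2 := by
    rw [Real.log_mul hy0.ne' (Real.exp_pos _).ne', Real.log_exp]
  have hlx : Real.log (y ^ 2) = 2 * Real.log y := by
    rw [Real.log_pow]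
    norm_num
  have hyU : y ≤ y * Real.exp (1 / 2) :=
    le_mul_of_one_le_right hy0.le (Real.one_le_exp (by norm_num))
  have hU0 : 0 < y * Real.exp (1 / 2) := hy0.trans_le hyU
  have hUx : y * Real.exp (1 / 2) ≤ y ^ 2 := by
    have : Real.exp (1 / 2) ≤ Real.exp 1 := Real.exp_le_exp.2 (by norm_num)
    nlinarith [Real.exp_one_lt_d9]
  have key := le_sum_prime_mul_log (c := 0.905) (d := -110) hU0.le hUx
    (fun t ht => hasDerivAt_log_sub_div (m := Real.log y + 4) (k := 1) (l := Real.log y)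
      (hU0.trans_le ht.1))
    (fun t ht => hasDerivAt_neg_log_sub_div (hU0.trans_le ht.1))
    (continuousOn_deriv_log_sub_div hU0) (fun t ht => by
      have ht0 := hU0.trans_le ht.1
      have hv1 : Real.log y + 1 / 2 ≤ Real.log t := hlU ▸ Real.log_le_log hU0 ht.1
      have hv2 : Real.log t ≤ 2 * Real.log y := hlx ▸ Real.log_le_log ht0 ht.2
      refine mul_le_mul_of_nonpos_left ?_ (div_nonpos_of_nonpos_of_nonneg ?_ (by positivity))
      · linarith [theta_ge_mul_sub (hy.trans (hyU.trans ht.1))]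
      · obtain ⟨v, hv⟩ : ∃ v, v = Real.log t - Real.log y := ⟨_, rfl⟩
        rw [← hv]
        nlinarith [mul_nonneg (by linarith : 0 ≤ 2 * v - 1) (by linarith : 0 ≤ Real.log y - v)])
  simp only [hlU, hlx, one_mul, mul_one] at key
  refine le_trans ?_ key
  have hend : 0 ≤ (2 * Real.log y - Real.log y) *
      (Real.log y + 4 - (2 * Real.log y - Real.log y)) / (y ^ 2) ^ 2 *
        (Chebyshev.theta (y ^ 2) - (0.905 * y ^ 2 + -110)) := by
    refine mul_nonneg (div_nonneg (by nlinarith) (by positivity)) ?_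
    linarith [theta_ge_mul_sub (x := y ^ 2) (by nlinarith)]
  refine le_trans (le_of_eq ?_) (sub_le_sub_right (add_le_add_left hend _) _)
  have := Real.exp_pos (1 / 2)
  field_simp
  ring

theorem exp_neg_half_bounds : 0.6065 < Real.exp (-(1 / 2)) ∧ Real.exp (-(1 / 2)) < 0.6066 := by
  have hsq : Real.exp (-(1 / 2)) ^ 2 * Real.exp 1 = 1 := by
    rw [← Real.exp_nat_mul, ← Real.exp_add]
    norm_num
  have h1 := Real.exp_one_gt_d9
  have h2 := Real.exp_one_lt_d9
  have hpos := Real.exp_pos (-(1 / 2))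
  constructor
  · by_contra! h
    nlinarith [mul_le_mul h h hpos.le (by norm_num)]
  · by_contra! h
    nlinarith [mul_le_mul h h (by norm_num) hpos.le]

theorem sum_prime_main_ge {y : ℝ} (hy : 1000 ≤ y) :
    0.615 * (Real.log y + 2) ^ 2 / (Real.log y * y) ≤
      ∑ p ∈ (Finset.Ioc ⌊y⌋₊ ⌊y * Real.exp (1 / 2)⌋₊).filter Nat.Prime,
        (Real.log p - Real.log y) * (Real.log y + 3.5) / (p : ℝ) ^ 2 * Real.log p +
      ∑ p ∈ (Finset.Ioc ⌊y * Real.exp (1 / 2)⌋₊ ⌊y ^ 2⌋₊).filter Nat.Prime,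
        (Real.log p - Real.log y) * (Real.log y + 4 - (Real.log p - Real.log y)) / (p : ℝ) ^ 2 *
          Real.log p := by
  refine le_trans ?_ (add_le_add (sum_prime_near_ge hy) (sum_prime_far_ge hy))
  have hy0 : 0 < y := by linarith
  obtain ⟨hq1, hq2⟩ := exp_neg_half_bounds
  have hl : 6.907 ≤ Real.log y := by
    have h := Real.log_le_log (by norm_num) hy
    rw [log_thousand] at h
    linarith [Real.log_two_gt_d9, Real.log_five_gt_d9]
  have hly : Real.log y ≤ y / 1000 + 5.908 := by
    have h := log_le_div_add_log_sub_one hy0 (show (0 : ℝ) < 1000 by norm_num)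
    rw [log_thousand] at h
    linarith [Real.log_two_lt_d9, Real.log_five_lt_d9]
  have hU : (y * Real.exp (1 / 2))⁻¹ = Real.exp (-(1 / 2)) / y := by
    rw [mul_inv, Real.exp_neg, mul_comm, ← div_eq_mul_inv]
  have hUpos : 0 < y * Real.exp (1 / 2) := by positivity
  generalize Real.exp (-(1 / 2)) = q at *
  generalize Chebyshev.theta (y * Real.exp (1 / 2)) = T
  generalize y * Real.exp (1 / 2) = U at *
  generalize Real.log y = l at *
  have hUq : U = y / q := by
    rw [← inv_inv U, hU, inv_div]
  subst hUq
  have hq0 : 0 < q := by linarith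
  have htail : (3 * l + 2) / y ≤ 0.0228 := by
    rw [div_le_iff₀ hy0]
    linarith
  have hd : 110 / y ≤ 0.11 := by
    rw [div_le_iff₀ hy0]
    linarith
  have hlead : 0.615 * (l + 2) ^ 2 / l ≤ 0.615 * (l + 4.58) := by
    rw [div_le_iff₀ (by linarith)]
    nlinarith
  have hd' : (l + 3.5) / 2 * q ^ 2 * (110 / y) ≤ (l + 3.5) / 2 * q ^ 2 * 0.11 :=
    mul_le_mul_of_nonneg_left hd (by positivity)
  have hqq : q ^ 2 ≤ 0.368 := by nlinarith
  have hmain : 0.615 * (l + 2) ^ 2 / l ≤ 1.15 * (l + 3.5) * (1 - 1.5 * q) +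
      0.905 * (q * (1.5 * l + 2.75)) - 0.905 * ((3 * l + 2) / y) -
      (l + 3.5) / 2 * (0.245 * q) - (l + 3.5) / 2 * q ^ 2 * (110 / y) := by
    nlinarith [mul_nonneg (by linarith : 0 ≤ l + 3.5) (sub_nonneg.2 hqq),
      mul_nonneg (by linarith : 0 ≤ l + 3.5) (sub_nonneg.2 hq2.le),
      mul_nonneg (by linarith : 0 ≤ 1.5 * l + 2.75) (sub_nonneg.2 hq1.le)]
  calc 0.615 * (l + 2) ^ 2 / (l * y) = 0.615 * (l + 2) ^ 2 / l / y := by rw [div_div]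
    _ ≤ _ := div_le_div_of_nonneg_right hmain hy0.le
    _ = _ := by
      field_simp
      ring

/-- `Δ(x)/log x - Δ̃(x) ≥ 1.23/(√x (log x)^2)` for `x ≥ 10^6`. -/
theorem Delta_div_log_sub_hDelta_lower (x : ℝ) (hx : (10 : ℝ) ^ 6 ≤ x) :
    1.23 / (Real.sqrt x * (Real.log x) ^ 2) ≤ Delta x / Real.log x - hDelta x := by
  refine le_trans ?_ (sum_prime_le_Delta_div_log_sub_hDelta (by linarith))
  obtain ⟨y, hyx⟩ : ∃ y, y = √x := ⟨_, rfl⟩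
  have hxy : x = y ^ 2 := by rw [hyx, Real.sq_sqrt (by linarith)]
  have hy : 1000 ≤ y := by
    rw [hyx]
    exact Real.le_sqrt_of_sq_le (by linarith)
  rw [← hyx, hxy]
  have hy0 : 0 < y := by linarith
  have hl : 0 < Real.log y := Real.log_pos (by linarith)
  have hlx : Real.log (y ^ 2) = 2 * Real.log y := by
    rw [Real.log_pow]
    norm_num
  have hlU : Real.log (y * Real.exp (1 / 2)) = Real.log y + 1 / 2 := by
    rw [Real.log_mul hy0.ne' (Real.exp_pos _).ne', Real.log_exp]
  have hyU : y ≤ y * Real.exp (1 / 2) :=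
    le_mul_of_one_le_right hy0.le (Real.one_le_exp (by norm_num))
  have hUx : y * Real.exp (1 / 2) ≤ y ^ 2 := by
    have : Real.exp (1 / 2) ≤ Real.exp 1 := Real.exp_le_exp.2 (by norm_num)
    nlinarith [Real.exp_one_lt_d9]
  rw [hlx, Finset.sum_filter, ← Finset.sum_Ioc_consecutive _ (Nat.floor_mono hyU)
    (Nat.floor_mono hUx), ← Finset.sum_filter, ← Finset.sum_filter]
  have hbound : ∀ {p : ℕ} {w : ℝ}, y < p → w * Real.log p ≤ (Real.log y + 2) ^ 2 →
      (Real.log p - Real.log y) * w / (p : ℝ) ^ 2 * Real.log p /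
        (2 * Real.log y * (Real.log y + 2) ^ 2) ≤
      (Real.log p / (2 * Real.log y) - 1 / 2) / (p : ℝ) ^ 2 := by
    intro p w hp hw
    have hp0 : (0 : ℝ) < p := hy0.trans hp
    have hv : 0 ≤ Real.log p - Real.log y := sub_nonneg.2 (Real.log_le_log hy0 hp.le)
    calc _ = (Real.log p - Real.log y) / (2 * Real.log y * (p : ℝ) ^ 2) *
          (w * Real.log p / (Real.log y + 2) ^ 2) := by
          field_simp
      _ ≤ (Real.log p - Real.log y) / (2 * Real.log y * (p : ℝ) ^ 2) * 1 := by
          gcongr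
          exact div_le_one_of_le₀ hw (by positivity)
      _ = _ := by field_simp
  refine le_trans ?_ (add_le_add
    (Finset.sum_le_sum fun p hp => hbound (w := Real.log y + 3.5) ?_ ?_)
    (Finset.sum_le_sum fun p hp =>
      hbound (w := Real.log y + 4 - (Real.log p - Real.log y)) ?_ ?_))
  · rw [← Finset.sum_div, ← Finset.sum_div, ← add_div]
    refine le_trans (le_of_eq ?_)
      (div_le_div_of_nonneg_right (sum_prime_main_ge hy) (by positivity))
    field_simp
    norm_num
  · simp only [Finset.mem_filter, Finset.mem_Ioc] at hp
    exact (Nat.floor_lt hy0.le).1 hp.1.1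
  · simp only [Finset.mem_filter, Finset.mem_Ioc] at hp
    have hle : (p : ℝ) ≤ y * Real.exp (1 / 2) := (Nat.le_floor_iff (by positivity)).1 hp.1.2
    have := Real.log_le_log (by exact_mod_cast hp.2.pos) hle
    nlinarith
  · simp only [Finset.mem_filter, Finset.mem_Ioc] at hp
    exact hyU.trans_lt ((Nat.floor_lt (by positivity)).1 hp.1.1)
  · nlinarith [sq_nonneg (Real.log p - Real.log y - 2)]
end

section
/- There exists a function G, analytic on the half-plane {s ∈ ℂ : Re s > −1}, such that for every real s > 0, ∫_1^∞ x^{−s−1}·H(x)·log x dx = −(1/s²)·log( s·ζ(s+1)/(s+1) ) − (1 − γ)/s + G(s), where ζ is the Riemann zeta function and log is the real logarithm (note s·ζ(s+1)/(s+1) > 0 for real s > 0). -/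
open Filter

/-- `R(x) = ∑_{n ≤ x} Λ(n)/n - log x + γ`. -/
noncomputable def Rfun (x : ℝ) : ℝ :=
  (∑ n ∈ Finset.Icc 1 ⌊x⌋₊, ArithmeticFunction.vonMangoldt n / n) -
    Real.log x + Real.eulerMascheroniConstant

/-- `H(x) = ∫_x^∞ R(t)/(t (log t)^2) dt`. -/
noncomputable def Hfun (x : ℝ) : ℝ :=
  ∫ t in Set.Ioi x, Rfun t / (t * (Real.log t) ^ 2)

open MeasureTheory Set Topology

open ArithmeticFunction (vonMangoldt)

theorem measurable_Rfun : Measurable Rfun := by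
  have h : Measurable fun x : ℝ ↦ ∑ n ∈ Finset.Icc 1 ⌊x⌋₊, vonMangoldt n / (n : ℝ) :=
    (measurable_from_top (f := fun N : ℕ ↦ ∑ n ∈ Finset.Icc 1 N, vonMangoldt n / (n : ℝ))).comp
      Nat.measurable_floor
  exact (h.sub Real.measurable_log).add_const _

theorem sum_vonMangoldt_mul_div_eq_log_factorial (N : ℕ) :
    ∑ n ∈ Finset.Icc 1 N, vonMangoldt n * ((N / n : ℕ) : ℝ) = Real.log (N.factorial) := by
  have h := ArithmeticFunction.sum_Ioc_mul_zeta_eq_sum vonMangoldt N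
  rw [ArithmeticFunction.vonMangoldt_mul_zeta] at h
  have hI : Finset.Icc 1 N = Finset.Ioc 0 N := by ext; simp; omega
  rw [hI, ← h]
  clear h hI
  induction N with
  | zero => simp
  | succ k ih =>
    rw [Finset.sum_Ioc_succ_top k.zero_le, ih, ArithmeticFunction.log_apply, Nat.factorial_succ,
      Nat.cast_mul, Real.log_mul (by positivity) (by positivity), add_comm]

theorem sum_vonMangoldt_div_le (N : ℕ) (hN : 1 ≤ N) :
    ∑ n ∈ Finset.Icc 1 N, vonMangoldt n / (n : ℝ) ≤ Real.log N + (Real.log 4 + 4) := by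
  have hN' : (0 : ℝ) < N := by exact_mod_cast hN
  have hψ := Chebyshev.psi_le_const_mul_self hN'.le
  have hI : Finset.Icc 1 N = Finset.Ioc 0 N := by ext; simp; omega
  have hf : Real.log (N.factorial) ≤ N * Real.log N := by
    rw [← Real.log_pow]
    exact Real.log_le_log (by positivity) (by exact_mod_cast Nat.factorial_le_pow N)
  have key : N * ∑ n ∈ Finset.Icc 1 N, vonMangoldt n / (n : ℝ) ≤
      Real.log (N.factorial) + Chebyshev.psi N := by
    rw [← sum_vonMangoldt_mul_div_eq_log_factorial, Chebyshev.psi, Nat.floor_natCast, ← hI,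
      ← Finset.sum_add_distrib, Finset.mul_sum]
    refine Finset.sum_le_sum fun n hn ↦ ?_
    have := (Nat.lt_floor_add_one ((N : ℝ) / n)).le
    rw [Nat.floor_div_eq_div] at this
    have := mul_le_mul_of_nonneg_left this (ArithmeticFunction.vonMangoldt_nonneg (n := n))
    calc _ = vonMangoldt n * ((N : ℝ) / n) := by ring
      _ ≤ _ := by linarith
  refine le_of_mul_le_mul_left ?_ hN'
  linarith

theorem le_sum_vonMangoldt_div (N : ℕ) (hN : 1 ≤ N) :
    Real.log N - 1 ≤ ∑ n ∈ Finset.Icc 1 N, vonMangoldt n / (n : ℝ) := by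
  have hN' : (0 : ℝ) < N := by exact_mod_cast hN
  have hf := Stirling.le_log_factorial_stirling (n := N) (by omega)
  have h1 : 0 ≤ Real.log N := Real.log_natCast_nonneg N
  have h2 : 0 ≤ Real.log (2 * Real.pi) := Real.log_nonneg (by linarith [Real.pi_gt_three])
  have key : Real.log (N.factorial) ≤ N * ∑ n ∈ Finset.Icc 1 N, vonMangoldt n / (n : ℝ) := by
    rw [← sum_vonMangoldt_mul_div_eq_log_factorial, Finset.mul_sum]
    refine Finset.sum_le_sum fun n hn ↦ ?_
    calc _ ≤ vonMangoldt n * ((N : ℝ) / n) :=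
          mul_le_mul_of_nonneg_left Nat.cast_div_le ArithmeticFunction.vonMangoldt_nonneg
      _ = _ := by ring
  refine le_of_mul_le_mul_left ?_ hN'
  linarith

/-- Mertens' first theorem. -/
theorem exists_abs_Rfun_le : ∃ C : ℝ, ∀ x, 1 ≤ x → |Rfun x| ≤ C := by
  refine ⟨Real.log 4 + 5 + Real.log 2 + |Real.eulerMascheroniConstant|, fun x hx ↦ ?_⟩
  have hN : 1 ≤ ⌊x⌋₊ := Nat.one_le_floor_iff x |>.2 hx
  have hN' : (1 : ℝ) ≤ ⌊x⌋₊ := by exact_mod_cast hN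
  have hu := sum_vonMangoldt_div_le _ hN
  have hl := le_sum_vonMangoldt_div _ hN
  have h1 : Real.log ⌊x⌋₊ ≤ Real.log x :=
    Real.log_le_log (by linarith) (Nat.floor_le (by linarith))
  have h2 : Real.log x ≤ Real.log 2 + Real.log ⌊x⌋₊ := by
    rw [← Real.log_mul (by norm_num) (by linarith)]
    exact Real.log_le_log (by linarith) (by linarith [Nat.lt_floor_add_one x])
  have h4 : 0 ≤ Real.log 4 := Real.log_nonneg (by norm_num)
  have h5 : 0 ≤ Real.log 2 := Real.log_nonneg (by norm_num)
  have h6 := neg_abs_le Real.eulerMascheroniConstant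
  have h7 := le_abs_self Real.eulerMascheroniConstant
  rw [Rfun, abs_le]
  constructor <;> linarith

theorem LSeries_vonMangoldt_div (s : ℂ) :
    LSeries (fun n ↦ ((vonMangoldt n / n : ℝ) : ℂ)) s = LSeries (fun n ↦ vonMangoldt n) (s + 1) := by
  refine tsum_congr fun n ↦ ?_
  rcases eq_or_ne n 0 with rfl | hn
  · simp
  · rw [LSeries.term_of_ne_zero hn, LSeries.term_of_ne_zero hn,
      Complex.cpow_add _ _ (by exact_mod_cast hn), Complex.cpow_one]
    push_cast
    field_simp

theorem hasDerivAt_rpow_mul_log {s x : ℝ} (hs : s ≠ 0) (hx : 0 < x) :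
    HasDerivAt (fun x ↦ -(x ^ (-s) * (1 + s * Real.log x)) / s ^ 2)
      (x ^ (-s - 1) * Real.log x) x := by
  have h1 := Real.hasDerivAt_rpow_const (x := x) (p := -s) (Or.inl hx.ne')
  have h2 := ((Real.hasDerivAt_log hx.ne').const_mul s).const_add 1
  convert! ((h1.mul h2).neg.div_const (s ^ 2)) using 1
  rw [show -s = (-s - 1) + 1 by ring, Real.rpow_add_one hx.ne']
  ring_nf
  field_simp
  ring

theorem tendsto_rpow_mul_log {s : ℝ} (hs : 0 < s) :
    Tendsto (fun x ↦ -(x ^ (-s) * (1 + s * Real.log x)) / s ^ 2) atTop (𝓝 0) := by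
  have h1 := tendsto_rpow_neg_atTop hs
  have h2 := (isLittleO_log_rpow_atTop hs).tendsto_div_nhds_zero
  have h3 := ((h1.add (h2.const_mul s)).neg.div_const (s ^ 2))
  simp only [mul_zero, add_zero, neg_zero, zero_div] at h3
  refine h3.congr' ?_
  filter_upwards [eventually_gt_atTop 0] with x hx
  rw [Real.rpow_neg hx.le]
  ring

theorem integrableOn_rpow_mul_log {s : ℝ} (hs : 0 < s) :
    IntegrableOn (fun x ↦ x ^ (-s - 1) * Real.log x) (Ioi 1) :=
  integrableOn_Ioi_deriv_of_nonneg'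
    (fun _ hx ↦ hasDerivAt_rpow_mul_log hs.ne' (zero_lt_one.trans_le hx))
    (fun _ hx ↦ mul_nonneg (Real.rpow_nonneg (zero_lt_one.trans hx).le _)
      (Real.log_nonneg (le_of_lt hx))) (tendsto_rpow_mul_log hs)

theorem integral_Ioi_rpow_mul_log {s : ℝ} (hs : 0 < s) :
    ∫ x in Ioi (1 : ℝ), x ^ (-s - 1) * Real.log x = 1 / s ^ 2 := by
  rw [integral_Ioi_of_hasDerivAt_of_tendsto'
    (fun _ hx ↦ hasDerivAt_rpow_mul_log hs.ne' (zero_lt_one.trans_le hx))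
    (integrableOn_rpow_mul_log hs) (tendsto_rpow_mul_log hs)]
  simp [neg_div]

theorem integral_rpow_mul_log {s t : ℝ} (hs : 0 < s) (ht : 1 ≤ t) :
    ∫ x in (1 : ℝ)..t, x ^ (-s - 1) * Real.log x =
      (1 - t ^ (-s) * (1 + s * Real.log t)) / s ^ 2 := by
  rw [intervalIntegral.integral_eq_sub_of_hasDerivAt
    (f := fun x ↦ -(x ^ (-s) * (1 + s * Real.log x)) / s ^ 2)]
  · simp
    ring
  · intro x hx
    rw [uIcc_of_le ht] at hx
    exact hasDerivAt_rpow_mul_log hs.ne' (by linarith [hx.1])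
  · rw [intervalIntegrable_iff_integrableOn_Ioc_of_le ht]
    exact (integrableOn_rpow_mul_log hs).mono_set Ioc_subset_Ioi_self

theorem integrableOn_Rfun_mul_rpow {s : ℝ} (hs : 0 < s) :
    IntegrableOn (fun t ↦ Rfun t * t ^ (-s - 1)) (Ioi 1) := by
  obtain ⟨C, hC⟩ := exists_abs_Rfun_le
  refine (integrableOn_Ioi_rpow_of_lt (by linarith) zero_lt_one).bdd_mul (c := C)
    measurable_Rfun.aestronglyMeasurable ?_
  exact (ae_restrict_iff' measurableSet_Ioi).2 (.of_forall fun t ht ↦ hC t (le_of_lt ht))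

theorem LSeries_vonMangoldt_eq_integral {s : ℝ} (hs : 0 < s) :
    LSeries (fun n ↦ vonMangoldt n) (s + 1) = s * ((∫ t in Ioi (1 : ℝ),
      (∑ n ∈ Finset.Icc 1 ⌊t⌋₊, vonMangoldt n / (n : ℝ)) * t ^ (-s - 1) : ℝ) : ℂ) := by
  rw [← LSeries_vonMangoldt_div, LSeries_eq_mul_integral_of_nonneg _ (r := s / 2) (by positivity)
    (by simpa using half_lt_self hs), ← integral_complex_ofReal]
  · congr 1
    refine setIntegral_congr_fun measurableSet_Ioi fun t ht ↦ ?_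
    simp only [Complex.ofReal_mul, Complex.ofReal_sum,
      Complex.ofReal_cpow (zero_lt_one.trans ht).le]
    push_cast
    ring_nf
  · have h1 : (fun x : ℝ ↦ Real.log x + (Real.log 4 + 4)) =O[atTop] fun x ↦ x ^ (s / 2) :=
      (isLittleO_log_rpow_atTop (by positivity)).isBigO.add
        (Asymptotics.isLittleO_const_left.2 (.inr (tendsto_norm_atTop_atTop.comp
          (tendsto_rpow_atTop (by positivity))))).isBigO
    refine .trans (.of_bound 1 ?_) (h1.comp_tendsto tendsto_natCast_atTop_atTop)
    filter_upwards [eventually_ge_atTop 1] with N hN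
    have := sum_vonMangoldt_div_le N hN
    rw [one_mul, Function.comp_apply, Real.norm_of_nonneg, Real.norm_of_nonneg]
    · exact this
    · have := Real.log_natCast_nonneg N
      have : 0 ≤ Real.log 4 := Real.log_nonneg (by norm_num)
      positivity
    · exact Finset.sum_nonneg fun n _ ↦
        div_nonneg ArithmeticFunction.vonMangoldt_nonneg n.cast_nonneg
  · exact fun n ↦ div_nonneg ArithmeticFunction.vonMangoldt_nonneg n.cast_nonneg

theorem mul_integral_Rfun_mul_rpow {s : ℝ} (hs : 0 < s) :
    ((s * ∫ t in Ioi (1 : ℝ), Rfun t * t ^ (-s - 1) : ℝ) : ℂ) =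
      -(deriv riemannZeta₁ (1 + s) / riemannZeta₁ (1 + s)) + Real.eulerMascheroniConstant := by
  have hsC : (s : ℂ) ≠ 0 := by exact_mod_cast hs.ne'
  have hi := integrableOn_Rfun_mul_rpow hs
  have hl := integrableOn_rpow_mul_log hs
  have hp : IntegrableOn (fun t : ℝ ↦ t ^ (-s - 1)) (Ioi 1) :=
    integrableOn_Ioi_rpow_of_lt (by linarith) zero_lt_one
  have hpI : ∫ t in Ioi (1 : ℝ), t ^ (-s - 1) = 1 / s := by
    rw [integral_Ioi_rpow_of_lt (by linarith) zero_lt_one, Real.one_rpow]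
    rw [show -s - 1 + 1 = -s by ring, neg_div_neg_eq]
  have hsum : ∫ t in Ioi (1 : ℝ),
      (∑ n ∈ Finset.Icc 1 ⌊t⌋₊, vonMangoldt n / (n : ℝ)) * t ^ (-s - 1) =
      (∫ t in Ioi (1 : ℝ), Rfun t * t ^ (-s - 1)) + 1 / s ^ 2
        - Real.eulerMascheroniConstant * (1 / s) := by
    rw [← integral_Ioi_rpow_mul_log hs, ← hpI, ← integral_const_mul, ← integral_add hi hl,
      ← integral_sub (by exact hi.add hl) (hp.const_mul _)]
    congr 1 with t
    rw [Rfun]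
    ring
  have hL := LSeries_vonMangoldt_eq_integral hs
  rw [hsum, ArithmeticFunction.LSeries_vonMangoldt_eq_deriv_riemannZeta_div (by simpa using hs)]
    at hL
  have h1 : (s : ℂ) + 1 ≠ 1 := by simpa using hsC
  have hz : riemannZeta (s + 1) ≠ 0 := riemannZeta_ne_zero_of_one_lt_re (by simpa using hs)
  rw [deriv_riemannZeta_eq_neg_inv_sub_sq_mul_add h1] at hL
  rw [riemannZeta_eq_inv_sub_mul h1] at hL hz
  have hz1 : riemannZeta₁ (s + 1) ≠ 0 := right_ne_zero_of_mul hz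
  rw [add_comm 1 (s : ℂ)]
  push_cast at hL ⊢
  simp only [add_sub_cancel_right] at hL
  generalize ((∫ t in Ioi (1 : ℝ), Rfun t * t ^ (-s - 1) : ℝ) : ℂ) = I at *
  field_simp at hL ⊢
  refine mul_left_cancel₀ hsC ?_
  linear_combination -hL

/-- The kernel `∫ x in 1..t, x ^ (-s - 1) * log x`, rewritten as an average of powers of `t`. -/
theorem integral_mul_rpow_neg {s t : ℝ} (ht : 1 < t) :
    ∫ σ in (0 : ℝ)..s, σ * t ^ (-σ - 1) =
      (1 - t ^ (-s) * (1 + s * Real.log t)) / (t * Real.log t ^ 2) := by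
  have ht0 : 0 < t := by linarith
  have hlog : Real.log t ≠ 0 := (Real.log_pos ht).ne'
  rw [intervalIntegral.integral_eq_sub_of_hasDerivAt
    (f := fun σ ↦ -(t ^ (-σ) * (1 + σ * Real.log t)) / (t * Real.log t ^ 2))]
  · simp
    ring
  · intro σ _
    have h1 := (hasDerivAt_neg σ).const_rpow ht0
    have h2 := ((hasDerivAt_id σ).mul_const (Real.log t)).const_add 1
    convert! ((h1.mul h2).neg.div_const (t * Real.log t ^ 2)) using 1
    rw [Real.rpow_sub_one ht0.ne']
    simp only [id]
    field_simp
    ring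
  · refine (continuous_id.mul (continuous_const.rpow ?_ ?_)).intervalIntegrable _ _
    · fun_prop
    · exact fun _ ↦ .inl ht0.ne'

theorem integrable_mul_Rfun_mul_rpow (s : ℝ) :
    Integrable (Function.uncurry fun σ t : ℝ ↦ σ * (Rfun t * t ^ (-σ - 1)))
      ((volume.restrict (Ioc 0 s)).prod (volume.restrict (Ioi 1))) := by
  obtain ⟨C, hC⟩ := exists_abs_Rfun_le
  have hm : Measurable (Function.uncurry fun σ t : ℝ ↦ σ * (Rfun t * t ^ (-σ - 1))) :=
    measurable_fst.mul ((measurable_Rfun.comp measurable_snd).mul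
      (measurable_snd.pow (measurable_fst.neg.sub_const 1)))
  refine (integrable_prod_iff hm.aestronglyMeasurable).2 ⟨?_, ?_⟩
  · refine (ae_restrict_iff' measurableSet_Ioc).2 (.of_forall fun σ hσ ↦ ?_)
    exact (integrableOn_Rfun_mul_rpow hσ.1).const_mul σ
  · refine Integrable.mono' (g := fun _ ↦ C) (integrableOn_const (by simp))
      hm.norm.aestronglyMeasurable.integral_prod_right' ?_
    refine (ae_restrict_iff' measurableSet_Ioc).2 (.of_forall fun σ hσ ↦ ?_)
    have hp : IntegrableOn (fun t : ℝ ↦ t ^ (-σ - 1)) (Ioi 1) :=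
      integrableOn_Ioi_rpow_of_lt (by linarith [hσ.1]) zero_lt_one
    have hpI : ∫ t in Ioi (1 : ℝ), t ^ (-σ - 1) = 1 / σ := by
      rw [integral_Ioi_rpow_of_lt (by linarith [hσ.1]) zero_lt_one, Real.one_rpow]
      rw [show -σ - 1 + 1 = -σ by ring, neg_div_neg_eq]
    rw [Real.norm_of_nonneg (integral_nonneg fun _ ↦ norm_nonneg _)]
    calc _ ≤ ∫ t in Ioi (1 : ℝ), σ * C * t ^ (-σ - 1) := by
          refine setIntegral_mono_on ((integrableOn_Rfun_mul_rpow hσ.1).const_mul σ).norm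
            (hp.const_mul _) measurableSet_Ioi fun t ht ↦ ?_
          have h0 : 0 ≤ t ^ (-σ - 1) := Real.rpow_nonneg (zero_lt_one.trans ht).le _
          simp only [Function.uncurry_apply_pair]
          rw [norm_mul, norm_mul, Real.norm_of_nonneg hσ.1.le, Real.norm_of_nonneg h0, mul_assoc]
          exact mul_le_mul_of_nonneg_left
            (mul_le_mul_of_nonneg_right (hC t (le_of_lt ht)) h0) hσ.1.le
      _ = C := by
          rw [integral_const_mul, hpI]
          have := hσ.1.ne'
          field_simp

theorem riemannZeta₁_one_add_ofReal_mem_slitPlane {s : ℝ} (hs : 0 ≤ s) :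
    riemannZeta₁ (1 + s) ∈ Complex.slitPlane := by
  rcases hs.eq_or_lt with rfl | hs
  · simp
  have hsC : (s : ℂ) ≠ 0 := by exact_mod_cast hs.ne'
  have h : riemannZeta₁ (1 + s) = s * riemannZeta ((1 + s : ℝ) : ℂ) := by
    push_cast
    rw [riemannZeta_eq_inv_sub_mul (by simpa using hsC)]
    simp [hsC]
  have h1 := riemannZeta_re_pos_of_one_lt (x := 1 + s) (by linarith)
  rw [h, Complex.mem_slitPlane_iff, Complex.re_ofReal_mul]
  exact .inl (by positivity)

theorem integral_logDeriv_riemannZeta₁ {s : ℝ} (hs : 0 ≤ s) :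
    ∫ σ in (0 : ℝ)..s, (-(deriv riemannZeta₁ (1 + σ) / riemannZeta₁ (1 + σ)) +
      Real.eulerMascheroniConstant) =
      -Complex.log (riemannZeta₁ (1 + s)) + Real.eulerMascheroniConstant * s := by
  rw [intervalIntegral.integral_eq_sub_of_hasDerivAt (f := fun σ : ℝ ↦
    -Complex.log (riemannZeta₁ (1 + σ)) + Real.eulerMascheroniConstant * σ)]
  · simp
  · intro σ hσ
    rw [uIcc_of_le hs] at hσ
    have h1 : HasDerivAt (fun z : ℂ ↦ riemannZeta₁ (1 + z)) (deriv riemannZeta₁ (1 + σ)) σ := by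
      simpa using (differentiable_riemannZeta₁ (1 + σ)).hasDerivAt.comp_const_add 1 (σ : ℂ)
    have h2 := h1.clog (riemannZeta₁_one_add_ofReal_mem_slitPlane hσ.1)
    have h3 := (h2.neg.add
      ((hasDerivAt_id (σ : ℂ)).const_mul (Real.eulerMascheroniConstant : ℂ))).comp_ofReal
    simpa using h3
  · refine ContinuousOn.intervalIntegrable ?_
    rw [uIcc_of_le hs]
    have hc : Continuous fun σ : ℝ ↦ 1 + (σ : ℂ) := by fun_prop
    refine ContinuousOn.add (ContinuousOn.neg (ContinuousOn.div ?_ ?_ ?_)) continuousOn_const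
    · exact (differentiable_riemannZeta₁.deriv.continuous.comp hc).continuousOn
    · exact (differentiable_riemannZeta₁.continuous.comp hc).continuousOn
    · exact fun σ hσ ↦ Complex.slitPlane_ne_zero (riemannZeta₁_one_add_ofReal_mem_slitPlane hσ.1)

theorem integral_Ioi_Rfun_mul_integral {s : ℝ} (hs : 0 ≤ s) :
    ((∫ t in Ioi (1 : ℝ), Rfun t * ∫ σ in (0 : ℝ)..s, σ * t ^ (-σ - 1) : ℝ) : ℂ) =
      -Complex.log (riemannZeta₁ (1 + s)) + Real.eulerMascheroniConstant * s := by
  have h := integral_integral_swap (integrable_mul_Rfun_mul_rpow s)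
  have h1 : ∀ t, ∫ σ in Ioc 0 s, σ * (Rfun t * t ^ (-σ - 1)) =
      Rfun t * ∫ σ in (0 : ℝ)..s, σ * t ^ (-σ - 1) := fun t ↦ by
    rw [intervalIntegral.integral_of_le hs, ← integral_const_mul]
    congr 1 with σ
    ring
  simp only [h1] at h
  rw [← h, ← integral_logDeriv_riemannZeta₁ hs, intervalIntegral.integral_of_le hs,
    ← integral_complex_ofReal]
  refine setIntegral_congr_fun measurableSet_Ioc fun σ hσ ↦ ?_
  simp only [integral_const_mul]
  exact mul_integral_Rfun_mul_rpow hσ.1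

theorem integral_mul_integral_Ioi_swap {a g : ℝ → ℝ} {c : ℝ} (ha : Measurable a)
    (hg : Measurable g) (ha0 : ∀ x ∈ Ioi c, 0 ≤ a x) (hai : IntegrableOn a (Ioi c))
    (hag : IntegrableOn (fun t ↦ g t * ∫ x in c..t, a x) (Ioi c)) :
    ∫ x in Ioi c, a x * ∫ t in Ioi x, g t = ∫ t in Ioi c, g t * ∫ x in c..t, a x := by
  have hm : Measurable (Function.uncurry fun x t : ℝ ↦ a x * (Ioi x).indicator g t) := by
    refine (ha.comp measurable_fst).mul ?_
    exact (hg.comp measurable_snd).indicator (measurableSet_lt measurable_fst measurable_snd)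
  have hin : ∀ b : ℝ → ℝ, ∀ k : ℝ, ∀ t ∈ Ioi c,
      (fun x ↦ b x * (Ioi x).indicator (fun _ ↦ k) t) = (Iio t).indicator fun x ↦ b x * k := by
    intro b k t _
    ext x
    by_cases hx : x < t <;> simp [hx]
  have hint : ∀ b : ℝ → ℝ, ∀ k : ℝ, ∀ t ∈ Ioi c,
      ∫ x in Ioi c, b x * (Ioi x).indicator (fun _ ↦ k) t = k * ∫ x in c..t, b x := by
    intro b k t ht
    rw [hin b k t ht, integral_indicator measurableSet_Iio, Measure.restrict_restrict
      measurableSet_Iio, Iio_inter_Ioi, integral_mul_const,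
      intervalIntegral.integral_of_le (le_of_lt ht), integral_Ioc_eq_integral_Ioo, mul_comm]
  have hind : ∀ x t, (Ioi x).indicator g t = (Ioi x).indicator (fun _ ↦ g t) t := by
    intro x t
    by_cases hx : x < t <;> simp [hx]
  have hi : Integrable (Function.uncurry fun x t : ℝ ↦ a x * (Ioi x).indicator g t)
      ((volume.restrict (Ioi c)).prod (volume.restrict (Ioi c))) := by
    refine (integrable_prod_iff' hm.aestronglyMeasurable).2 ⟨?_, ?_⟩
    · refine (ae_restrict_iff' measurableSet_Ioi).2 (.of_forall fun t ht ↦ ?_)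
      simp only [Function.uncurry_apply_pair, hind]
      rw [hin a (g t) t ht]
      exact (hai.mul_const _).indicator measurableSet_Iio
    · refine hag.norm.congr ?_
      refine (ae_restrict_iff' measurableSet_Ioi).2 (.of_forall fun t ht ↦ ?_)
      simp only [Function.uncurry_apply_pair, hind, norm_mul, norm_indicator_eq_indicator_norm]
      rw [hint _ _ t ht]
      simp only [intervalIntegral.integral_of_le (le_of_lt ht)]
      rw [Real.norm_of_nonneg
        (setIntegral_nonneg measurableSet_Ioc fun x hx ↦ ha0 x hx.1)]
      congr 1
      exact setIntegral_congr_fun measurableSet_Ioc fun x hx ↦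
        (Real.norm_of_nonneg (ha0 x hx.1)).symm
  have h := integral_integral_swap hi
  refine Eq.trans ?_ (h.trans ?_)
  · refine setIntegral_congr_fun measurableSet_Ioi fun x hx ↦ ?_
    rw [integral_const_mul, integral_indicator measurableSet_Ioi, Measure.restrict_restrict
      measurableSet_Ioi, inter_eq_left.2 (Ioi_subset_Ioi (le_of_lt hx))]
  · refine setIntegral_congr_fun measurableSet_Ioi fun t ht ↦ ?_
    simp only [hind]
    exact hint a (g t) t ht

theorem sq_mul_mellin_Hfun_log {s : ℝ} (hs : 0 < s) :
    s ^ 2 * ∫ x in Ioi (1 : ℝ), x ^ (-s - 1) * Hfun x * Real.log x =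
      ∫ t in Ioi (1 : ℝ), Rfun t * ∫ σ in (0 : ℝ)..s, σ * t ^ (-σ - 1) := by
  have hk : ∀ t ∈ Ioi (1 : ℝ), Rfun t / (t * Real.log t ^ 2) *
      ∫ x in (1 : ℝ)..t, x ^ (-s - 1) * Real.log x =
      (s ^ 2)⁻¹ * (Rfun t * ∫ σ in (0 : ℝ)..s, σ * t ^ (-σ - 1)) := fun t ht ↦ by
    rw [integral_mul_rpow_neg ht, integral_rpow_mul_log hs (le_of_lt ht)]
    ring
  have hi : IntegrableOn (fun t ↦ Rfun t * ∫ σ in (0 : ℝ)..s, σ * t ^ (-σ - 1)) (Ioi 1) := by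
    refine (integrable_mul_Rfun_mul_rpow s).integral_prod_right.congr (.of_forall fun t ↦ ?_)
    simp only [Function.uncurry_apply_pair]
    rw [intervalIntegral.integral_of_le hs.le, ← integral_const_mul]
    congr 1 with σ
    ring
  have h := integral_mul_integral_Ioi_swap (a := fun x ↦ x ^ (-s - 1) * Real.log x)
    (g := fun t ↦ Rfun t / (t * Real.log t ^ 2)) (c := 1)
    ((measurable_id.pow_const _).mul Real.measurable_log)
    (measurable_Rfun.div (measurable_id.mul (Real.measurable_log.pow_const 2)))
    (fun x hx ↦ mul_nonneg (Real.rpow_nonneg (zero_lt_one.trans hx).le _)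
      (Real.log_nonneg (le_of_lt hx))) (integrableOn_rpow_mul_log hs)
    ((integrableOn_congr_fun hk measurableSet_Ioi).2 (hi.const_mul _))
  rw [setIntegral_congr_fun measurableSet_Ioi hk, integral_const_mul] at h
  rw [eq_inv_mul_iff_mul_eq₀ (by positivity)] at h
  rw [← h]
  congr 2 with x
  rw [Hfun]
  ring

/-- There is a function `G`, analytic on `{Re s > -1}`, such that for real `s > 0`,
`∫_1^∞ x^{-s-1} H(x) log x dx = -(1/s^2) log(s ζ(s+1)/(s+1)) - (1-γ)/s + G(s)`.
(The quantity `s ζ(s+1)/(s+1)` is a positive real number for real `s > 0`, so its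
complex logarithm coincides with the real logarithm.) -/
theorem mellin_Hfun_log :
    ∃ G : ℂ → ℂ, AnalyticOn ℂ G {z : ℂ | -1 < z.re} ∧
      ∀ s : ℝ, 0 < s →
        ((∫ x in Set.Ioi (1 : ℝ), x ^ (-s - 1) * Hfun x * Real.log x : ℝ) : ℂ) =
          -(1 / (s : ℂ) ^ 2) * Complex.log ((s : ℂ) * riemannZeta (s + 1) / ((s : ℂ) + 1)) -
            (1 - (Real.eulerMascheroniConstant : ℂ)) / (s : ℂ) + G s := by
  have hopen : IsOpen {z : ℂ | -1 < z.re} := isOpen_lt continuous_const Complex.continuous_re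
  have h0 : {z : ℂ | -1 < z.re} ∈ 𝓝 (0 : ℂ) := hopen.mem_nhds (by simp)
  set L : ℂ → ℂ := fun z ↦ Complex.log (1 + z) with hL
  have hslit : ∀ z : ℂ, -1 < z.re → 1 + z ∈ Complex.slitPlane := fun z hz ↦
    .inl (by simpa using by linarith)
  have hLd : DifferentiableOn ℂ L {z : ℂ | -1 < z.re} := fun z hz ↦
    ((differentiableAt_const (1 : ℂ)).add differentiableAt_id).clog (hslit z hz)
      |>.differentiableWithinAt
  have hL1 : deriv L 0 = 1 := by
    have := ((hasDerivAt_id (0 : ℂ)).const_add 1).clog (hslit 0 (by simp))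
    simpa using this.deriv
  refine ⟨fun z ↦ -dslope (dslope L 0) 0 z, ?_, fun s hs ↦ ?_⟩
  · refine DifferentiableOn.analyticOn (DifferentiableOn.neg ?_) hopen
    rwa [Complex.differentiableOn_dslope h0, Complex.differentiableOn_dslope h0]
  · have hsC : (s : ℂ) ≠ 0 := by exact_mod_cast hs.ne'
    have hs1 : ((s : ℂ) + 1) = ((s + 1 : ℝ) : ℂ) := by push_cast; rfl
    have hG : dslope (dslope L 0) 0 s = (Complex.log (1 + s) - s) / s ^ 2 := by
      rw [dslope_of_ne _ hsC, slope_def_field, dslope_of_ne _ hsC, slope_def_field, dslope_same,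
        hL1]
      simp only [hL, add_zero, Complex.log_one]
      field_simp
      ring
    have hz : (s : ℂ) * riemannZeta (s + 1) = riemannZeta₁ (1 + s) := by
      rw [add_comm 1 (s : ℂ), riemannZeta_eq_inv_sub_mul (by simpa using hsC)]
      simp [hsC]
    have hlog : Complex.log ((s : ℂ) * riemannZeta (s + 1) / ((s : ℂ) + 1)) =
        Complex.log (riemannZeta₁ (1 + s)) - Complex.log (1 + s) := by
      have hne := Complex.slitPlane_ne_zero (riemannZeta₁_one_add_ofReal_mem_slitPlane hs.le)
      rw [hz, div_eq_mul_inv, hs1, ← Complex.ofReal_inv, mul_comm,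
        Complex.log_ofReal_mul (by positivity) hne, Real.log_inv, add_comm (1 : ℂ), hs1,
        Complex.ofReal_neg, Complex.ofReal_log (by positivity)]
      push_cast
      ring
    have h := integral_Ioi_Rfun_mul_integral hs.le
    rw [← sq_mul_mellin_Hfun_log hs] at h
    push_cast at h
    simp only [hlog, hG]
    field_simp
    linear_combination h
end
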